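/- Let U ⊂ X be a 1-quasiopen set, let Ω ⊃ U be an open set, and let u be a μ-measurable function on Ω with −1 ≤ u ≤ 1 and ‖Du‖(Ω) < ∞. Then ‖Du‖(U) = inf{ liminf_{i→∞} ∫_U g_{u_i} dμ : u_i ∈ N^{1,1}_loc(U), u_i → u in L^1_loc(U) }, where each g_{u_i} is the minimal 1-weak upper gradient of u_i in U. -/

import Mathlib

open MeasureTheory Filter Metric Set
open scoped Topology ENNReal NNReal symmDiff

noncomputable section

namespace PaperBV

/-- A rectifiable curve parametrized by arc-length: a `1`-Lipschitz map on `[0, len]`. -/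
structure Curve (X : Type*) [MetricSpace X] where
  len : ℝ
  len_nonneg : 0 ≤ len
  toFun : ℝ → X
  lip : LipschitzOnWith 1 toFun (Set.Icc 0 len)

variable {X : Type*} [MetricSpace X] [MeasurableSpace X] [BorelSpace X]

/-- The curve lies in the set `A`. -/
def Curve.In (γ : Curve X) (A : Set X) : Prop :=
  ∀ t ∈ Set.Icc (0 : ℝ) γ.len, γ.toFun t ∈ A

/-- The curve integral `∫_γ g ds` of a nonnegative function, for an
arc-length parametrized curve. -/
def Curve.integral (γ : Curve X) (g : X → ℝ≥0∞) : ℝ≥0∞ :=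
  ∫⁻ t in Set.Icc (0 : ℝ) γ.len, g (γ.toFun t)

/-- The upper gradient inequality `|u(x) - u(y)| ≤ ∫_γ g ds` along the curve `γ`,
where `x, y` are the endpoints of `γ`. -/
def UGIneq (u : X → ℝ) (g : X → ℝ≥0∞) (γ : Curve X) : Prop :=
  ENNReal.ofReal |u (γ.toFun 0) - u (γ.toFun γ.len)| ≤ γ.integral g

/-- `g` is an upper gradient of `u` on `X`: `g` is nonnegative (automatic in `ℝ≥0∞`),
Borel, and the upper gradient inequality holds along every curve. -/
def IsUpperGradient (u : X → ℝ) (g : X → ℝ≥0∞) : Prop :=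
  Measurable g ∧ ∀ γ : Curve X, UGIneq u g γ

/-- A family of curves has zero `1`-modulus: there is a nonnegative Borel function
`ρ ∈ L¹(X)` whose curve integral is infinite along every curve of the family. -/
def ZeroMod (μ : Measure X) (Γ : Set (Curve X)) : Prop :=
  ∃ ρ : X → ℝ≥0∞, Measurable ρ ∧ (∫⁻ x, ρ x ∂μ) < ∞ ∧ ∀ γ ∈ Γ, γ.integral ρ = ∞

/-- `g` is a `1`-weak upper gradient of `u` in `A`: `g` is nonnegative, `μ`-measurable,
and the upper gradient inequality holds along `1`-a.e. curve in `A`. -/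
def IsWeakUpperGradientOn (μ : Measure X) (u : X → ℝ) (g : X → ℝ≥0∞) (A : Set X) : Prop :=
  AEMeasurable g μ ∧ ZeroMod μ {γ : Curve X | γ.In A ∧ ¬ UGIneq u g γ}

/-- A nonnegative function `g` belongs to `L¹_loc(A)`. -/
def LIntegrableLocOn (μ : Measure X) (g : X → ℝ≥0∞) (A : Set X) : Prop :=
  ∀ x ∈ A, ∃ r > (0 : ℝ), (∫⁻ y in A ∩ Metric.ball x r, g y ∂μ) < ∞

/-- `g` is the minimal `1`-weak upper gradient of `u` in `A`: a `1`-weak upper gradient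
satisfying `g ≤ g'` `μ`-a.e. in `A` for every `1`-weak upper gradient `g' ∈ L¹_loc(A)`. -/
def IsMinimalWUG (μ : Measure X) (u : X → ℝ) (g : X → ℝ≥0∞) (A : Set X) : Prop :=
  IsWeakUpperGradientOn μ u g A ∧
    ∀ g' : X → ℝ≥0∞, IsWeakUpperGradientOn μ u g' A → LIntegrableLocOn μ g' A →
      ∀ᵐ x ∂(μ.restrict A), g x ≤ g' x

/-- The Newtonian norm `‖u‖_{N^{1,1}(A)}` (valued in `ℝ≥0∞`). -/
def NNorm (μ : Measure X) (A : Set X) (u : X → ℝ) : ℝ≥0∞ :=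
  (∫⁻ x in A, ENNReal.ofReal |u x| ∂μ) +
    ⨅ (g : X → ℝ≥0∞) (_ : IsWeakUpperGradientOn μ u g A), ∫⁻ x in A, g x ∂μ

/-- `u ∈ N^{1,1}(A)`. -/
def MemN11 (μ : Measure X) (A : Set X) (u : X → ℝ) : Prop :=
  NNorm μ A u < ∞

/-- `u ∈ N^{1,1}_loc(A)`: every point of `A` has a ball `B` with `u ∈ N^{1,1}(A ∩ B)`. -/
def MemN11Loc (μ : Measure X) (A : Set X) (u : X → ℝ) : Prop :=
  ∀ x ∈ A, ∃ r > (0 : ℝ), NNorm μ (A ∩ Metric.ball x r) u < ∞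

/-- `u ∈ N^{1,1}(Ω')` for every bounded open `Ω' ⊆ X`. -/
def MemN11LocBounded (μ : Measure X) (u : X → ℝ) : Prop :=
  ∀ Ω' : Set X, IsOpen Ω' → Bornology.IsBounded Ω' → NNorm μ Ω' u < ∞

/-- `u ∈ N^{1,1}_0(Ω)`: `u ∈ N^{1,1}(X)` and `u = 0` outside `Ω`. -/
def MemN110 (μ : Measure X) (Ω : Set X) (u : X → ℝ) : Prop :=
  MemN11 μ Set.univ u ∧ ∀ x ∉ Ω, u x = 0

/-- The `1`-capacity `capa₁(A) = inf {‖u‖_{N^{1,1}(X)} : u ∈ N^{1,1}(X), u ≥ 1 on A}`. -/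
def capa1 (μ : Measure X) (A : Set X) : ℝ≥0∞ :=
  ⨅ (u : X → ℝ) (_ : MemN11 μ Set.univ u) (_ : ∀ x ∈ A, 1 ≤ u x), NNorm μ Set.univ u

/-- `U` is `1`-quasiopen: for every `ε > 0` there is an open `G` with `capa₁(G) < ε`
such that `U ∪ G` is open. -/
def QuasiOpen (μ : Measure X) (U : Set X) : Prop :=
  ∀ ε : ℝ, 0 < ε → ∃ G : Set X, IsOpen G ∧ capa1 μ G < ENNReal.ofReal ε ∧ IsOpen (U ∪ G)

/-- `u ∈ L¹_loc(A)`. -/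
def MemL1Loc (μ : Measure X) (A : Set X) (u : X → ℝ) : Prop :=
  AEMeasurable u (μ.restrict A) ∧
    ∀ x ∈ A, ∃ r > (0 : ℝ), (∫⁻ y in A ∩ Metric.ball x r, ENNReal.ofReal |u y| ∂μ) < ∞

/-- `v i → u` in `L¹_loc(A)`: every `x ∈ A` has a ball `B` with `v i → u` in `L¹(A ∩ B)`. -/
def L1LocConv (μ : Measure X) (A : Set X) (v : ℕ → X → ℝ) (u : X → ℝ) : Prop :=
  ∀ x ∈ A, ∃ r > (0 : ℝ),
    Filter.Tendsto (fun i => ∫⁻ y in A ∩ Metric.ball x r, ENNReal.ofReal |v i y - u y| ∂μ)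
      Filter.atTop (𝓝 0)

/-- `u` is locally Lipschitz on `Ω`. -/
def LocLipOn (u : X → ℝ) (Ω : Set X) : Prop :=
  ∀ x ∈ Ω, ∃ r > (0 : ℝ), ∃ K : ℝ≥0, LipschitzOnWith K u (Ω ∩ Metric.ball x r)

/-- The total variation `‖Du‖(Ω)` of `u` in an open set `Ω`: the infimum of
`liminf_i ∫_Ω g_{v i} dμ` over sequences of locally Lipschitz functions `v i → u`
in `L¹_loc(Ω)`, where `g_{v i}` is the minimal `1`-weak upper gradient of `v i` in `Ω`. -/
def tvOpen (μ : Measure X) (Ω : Set X) (u : X → ℝ) : ℝ≥0∞ :=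
  ⨅ (v : ℕ → X → ℝ) (g : ℕ → X → ℝ≥0∞) (_ : ∀ i, LocLipOn (v i) Ω)
    (_ : ∀ i, IsMinimalWUG μ (v i) (g i) Ω) (_ : L1LocConv μ Ω v u),
    Filter.liminf (fun i => ∫⁻ x in Ω, g i x ∂μ) Filter.atTop

/-- The total variation `‖Du‖(A)` of `u` in an arbitrary set `A`:
`inf {‖Du‖(Ω) : Ω ⊇ A open}`. -/
def tv (μ : Measure X) (A : Set X) (u : X → ℝ) : ℝ≥0∞ :=
  ⨅ (Ω : Set X) (_ : IsOpen Ω) (_ : A ⊆ Ω), tvOpen μ Ω u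

/-- The perimeter `P(E, A) = ‖Dχ_E‖(A)` for arbitrary `A`. -/
def perim (μ : Measure X) (E A : Set X) : ℝ≥0∞ :=
  tv μ A (Set.indicator E (fun _ => (1 : ℝ)))

/-- The perimeter `P(E, Ω) = ‖Dχ_E‖(Ω)` for open `Ω`. -/
def perimOpen (μ : Measure X) (E Ω : Set X) : ℝ≥0∞ :=
  tvOpen μ Ω (Set.indicator E (fun _ => (1 : ℝ)))

/-- The measure `μ` is doubling with constant `Cd`. -/
def Doubling (μ : Measure X) (Cd : ℝ) : Prop :=
  1 ≤ Cd ∧ ∀ (x : X) (r : ℝ), 0 < r →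
    0 < μ (Metric.ball x (2 * r)) ∧
      μ (Metric.ball x (2 * r)) ≤ ENNReal.ofReal Cd * μ (Metric.ball x r) ∧
      μ (Metric.ball x r) < ∞

/-- The space supports a `(1,1)`-Poincaré inequality with constants `CP, lam`. -/
def Poincare (μ : Measure X) (CP lam : ℝ) : Prop :=
  1 ≤ CP ∧ 1 ≤ lam ∧ ∀ (x : X) (r : ℝ), 0 < r → ∀ (u : X → ℝ) (g : X → ℝ≥0∞),
    MemL1Loc μ Set.univ u → IsUpperGradient u g →
      ENNReal.ofReal (⨍ y in Metric.ball x r, |u y - ⨍ z in Metric.ball x r, u z ∂μ| ∂μ)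
        ≤ ENNReal.ofReal (CP * r) *
            ((∫⁻ y in Metric.ball x (lam * r), g y ∂μ) / μ (Metric.ball x (lam * r)))

/-- The restricted spherical Hausdorff content of codimension one. -/
def HR (μ : Measure X) (R : ℝ) (A : Set X) : ℝ≥0∞ :=
  ⨅ (c : ℕ → X) (r : ℕ → ℝ) (_ : ∀ i, 0 < r i ∧ r i ≤ R)
    (_ : A ⊆ ⋃ i, Metric.ball (c i) (r i)),
    ∑' i, μ (Metric.ball (c i) (r i)) / ENNReal.ofReal (r i)

/-- The codimension-one Hausdorff measure `H(A) = lim_{R → 0} H_R(A)`. -/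
def Hcodim (μ : Measure X) (A : Set X) : ℝ≥0∞ :=
  ⨆ (R : ℝ) (_ : 0 < R), HR μ R A

/-- The lower approximate limit `u^∧`. -/
def lowerApprox (μ : Measure X) (u : X → ℝ) (x : X) : EReal :=
  sSup ((fun t : ℝ => (t : EReal)) ''
    {t : ℝ | Filter.Tendsto
      (fun r => μ (Metric.ball x r ∩ {y | u y < t}) / μ (Metric.ball x r))
      (𝓝[>] (0 : ℝ)) (𝓝 0)})

/-- The upper approximate limit `u^∨`. -/
def upperApprox (μ : Measure X) (u : X → ℝ) (x : X) : EReal :=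
  sInf ((fun t : ℝ => (t : EReal)) ''
    {t : ℝ | Filter.Tendsto
      (fun r => μ (Metric.ball x r ∩ {y | t < u y}) / μ (Metric.ball x r))
      (𝓝[>] (0 : ℝ)) (𝓝 0)})

/-- `u ∈ BV_loc(X)`: `u ∈ L¹_loc(X)` with `‖Du‖(Ω') < ∞` for every bounded open `Ω'`. -/
def MemBVLoc (μ : Measure X) (u : X → ℝ) : Prop :=
  MemL1Loc μ Set.univ u ∧
    ∀ Ω' : Set X, IsOpen Ω' → Bornology.IsBounded Ω' → tvOpen μ Ω' u < ∞

/-- The measure-theoretic interior `I_E`. -/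
def mInterior (μ : Measure X) (E : Set X) : Set X :=
  {x | Filter.Tendsto (fun r => μ (Metric.ball x r \ E) / μ (Metric.ball x r))
    (𝓝[>] (0 : ℝ)) (𝓝 0)}

/-- The measure-theoretic exterior `O_E`. -/
def mExterior (μ : Measure X) (E : Set X) : Set X :=
  {x | Filter.Tendsto (fun r => μ (Metric.ball x r ∩ E) / μ (Metric.ball x r))
    (𝓝[>] (0 : ℝ)) (𝓝 0)}

/-- The measure-theoretic boundary `∂*E`: the points where both `E` and its complement
have positive upper density. -/
def mBoundary (μ : Measure X) (E : Set X) : Set X :=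
  {x | 0 < Filter.limsup (fun r => μ (Metric.ball x r ∩ E) / μ (Metric.ball x r))
        (𝓝[>] (0 : ℝ)) ∧
       0 < Filter.limsup (fun r => μ (Metric.ball x r \ E) / μ (Metric.ball x r))
        (𝓝[>] (0 : ℝ))}


/-- One-dimensional upper gradient inequality on all subintervals. -/
def SubUG (h : ℝ → ℝ) (a : ℝ → ℝ≥0∞) (L : ℝ) : Prop :=
  ∀ s t, 0 ≤ s → s ≤ t → t ≤ L → ENNReal.ofReal |h s - h t| ≤ ∫⁻ τ in Icc s t, a τ

lemma SubUG.mono {h : ℝ → ℝ} {a b : ℝ → ℝ≥0∞} {L : ℝ} (H : SubUG h a L)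
    (hab : ∀ᵐ t ∂(volume.restrict (Icc 0 L)), a t ≤ b t) : SubUG h b L := by
  intro s t hs hst ht
  refine (H s t hs hst ht).trans (lintegral_mono_ae ?_)
  exact ae_mono (Measure.restrict_mono (Icc_subset_Icc hs ht) le_rfl) hab

lemma SubUG.congr {h h' : ℝ → ℝ} {a : ℝ → ℝ≥0∞} {L : ℝ} (H : SubUG h a L)
    (hh : ∀ t ∈ Icc 0 L, h t = h' t) : SubUG h' a L := by
  intro s t hs hst ht
  rw [← hh s ⟨hs, hst.trans ht⟩, ← hh t ⟨hs.trans hst, ht⟩]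
  exact H s t hs hst ht

lemma SubUG.sub_interval {h : ℝ → ℝ} {a : ℝ → ℝ≥0∞} {L s t : ℝ} (H : SubUG h a L)
    (hs : 0 ≤ s) (ht : t ≤ L) :
    SubUG (fun τ => h (s + τ)) (fun τ => a (s + τ)) (t - s) := by
  intro p q hp hpq hq
  have := H (s + p) (s + q) (by linarith) (by linarith) (by linarith)
  refine this.trans (le_of_eq ?_)
  rw [← lintegral_indicator measurableSet_Icc, ← lintegral_indicator measurableSet_Icc,
    ← lintegral_add_left_eq_self _ s]
  congr 1
  ext τ
  simp only [indicator, mem_Icc]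
  congr 1
  simp

/-- The primitive. -/
lemma SubUG.ac_aux {h : ℝ → ℝ} {a : ℝ → ℝ≥0∞} {L : ℝ} (hL : 0 ≤ L) (H : SubUG h a L)
    (ham : AEMeasurable a (volume.restrict (Icc 0 L))) (hfin : ∫⁻ t in Icc 0 L, a t < ∞) :
    IntervalIntegrable (fun t => (a t).toReal) volume 0 L ∧
    ∀ s ∈ Icc 0 L, ∀ t ∈ Icc 0 L, |h s - h t| ≤
      |(∫ τ in (0:ℝ)..s, (a τ).toReal) - (∫ τ in (0:ℝ)..t, (a τ).toReal)| := by
  have hI : IntegrableOn (fun t => (a t).toReal) (Icc 0 L) volume :=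
    integrable_toReal_of_lintegral_ne_top ham hfin.ne
  have hII : IntervalIntegrable (fun t => (a t).toReal) volume 0 L := by
    rw [intervalIntegrable_iff_integrableOn_Icc_of_le hL]; exact hI
  refine ⟨hII, ?_⟩
  have key : ∀ s t, 0 ≤ s → s ≤ t → t ≤ L → |h s - h t| ≤
      |(∫ τ in (0:ℝ)..s, (a τ).toReal) - (∫ τ in (0:ℝ)..t, (a τ).toReal)| := by
    intro s t hs hst ht
    have h0 := H s t hs hst ht
    have hsub : Icc s t ⊆ Icc 0 L := Icc_subset_Icc hs ht
    have hm : AEMeasurable a (volume.restrict (Icc s t)) :=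
      ham.mono_measure (Measure.restrict_mono hsub le_rfl)
    have hf : ∫⁻ τ in Icc s t, a τ < ∞ :=
      (lintegral_mono_set hsub).trans_lt hfin
    have e1 : (∫ τ in (0:ℝ)..s, (a τ).toReal) - (∫ τ in (0:ℝ)..t, (a τ).toReal)
        = - ∫ τ in s..t, (a τ).toReal := by
      rw [intervalIntegral.integral_interval_sub_left, intervalIntegral.integral_symm]
      · exact hII.mono_set (by rw [uIcc_of_le hs, uIcc_of_le hL]; exact Icc_subset_Icc le_rfl (hst.trans ht))
      · exact hII.mono_set (by rw [uIcc_of_le (hs.trans hst), uIcc_of_le hL]; exact Icc_subset_Icc le_rfl ht)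
    rw [e1, abs_neg]
    refine le_trans ?_ (le_abs_self _)
    rw [intervalIntegral.integral_of_le hst, ← integral_Icc_eq_integral_Ioc,
      integral_toReal hm (ae_lt_top' hm hf.ne)]
    rw [← ENNReal.ofReal_le_iff_le_toReal hf.ne]
    exact h0
  intro s hs t ht
  rcases le_total s t with hst | hst
  · exact key s t hs.1 hst ht.2
  · rw [abs_sub_comm, abs_sub_comm (∫ τ in (0:ℝ)..s, (a τ).toReal)]
    exact key t s ht.1 hst hs.2

lemma SubUG.ac {h : ℝ → ℝ} {a : ℝ → ℝ≥0∞} {L : ℝ} (hL : 0 ≤ L) (H : SubUG h a L)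
    (ham : AEMeasurable a (volume.restrict (Icc 0 L))) (hfin : ∫⁻ t in Icc 0 L, a t < ∞) :
    AbsolutelyContinuousOnInterval h 0 L := by
  obtain ⟨hII, hle⟩ := H.ac_aux hL ham hfin
  have hA := hII.absolutelyContinuousOnInterval_intervalIntegral (c := 0) (by simp)
  rw [absolutelyContinuousOnInterval_iff] at hA ⊢
  intro ε hε
  obtain ⟨δ, hδ, hE⟩ := hA ε hε
  refine ⟨δ, hδ, fun E hE1 hE2 => lt_of_le_of_lt ?_ (hE E hE1 hE2)⟩
  refine Finset.sum_le_sum fun i hi => ?_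
  have := hE1.1 i hi
  rw [uIcc_of_le hL] at this
  simp only [Real.dist_eq]
  exact hle _ this.1 _ this.2

lemma SubUG.deriv_le {h : ℝ → ℝ} {a : ℝ → ℝ≥0∞} {L : ℝ} (hL : 0 ≤ L) (H : SubUG h a L)
    (ham : AEMeasurable a (volume.restrict (Icc 0 L))) (hfin : ∫⁻ t in Icc 0 L, a t < ∞) :
    ∀ᵐ t ∂(volume.restrict (Icc 0 L)), ENNReal.ofReal |deriv h t| ≤ a t := by
  obtain ⟨hII, hle⟩ := H.ac_aux hL ham hfin
  have h1 := hII.ae_hasDerivAt_integral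
  have h2 := ae_lt_top' ham hfin.ne
  rw [ae_restrict_iff' measurableSet_Icc] at h2 ⊢
  have h3 : ∀ᵐ t : ℝ, t ≠ 0 := by simp [ae_iff, measure_singleton]
  have h4 : ∀ᵐ t : ℝ, t ≠ L := by simp [ae_iff, measure_singleton]
  filter_upwards [h1, h2, h3, h4] with t h1 h2 h3 h4 ht
  have hd := h1 (by rw [uIcc_of_le hL]; exact ht) 0 (by simp)
  rw [← ENNReal.ofReal_toReal (h2 ht).ne]
  apply ENNReal.ofReal_le_ofReal
  by_cases hdif : DifferentiableAt ℝ h t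
  swap
  · rw [deriv_zero_of_not_differentiableAt hdif]; simp
  have hs1 := (hasDerivAt_iff_tendsto_slope.1 hdif.hasDerivAt).abs
  have hs2 := (hasDerivAt_iff_tendsto_slope.1 hd).abs
  rw [abs_of_nonneg ENNReal.toReal_nonneg] at hs2
  refine le_of_tendsto_of_tendsto hs1 hs2 ?_
  have : Ioo 0 L ∈ 𝓝[≠] t := mem_nhdsWithin_of_mem_nhds
    (Ioo_mem_nhds (lt_of_le_of_ne ht.1 (Ne.symm h3)) (lt_of_le_of_ne ht.2 h4))
  filter_upwards [this] with s hs
  simp only [slope_def_field, abs_div]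
  exact div_le_div_of_nonneg_right (hle s ⟨hs.1.le, hs.2.le⟩ t ht) (abs_nonneg _)

lemma SubUG.of_ac {h : ℝ → ℝ} {b : ℝ → ℝ≥0∞} {L : ℝ} (hL : 0 ≤ L)
    (hac : AbsolutelyContinuousOnInterval h 0 L)
    (hb : ∀ᵐ t ∂(volume.restrict (Icc 0 L)), ENNReal.ofReal |deriv h t| ≤ b t) :
    SubUG h b L := by
  intro s t hs hst ht
  have hsub : Icc s t ⊆ Icc 0 L := Icc_subset_Icc hs ht
  have hac' : AbsolutelyContinuousOnInterval h s t := hac.mono (by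
    rw [uIcc_of_le hst, uIcc_of_le hL]; exact hsub)
  rw [abs_sub_comm, ← hac'.integral_deriv_eq_sub, intervalIntegral.integral_of_le hst,
    ← integral_Icc_eq_integral_Ioc]
  have e : ∀ x : ℝ, ENNReal.ofReal |x| = ‖x‖ₑ := fun x => by
    rw [← Real.norm_eq_abs, ofReal_norm]
  rw [e]
  refine (enorm_integral_le_lintegral_enorm _).trans (lintegral_mono_ae ?_)
  have := ae_mono (Measure.restrict_mono hsub le_rfl) hb
  filter_upwards [this] with τ hτ
  rw [← e]; exact hτ

lemma SubUG.min {h : ℝ → ℝ} {a b : ℝ → ℝ≥0∞} {L : ℝ} (hL : 0 ≤ L) (Ha : SubUG h a L)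
    (Hb : SubUG h b L)
    (ham : AEMeasurable a (volume.restrict (Icc 0 L))) (hafin : ∫⁻ t in Icc 0 L, a t < ∞)
    (hbm : AEMeasurable b (volume.restrict (Icc 0 L))) (hbfin : ∫⁻ t in Icc 0 L, b t < ∞) :
    SubUG h (fun t => min (a t) (b t)) L := by
  refine SubUG.of_ac hL (Ha.ac hL ham hafin) ?_
  filter_upwards [Ha.deriv_le hL ham hafin, Hb.deriv_le hL hbm hbfin] with t h1 h2
  exact le_min h1 h2

lemma SubUG.blend {v w η : ℝ → ℝ} {a b c : ℝ → ℝ≥0∞} {L : ℝ} (hL : 0 ≤ L)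
    (Ha : SubUG v a L) (Hb : SubUG w b L) (Hc : SubUG η c L)
    (ham : AEMeasurable a (volume.restrict (Icc 0 L))) (hafin : ∫⁻ t in Icc 0 L, a t < ∞)
    (hbm : AEMeasurable b (volume.restrict (Icc 0 L))) (hbfin : ∫⁻ t in Icc 0 L, b t < ∞)
    (hcm : AEMeasurable c (volume.restrict (Icc 0 L))) (hcfin : ∫⁻ t in Icc 0 L, c t < ∞)
    (hη : ∀ t ∈ Icc 0 L, 0 ≤ η t ∧ η t ≤ 1) :
    SubUG (fun t => (1 - η t) * v t + η t * w t)
      (fun t => ENNReal.ofReal (1 - η t) * a t + ENNReal.ofReal |v t - w t| * c t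
        + ENNReal.ofReal (η t) * b t) L := by
  have hav := Ha.ac hL ham hafin
  have haw := Hb.ac hL hbm hbfin
  have haη := Hc.ac hL hcm hcfin
  have e : (fun t => (1 - η t) * v t + η t * w t) = v + η * (w - v) := by
    ext t; simp; ring
  refine SubUG.of_ac hL ?_ ?_
  · rw [e]
    exact hav.add (haη.mul (haw.sub hav))
  · have d1 := hav.ae_differentiableAt
    have d2 := haw.ae_differentiableAt
    have d3 := haη.ae_differentiableAt
    rw [uIcc_of_le hL] at d1 d2 d3
    filter_upwards [Ha.deriv_le hL ham hafin, Hb.deriv_le hL hbm hbfin, Hc.deriv_le hL hcm hcfin,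
      ae_restrict_of_ae d1, ae_restrict_of_ae d2, ae_restrict_of_ae d3,
      ae_restrict_mem measurableSet_Icc] with t h1 h2 h3 k1 k2 k3 ht
    have hv := (k1 ht).hasDerivAt
    have hw := (k2 ht).hasDerivAt
    have he := (k3 ht).hasDerivAt
    have hD : deriv (fun t => (1 - η t) * v t + η t * w t) t
        = deriv v t + (deriv η t * (w t - v t) + η t * (deriv w t - deriv v t)) := by
      rw [e]
      exact (hv.add (he.mul (hw.sub hv))).deriv
    rw [hD]
    obtain ⟨h0, h1'⟩ := hη t ht
    calc ENNReal.ofReal |deriv v t + (deriv η t * (w t - v t) + η t * (deriv w t - deriv v t))|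
        ≤ ENNReal.ofReal ((1 - η t) * |deriv v t| + |v t - w t| * |deriv η t|
            + η t * |deriv w t|) := by
          apply ENNReal.ofReal_le_ofReal
          have : deriv v t + (deriv η t * (w t - v t) + η t * (deriv w t - deriv v t))
            = (1 - η t) * deriv v t + (w t - v t) * deriv η t + η t * deriv w t := by ring
          rw [this]
          refine (abs_add_three _ _ _).trans ?_
          rw [abs_mul, abs_mul, abs_mul, abs_of_nonneg h0, abs_of_nonneg (by linarith : 0 ≤ 1 - η t),
            abs_sub_comm (w t)]
      _ = ENNReal.ofReal (1 - η t) * ENNReal.ofReal |deriv v t|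
          + ENNReal.ofReal |v t - w t| * ENNReal.ofReal |deriv η t|
          + ENNReal.ofReal (η t) * ENNReal.ofReal |deriv w t| := by
          have : 0 ≤ 1 - η t := by linarith
          rw [ENNReal.ofReal_add (by positivity) (by positivity),
            ENNReal.ofReal_add (by positivity) (by positivity),
            ENNReal.ofReal_mul this, ENNReal.ofReal_mul (abs_nonneg _), ENNReal.ofReal_mul h0]
      _ ≤ _ := by gcongr

/-- additivity -/
lemma ugl_trans {h : ℝ → ℝ} {a : ℝ → ℝ≥0∞} {r s t : ℝ} (hrs : r ≤ s) (hst : s ≤ t)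
    (h1 : ENNReal.ofReal |h r - h s| ≤ ∫⁻ τ in Icc r s, a τ)
    (h2 : ENNReal.ofReal |h s - h t| ≤ ∫⁻ τ in Icc s t, a τ) :
    ENNReal.ofReal |h r - h t| ≤ ∫⁻ τ in Icc r t, a τ := by
  have e : ∫⁻ τ in Icc r t, a τ = (∫⁻ τ in Icc r s, a τ) + ∫⁻ τ in Icc s t, a τ := by
    rw [setLIntegral_congr (Ioc_ae_eq_Icc (a := s) (b := t) (μ := volume)).symm,
      ← Icc_union_Ioc_eq_Icc hrs hst]
    refine lintegral_union measurableSet_Ioc ?_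
    rw [Set.disjoint_left]
    intro x hx hx'
    exact absurd hx.2 (not_le.2 hx'.1)
  rw [e]
  refine le_trans ?_ (add_le_add h1 h2)
  rw [← ENNReal.ofReal_add (abs_nonneg _) (abs_nonneg _)]
  exact ENNReal.ofReal_le_ofReal (abs_sub_le _ _ _)

/-- If `h` vanishes on a closed set, only the complement matters. -/
lemma ug_zero_set {h : ℝ → ℝ} {a : ℝ → ℝ≥0∞} {L : ℝ} (hL : 0 ≤ L) (Z : Set ℝ)
    (hZ : IsClosed (Z ∩ Icc 0 L)) (hhZ : ∀ t ∈ Z, t ∈ Icc 0 L → h t = 0)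
    (H : ∀ s t, 0 ≤ s → s ≤ t → t ≤ L → (∀ τ ∈ Ioo s t, τ ∉ Z) →
      ENNReal.ofReal |h s - h t| ≤ ∫⁻ τ in Icc s t, a τ) :
    ENNReal.ofReal |h 0 - h L| ≤ ∫⁻ τ in Icc 0 L, Zᶜ.indicator a τ := by
  have conv : ∀ s t, (∀ τ ∈ Ioo s t, τ ∉ Z) →
      ∫⁻ τ in Icc s t, a τ ≤ ∫⁻ τ in Icc s t, Zᶜ.indicator a τ := by
    intro s t hst
    rw [setLIntegral_congr (Ioo_ae_eq_Icc (a := s) (b := t) (μ := volume)).symm,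
      setLIntegral_congr (Ioo_ae_eq_Icc (a := s) (b := t) (μ := volume)).symm]
    apply setLIntegral_mono' measurableSet_Ioo
    intro τ hτ
    rw [indicator_of_mem (hst τ hτ)]
  rcases (Z ∩ Icc 0 L).eq_empty_or_nonempty with hem | hne
  · have : ∀ τ ∈ Ioo 0 L, τ ∉ Z := fun τ hτ hZτ => by
      have : τ ∈ Z ∩ Icc 0 L := ⟨hZτ, hτ.1.le, hτ.2.le⟩
      rw [hem] at this; exact this
    exact (H 0 L le_rfl hL le_rfl this).trans (conv _ _ this)
  · have hbb : BddBelow (Z ∩ Icc 0 L) := ⟨0, fun x hx => hx.2.1⟩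
    have hba : BddAbove (Z ∩ Icc 0 L) := ⟨L, fun x hx => hx.2.2⟩
    have hp := hZ.csInf_mem hne hbb
    have hq := hZ.csSup_mem hne hba
    set p := sInf (Z ∩ Icc 0 L)
    set q := sSup (Z ∩ Icc 0 L)
    have hpq : p ≤ q := csInf_le hbb hq
    have i1 : ∀ τ ∈ Ioo 0 p, τ ∉ Z := fun τ hτ hZτ =>
      absurd (csInf_le hbb ⟨hZτ, hτ.1.le, hτ.2.le.trans hp.2.2⟩) (not_le.2 hτ.2)
    have i2 : ∀ τ ∈ Ioo q L, τ ∉ Z := fun τ hτ hZτ =>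
      absurd (le_csSup hba ⟨hZτ, hq.2.1.trans hτ.1.le, hτ.2.le⟩) (not_le.2 hτ.1)
    have j1 := (H 0 p le_rfl hp.2.1 hp.2.2 i1).trans (conv _ _ i1)
    have j2 := (H q L hq.2.1 hq.2.2 le_rfl i2).trans (conv _ _ i2)
    refine ugl_trans hp.2.1 hp.2.2 j1 (ugl_trans hpq hq.2.2 ?_ j2)
    rw [hhZ p hp.1 hp.2, hhZ q hq.1 hq.2]; simp

lemma ZeroMod.mono {μ : Measure X} {Γ Γ' : Set (Curve X)} (h : ZeroMod μ Γ) (hs : Γ' ⊆ Γ) :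
    ZeroMod μ Γ' := by
  obtain ⟨ρ, h1, h2, h3⟩ := h
  exact ⟨ρ, h1, h2, fun γ hγ => h3 γ (hs hγ)⟩

lemma ZeroMod.iUnion {μ : Measure X} {Γ : ℕ → Set (Curve X)} (h : ∀ n, ZeroMod μ (Γ n)) :
    ZeroMod μ (⋃ n, Γ n) := by
  choose ρ h1 h2 h3 using h
  set I : ℕ → ℝ≥0∞ := fun n => ∫⁻ x, ρ n x ∂μ
  set c : ℕ → ℝ≥0∞ := fun n => (2⁻¹ : ℝ≥0∞) ^ n * (1 + I n)⁻¹
  have hc0 : ∀ n, c n ≠ 0 := fun n => by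
    simp only [c, ne_eq, mul_eq_zero, ENNReal.inv_eq_zero, not_or]
    refine ⟨pow_ne_zero _ (by simp), ?_⟩
    exact (ENNReal.add_lt_top.2 ⟨ENNReal.one_lt_top, h2 n⟩).ne
  have hct : ∀ n, c n ≠ ∞ := fun n => by
    simp only [c]
    refine ENNReal.mul_ne_top (ENNReal.pow_ne_top (by simp)) ?_
    simp
  refine ⟨fun x => ∑' n, c n * ρ n x, ?_, ?_, ?_⟩
  · exact Measurable.tsum fun n => (h1 n).const_mul _
  · rw [lintegral_tsum fun n => ((h1 n).const_mul _).aemeasurable]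
    calc ∑' n, ∫⁻ x, c n * ρ n x ∂μ ≤ ∑' n, (2⁻¹ : ℝ≥0∞) ^ n := by
          refine ENNReal.tsum_le_tsum fun n => ?_
          rw [lintegral_const_mul _ (h1 n)]
          simp only [c]
          rw [mul_assoc]
          refine mul_le_of_le_one_right' ?_
          rw [mul_comm, ← div_eq_mul_inv]
          refine ENNReal.div_le_of_le_mul ?_
          rw [one_mul]; exact le_add_self
      _ < ∞ := by
          rw [ENNReal.tsum_geometric]
          simp
  · intro γ hγ
    obtain ⟨n, hn⟩ := mem_iUnion.1 hγ
    have := h3 n γ hn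
    rw [eq_top_iff]
    have h4 : γ.integral (fun x => c n * ρ n x) = ∞ := by
      unfold Curve.integral at this ⊢
      rw [lintegral_const_mul' _ _ (hct n), this, ENNReal.mul_top (hc0 n)]
    rw [← h4]
    exact lintegral_mono fun t => ENNReal.le_tsum n

lemma ZeroMod.union {μ : Measure X} {Γ Γ' : Set (Curve X)} (h : ZeroMod μ Γ)
    (h' : ZeroMod μ Γ') : ZeroMod μ (Γ ∪ Γ') := by
  have := ZeroMod.iUnion (μ := μ) (Γ := fun n => if n = 0 then Γ else Γ')
    (fun n => by by_cases hn : n = 0 <;> simp [hn, h, h'])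
  refine this.mono ?_
  rintro γ (hγ | hγ)
  · exact mem_iUnion.2 ⟨0, by simpa using hγ⟩
  · exact mem_iUnion.2 ⟨1, by simpa using hγ⟩

/-- The filter of 1-almost every curve. -/
def aeC (μ : Measure X) : Filter (Curve X) where
  sets := {s | ZeroMod μ sᶜ}
  univ_sets := ⟨0, measurable_const, by simp, by simp⟩
  sets_of_superset := fun h hs => ZeroMod.mono h (compl_subset_compl.2 hs)
  inter_sets := fun h h' => by
    simp only [mem_ofPred_eq, compl_inter] at *
    exact ZeroMod.union h h'

lemma eventually_aeC {μ : Measure X} {P : Curve X → Prop} :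
    (∀ᶠ γ in aeC μ, P γ) ↔ ZeroMod μ {γ | ¬ P γ} := Iff.rfl

lemma aeC_all {μ : Measure X} {P : ℕ → Curve X → Prop} (h : ∀ n, ∀ᶠ γ in aeC μ, P n γ) :
    ∀ᶠ γ in aeC μ, ∀ n, P n γ := by
  rw [eventually_aeC]
  refine (ZeroMod.iUnion h).mono ?_
  intro γ hγ
  simp only [mem_ofPred_eq, not_forall] at hγ
  obtain ⟨n, hn⟩ := hγ
  exact mem_iUnion.2 ⟨n, hn⟩

lemma aeC_finite_borel {μ : Measure X} {ρ : X → ℝ≥0∞} (hρ : Measurable ρ)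
    (hfin : ∫⁻ x, ρ x ∂μ < ∞) : ∀ᶠ γ in aeC μ, γ.integral ρ < ∞ := by
  rw [eventually_aeC]
  refine ⟨ρ, hρ, hfin, fun γ hγ => ?_⟩
  simpa using hγ

lemma exists_borel_majorant {μ : Measure X} {g : X → ℝ≥0∞} (hg : AEMeasurable g μ) :
    ∃ g' : X → ℝ≥0∞, Measurable g' ∧ (∀ x, g x ≤ g' x) ∧ g =ᵐ[μ] g' := by
  have hN : μ (toMeasurable μ {x | g x ≠ hg.mk g x}) = 0 := by
    rw [measure_toMeasurable]; exact hg.ae_eq_mk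
  set N := toMeasurable μ {x | g x ≠ hg.mk g x} with hNdef
  have hNm : MeasurableSet N := measurableSet_toMeasurable _ _
  classical
  refine ⟨N.piecewise (fun _ => ∞) (hg.mk g), Measurable.piecewise hNm measurable_const
    hg.measurable_mk, fun x => ?_, ?_⟩
  · by_cases hx : x ∈ N
    · simp [hx]
    · have : g x = hg.mk g x := by
        by_contra h; exact hx (subset_toMeasurable _ _ h)
      simp [hx, this]
  · have : ∀ᵐ x ∂μ, x ∉ N := by rw [ae_iff]; simpa using hN
    filter_upwards [this, hg.ae_eq_mk] with x hx h
    simp [hx, h]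

lemma Curve.continuousOn (γ : Curve X) : ContinuousOn γ.toFun (Icc 0 γ.len) :=
  γ.lip.continuousOn

lemma Curve.aemeasurable_comp (γ : Curve X) {g : X → ℝ≥0∞} (hg : Measurable g) :
    AEMeasurable (fun t => g (γ.toFun t)) (volume.restrict (Icc 0 γ.len)) :=
  hg.comp_aemeasurable (γ.continuousOn.aemeasurable measurableSet_Icc)

lemma aeC_null {μ : Measure X} {N : Set X} (hN : μ N = 0) :
    ∀ᶠ γ in aeC μ, ∀ᵐ t ∂(volume.restrict (Icc (0:ℝ) γ.len)), γ.toFun t ∉ N := by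
  have hN' : μ (toMeasurable μ N) = 0 := by rw [measure_toMeasurable]; exact hN
  have hm := measurableSet_toMeasurable μ N
  have hmeas : Measurable ((toMeasurable μ N).indicator (fun _ => (∞ : ℝ≥0∞))) :=
    measurable_const.indicator hm
  have := aeC_finite_borel (μ := μ) hmeas (by
      rw [lintegral_indicator hm, setLIntegral_measure_zero _ _ hN']; simp)
  filter_upwards [this] with γ hγ
  have h2 := ae_lt_top' (γ.aemeasurable_comp hmeas) hγ.ne
  filter_upwards [h2] with t ht htN
  rw [indicator_of_mem (subset_toMeasurable _ _ htN)] at ht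
  simp at ht

lemma aeC_ae {μ : Measure X} {P : X → Prop} (hP : ∀ᵐ x ∂μ, P x) :
    ∀ᶠ γ in aeC μ, ∀ᵐ t ∂(volume.restrict (Icc (0:ℝ) γ.len)), P (γ.toFun t) := by
  filter_upwards [aeC_null hP] with γ hγ
  filter_upwards [hγ] with t ht
  simpa using ht

lemma aeC_aemeasurable {μ : Measure X} {g : X → ℝ≥0∞} (hg : AEMeasurable g μ) :
    ∀ᶠ γ in aeC μ, AEMeasurable (fun t => g (γ.toFun t)) (volume.restrict (Icc 0 γ.len)) := by
  filter_upwards [aeC_ae hg.ae_eq_mk] with γ hγ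
  exact (γ.aemeasurable_comp hg.measurable_mk).congr (by filter_upwards [hγ] with t ht using ht.symm)

lemma Curve.integral_mono (γ : Curve X) {g g' : X → ℝ≥0∞} (h : ∀ x, g x ≤ g' x) :
    γ.integral g ≤ γ.integral g' := lintegral_mono fun _ => h _

lemma aeC_finite {μ : Measure X} {g : X → ℝ≥0∞} (hg : AEMeasurable g μ)
    (hfin : ∫⁻ x, g x ∂μ < ∞) : ∀ᶠ γ in aeC μ, γ.integral g < ∞ := by
  obtain ⟨g', h1, h2, h3⟩ := exists_borel_majorant hg
  rw [lintegral_congr_ae h3] at hfin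
  filter_upwards [aeC_finite_borel h1 hfin] with γ hγ
  exact (γ.integral_mono h2).trans_lt hγ

lemma aeC_finite_on {μ : Measure X} {g : X → ℝ≥0∞} (hg : AEMeasurable g μ) {A : Set X}
    (hA : NullMeasurableSet A μ)
    (hfin : ∫⁻ x in A, g x ∂μ < ∞) :
    ∀ᶠ γ in aeC μ, γ.integral (A.indicator g) < ∞ := by
  refine aeC_finite (hg.indicator₀ hA) ?_
  rwa [lintegral_indicator₀ hA]

lemma aeC_finite_loc [SecondCountableTopology X] {μ : Measure X} {g : X → ℝ≥0∞}
    (hg : AEMeasurable g μ) {A : Set X} (hA : NullMeasurableSet A μ)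
    (hloc : LIntegrableLocOn μ g A) :
    ∀ᶠ γ in aeC μ, γ.In A → γ.integral g < ∞ := by
  have hloc' : ∀ x : X, ∃ r > (0:ℝ), x ∈ A → (∫⁻ y in A ∩ Metric.ball x r, g y ∂μ) < ∞ := by
    intro x
    by_cases hx : x ∈ A
    · obtain ⟨r, hr, h⟩ := hloc x hx
      exact ⟨r, hr, fun _ => h⟩
    · exact ⟨1, one_pos, fun h => absurd h hx⟩
  choose r hr hfin using hloc'
  obtain ⟨T, hTA, hTc, hT⟩ := TopologicalSpace.countable_cover_nhdsWithin (s := A)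
    (f := fun x => ball x (r x)) (fun x _ => mem_nhdsWithin_of_mem_nhds (ball_mem_nhds x (hr x)))
  rcases T.eq_empty_or_nonempty with hTe | hTne
  · have hAe : A = ∅ := by
      rw [hTe] at hT; simpa using hT
    refine Eventually.of_forall fun γ hγ => ?_
    have := hγ 0 ⟨le_rfl, γ.len_nonneg⟩
    rw [hAe] at this; exact absurd this (notMem_empty _)
  obtain ⟨e, he⟩ := hTc.exists_eq_range hTne
  have h1 : ∀ n, ∀ᶠ γ in aeC μ,
      γ.integral ((A ∩ ball (e n) (r (e n))).indicator g) < ∞ := fun n =>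
    aeC_finite_on hg (hA.inter measurableSet_ball.nullMeasurableSet)
      (hfin _ (hTA (by rw [he]; exact mem_range_self n)))
  filter_upwards [aeC_all h1, aeC_aemeasurable hg] with γ hγ _ hγA
  have hcpt : IsCompact (γ.toFun '' Icc 0 γ.len) := isCompact_Icc.image_of_continuousOn γ.continuousOn
  obtain ⟨F, hF⟩ := hcpt.elim_finite_subcover (fun n => ball (e n) (r (e n)))
    (fun n => isOpen_ball) (by
      rintro _ ⟨t, ht, rfl⟩
      have := hT (hγA t ht)
      simp only [mem_iUnion, exists_prop, he, mem_range, exists_exists_eq_and] at this ⊢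
      exact this)
  calc γ.integral g ≤ ∑ n ∈ F, γ.integral ((A ∩ ball (e n) (r (e n))).indicator g) := by
        unfold Curve.integral
        have hle : ∫⁻ t in Icc 0 γ.len, g (γ.toFun t) ≤
            ∑ n ∈ F, ∫⁻ t in (Icc 0 γ.len ∩ {t | γ.toFun t ∈ ball (e n) (r (e n))}),
              g (γ.toFun t) := by
          calc _ ≤ ∫⁻ t in ⋃ n ∈ F, (Icc 0 γ.len ∩ {t | γ.toFun t ∈ ball (e n) (r (e n))}),
                g (γ.toFun t) := by
                apply lintegral_mono_set
                intro t ht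
                have := hF ⟨t, ht, rfl⟩
                simp only [mem_iUnion, exists_prop] at this ⊢
                obtain ⟨n, hn, h⟩ := this
                exact ⟨n, hn, ht, h⟩
            _ ≤ _ := by
                have := lintegral_iUnion_le (μ := volume)
                  (fun n : F => (Icc 0 γ.len ∩ {t | γ.toFun t ∈ ball (e n) (r (e n))}))
                  (fun t => g (γ.toFun t))
                rw [tsum_fintype] at this
                rw [iUnion_subtype] at this
                refine this.trans (le_of_eq ?_)
                exact Finset.sum_coe_sort F (fun n => ∫⁻ t in (Icc 0 γ.len ∩
                  {t | γ.toFun t ∈ ball (e n) (r (e n))}), g (γ.toFun t))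
        refine hle.trans (Finset.sum_le_sum fun n _ => ?_)
        have hm : MeasurableSet (Icc 0 γ.len ∩ {t | γ.toFun t ∈ ball (e n) (r (e n))}) := by
          obtain ⟨O, hO, hOe⟩ := (_root_.continuousOn_iff'.1 γ.continuousOn) _
            (isOpen_ball (x := e n) (ε := r (e n)))
          have : Icc 0 γ.len ∩ {t | γ.toFun t ∈ ball (e n) (r (e n))} = O ∩ Icc 0 γ.len := by
            rw [← hOe, inter_comm]; rfl
          rw [this]
          exact hO.measurableSet.inter measurableSet_Icc
        calc ∫⁻ t in (Icc 0 γ.len ∩ {t | γ.toFun t ∈ ball (e n) (r (e n))}), g (γ.toFun t)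
            = ∫⁻ t in (Icc 0 γ.len ∩ {t | γ.toFun t ∈ ball (e n) (r (e n))}),
              (A ∩ ball (e n) (r (e n))).indicator g (γ.toFun t) := by
              apply setLIntegral_congr_fun hm
              intro t ht
              simp only
              rw [indicator_of_mem]
              exact ⟨hγA t ht.1, ht.2⟩
          _ ≤ _ := lintegral_mono_set inter_subset_left
    _ < ∞ := by
        rw [ENNReal.sum_lt_top]
        exact fun n _ => hγ n

/-- Subcurve -/
def Curve.sub (γ : Curve X) (s t : ℝ) (hs : 0 ≤ s) (hst : s ≤ t) (ht : t ≤ γ.len) : Curve X where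
  len := t - s
  len_nonneg := by linarith
  toFun := fun τ => γ.toFun (s + τ)
  lip := by
    intro p hp q hq
    have := γ.lip (x := s + p) ⟨by linarith [hp.1], by linarith [hp.2]⟩ (y := s + q)
      ⟨by linarith [hq.1], by linarith [hq.2]⟩
    simpa using this

lemma Curve.integral_sub (γ : Curve X) (s t : ℝ) (hs : 0 ≤ s) (hst : s ≤ t) (ht : t ≤ γ.len)
    (g : X → ℝ≥0∞) :
    (γ.sub s t hs hst ht).integral g = ∫⁻ τ in Icc s t, g (γ.toFun τ) := by
  unfold Curve.integral Curve.sub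
  rw [← lintegral_indicator measurableSet_Icc, ← lintegral_indicator measurableSet_Icc,
    ← lintegral_add_left_eq_self ((Icc s t).indicator _) s]
  congr 1
  ext τ
  simp only [indicator, mem_Icc]
  congr 1
  simp
  intro _; constructor <;> intro h <;> linarith

lemma aeC_sub {μ : Measure X} {P : Curve X → Prop} (h : ∀ᶠ γ in aeC μ, P γ) :
    ∀ᶠ γ in aeC μ, ∀ s t (hs : 0 ≤ s) (hst : s ≤ t) (ht : t ≤ γ.len), P (γ.sub s t hs hst ht) := by
  obtain ⟨ρ, h1, h2, h3⟩ := h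
  refine ⟨ρ, h1, h2, fun γ hγ => ?_⟩
  simp only [mem_compl_iff, mem_ofPred_eq, not_forall] at hγ
  obtain ⟨s, t, hs, hst, ht, hP⟩ := hγ
  have := h3 _ hP
  rw [Curve.integral_sub] at this
  rw [eq_top_iff, ← this]
  exact lintegral_mono_set (Icc_subset_Icc hs ht)

/-- The SubUG inequality along a curve. -/
def SUG (u : X → ℝ) (g : X → ℝ≥0∞) (γ : Curve X) : Prop :=
  SubUG (fun t => u (γ.toFun t)) (fun t => g (γ.toFun t)) γ.len

lemma SUG.ug {u : X → ℝ} {g : X → ℝ≥0∞} {γ : Curve X} (h : SUG u g γ) : UGIneq u g γ :=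
  h 0 γ.len le_rfl γ.len_nonneg le_rfl

lemma SUG.of_ug {u : X → ℝ} {g : X → ℝ≥0∞} {γ : Curve X}
    (h : ∀ s t (hs : 0 ≤ s) (hst : s ≤ t) (ht : t ≤ γ.len), UGIneq u g (γ.sub s t hs hst ht)) :
    SUG u g γ := by
  intro s t hs hst ht
  have := h s t hs hst ht
  unfold UGIneq at this
  rw [Curve.integral_sub] at this
  simpa [Curve.sub] using this

lemma wug_iff {μ : Measure X} {u : X → ℝ} {g : X → ℝ≥0∞} {A : Set X} :
    IsWeakUpperGradientOn μ u g A ↔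
      AEMeasurable g μ ∧ ∀ᶠ γ in aeC μ, γ.In A → SUG u g γ := by
  constructor
  · rintro ⟨h1, h2⟩
    refine ⟨h1, ?_⟩
    have h3 : ∀ᶠ γ in aeC μ, γ.In A → UGIneq u g γ := by
      rw [eventually_aeC]
      refine h2.mono ?_
      intro γ hγ; simpa using hγ
    filter_upwards [aeC_sub h3] with γ hγ hγA
    refine SUG.of_ug fun s t hs hst ht => hγ s t hs hst ht ?_
    intro τ hτ
    exact hγA _ ⟨by linarith [hτ.1], by have := hτ.2; simp only [Curve.sub] at this; linarith⟩
  · rintro ⟨h1, h2⟩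
    refine ⟨h1, ?_⟩
    refine ZeroMod.mono h2 ?_
    rintro γ ⟨hγA, hγ⟩ h
    exact hγ (SUG.ug (h hγA))

lemma wug_of_ug {μ : Measure X} {u : X → ℝ} {g : X → ℝ≥0∞} {A : Set X} (hg : AEMeasurable g μ)
    (h : ∀ᶠ γ in aeC μ, γ.In A → UGIneq u g γ) : IsWeakUpperGradientOn μ u g A := by
  refine ⟨hg, ZeroMod.mono h ?_⟩
  rintro γ ⟨hγA, hγ⟩ h
  exact hγ (h hγA)

lemma IsWeakUpperGradientOn.mono_set {μ : Measure X} {u : X → ℝ} {g : X → ℝ≥0∞} {A B : Set X}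
    (h : IsWeakUpperGradientOn μ u g A) (hBA : B ⊆ A) : IsWeakUpperGradientOn μ u g B :=
  ⟨h.1, h.2.mono fun _ hγ => ⟨fun t ht => hBA (hγ.1 t ht), hγ.2⟩⟩

lemma Curve.In.sub {γ : Curve X} {A : Set X} (h : γ.In A) (s t : ℝ) (hs : 0 ≤ s) (hst : s ≤ t)
    (ht : t ≤ γ.len) : (γ.sub s t hs hst ht).In A := by
  intro τ hτ
  exact h _ ⟨by linarith [hτ.1], by have := hτ.2; simp only [Curve.sub] at this; linarith⟩

/-- composition with a 1-Lipschitz map -/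
lemma IsWeakUpperGradientOn.comp_lip {μ : Measure X} {u : X → ℝ} {g : X → ℝ≥0∞} {A : Set X}
    (h : IsWeakUpperGradientOn μ u g A) (φ : ℝ → ℝ) (hφ : ∀ a b, |φ a - φ b| ≤ |a - b|) :
    IsWeakUpperGradientOn μ (fun x => φ (u x)) g A :=
  ⟨h.1, h.2.mono fun γ hγ => ⟨hγ.1, fun hc => hγ.2
    (le_trans (ENNReal.ofReal_le_ofReal (hφ _ _)) hc)⟩⟩

lemma wug_min [SecondCountableTopology X] {μ : Measure X} {f : X → ℝ} {g h : X → ℝ≥0∞}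
    {A : Set X} (hA : NullMeasurableSet A μ) (hg : IsWeakUpperGradientOn μ f g A)
    (hgl : LIntegrableLocOn μ g A) (hh : IsWeakUpperGradientOn μ f h A)
    (hhl : LIntegrableLocOn μ h A) :
    IsWeakUpperGradientOn μ f (fun x => min (g x) (h x)) A := by
  rw [wug_iff] at hg hh ⊢
  refine ⟨hg.1.min hh.1, ?_⟩
  filter_upwards [hg.2, hh.2, aeC_finite_loc hg.1 hA hgl, aeC_finite_loc hh.1 hA hhl,
    aeC_aemeasurable hg.1, aeC_aemeasurable hh.1] with γ h1 h2 h3 h4 h5 h6 hγ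
  exact SubUG.min γ.len_nonneg (h1 hγ) (h2 hγ) h5 (h3 hγ) h6 (h4 hγ)

lemma LIntegrableLocOn.mono {μ : Measure X} {g h : X → ℝ≥0∞} {A : Set X}
    (hg : LIntegrableLocOn μ g A) (hh : ∀ x, h x ≤ g x) : LIntegrableLocOn μ h A := by
  intro x hx
  obtain ⟨r, hr, H⟩ := hg x hx
  exact ⟨r, hr, (lintegral_mono fun y => hh y).trans_lt H⟩

lemma wug_iInf [SecondCountableTopology X] {μ : Measure X} {f : X → ℝ} {g : ℕ → X → ℝ≥0∞}
    {A : Set X} (hA : NullMeasurableSet A μ) (hg : ∀ n, IsWeakUpperGradientOn μ f (g n) A)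
    (hgl : LIntegrableLocOn μ (g 0) A) (hanti : Antitone g) :
    IsWeakUpperGradientOn μ f (fun x => ⨅ n, g n x) A := by
  simp only [wug_iff] at hg ⊢
  refine ⟨AEMeasurable.iInf fun n => (hg n).1, ?_⟩
  filter_upwards [aeC_all fun n => (hg n).2, aeC_finite_loc (hg 0).1 hA hgl,
    aeC_all fun n => aeC_aemeasurable (hg n).1] with γ h1 h2 h3 hγ
  intro s t hs hst ht
  have hsub : Icc s t ⊆ Icc 0 γ.len := Icc_subset_Icc hs ht
  simp only
  rw [lintegral_iInf' (fun n => (h3 n).mono_measure (Measure.restrict_mono hsub le_rfl))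
    (Eventually.of_forall fun τ => fun m n hmn => hanti hmn _)
    ((lintegral_mono_set hsub).trans_lt (h2 hγ)).ne]
  exact le_iInf fun n => h1 n hγ s t hs hst ht

lemma exists_minimalWUG [SecondCountableTopology X] (μ : Measure X) [SFinite μ] {A : Set X}
    (hA : NullMeasurableSet A μ) (f : X → ℝ) : ∃ g, IsMinimalWUG μ f g A := by
  by_cases hne : ∃ g, IsWeakUpperGradientOn μ f g A ∧ LIntegrableLocOn μ g A
  swap
  · refine ⟨fun _ => ∞, wug_of_ug aemeasurable_const ?_, fun g' h1 h2 => absurd ⟨g', h1, h2⟩ hne⟩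
    refine Eventually.of_forall fun γ _ => ?_
    unfold UGIneq Curve.integral
    rcases γ.len_nonneg.eq_or_lt with h | h
    · rw [← h]; simp
    · have : ∫⁻ t in Icc (0:ℝ) γ.len, (∞ : ℝ≥0∞) = ∞ := by
        rw [lintegral_const]
        simp [h]
      rw [this]; exact le_top
  set 𝒢 : Set (X → ℝ≥0∞) := {g | IsWeakUpperGradientOn μ f g A ∧ LIntegrableLocOn μ g A}
  set ν := (μ.restrict A).toFinite
  have hνμ : ν ≪ μ := (toFinite_absolutelyContinuous _).trans Measure.absolutelyContinuous_restrict
  set J : (X → ℝ≥0∞) → ℝ≥0∞ := fun g => ∫⁻ x, (1 + g x)⁻¹ ∂ν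
  have hJmono : ∀ g h : X → ℝ≥0∞, (∀ x, g x ≤ h x) → J h ≤ J g := fun g h H =>
    lintegral_mono fun x => ENNReal.inv_le_inv.2 (by gcongr; exact H x)
  have hJfin : ∀ g, J g ≤ ν univ := fun g => by
    calc J g ≤ ∫⁻ x, 1 ∂ν := lintegral_mono fun x => by
          rw [ENNReal.inv_le_one]; exact le_self_add
      _ = _ := by simp
  have hS : (J '' 𝒢).Nonempty := (show 𝒢.Nonempty from hne).image _
  obtain ⟨S, -, hS1, hS2⟩ := exists_seq_tendsto_sSup hS (OrderTop.bddAbove _)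
  choose g hg hgS using hS2
  -- running minimum
  let h : ℕ → X → ℝ≥0∞ := fun n => Nat.rec (g 0) (fun n p x => min (p x) (g (n+1) x)) n
  have hsucc : ∀ n x, h (n+1) x = min (h n x) (g (n+1) x) := fun n x => rfl
  have hh : ∀ n, h n ∈ 𝒢 := by
    intro n
    induction n with
    | zero => exact hg 0
    | succ n ih =>
      exact ⟨wug_min hA ih.1 ih.2 (hg _).1 (hg _).2, ih.2.mono fun x => min_le_left _ _⟩
  have hanti : Antitone h := antitone_nat_of_succ_le fun n x => min_le_left _ _
  have hle : ∀ n x, h n x ≤ g n x := by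
    intro n x
    cases n with
    | zero => exact le_rfl
    | succ n => exact min_le_right _ _
  set G : X → ℝ≥0∞ := fun x => ⨅ n, h n x
  have hG : G ∈ 𝒢 := ⟨wug_iInf hA (fun n => (hh n).1) (hh 0).2 hanti,
    (hh 0).2.mono fun x => iInf_le _ 0⟩
  have hGsup : sSup (J '' 𝒢) ≤ J G := by
    refine le_of_tendsto' hS1 fun n => ?_
    rw [← hgS n]
    exact hJmono _ _ fun x => (iInf_le _ n).trans (hle n x)
  refine ⟨G, hG.1, fun g' h1 h2 => ?_⟩
  set m : X → ℝ≥0∞ := fun x => min (G x) (g' x)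
  have hm : m ∈ 𝒢 := ⟨wug_min hA hG.1 hG.2 h1 h2, hG.2.mono fun x => min_le_left _ _⟩
  have hJle : J m ≤ J G := (le_sSup (mem_image_of_mem _ hm)).trans hGsup
  have hae := ae_eq_of_ae_le_of_lintegral_le (μ := ν) (f := fun x => (1 + G x)⁻¹)
    (g := fun x => (1 + m x)⁻¹)
    (Eventually.of_forall fun x => ENNReal.inv_le_inv.2 (by gcongr; exact min_le_left _ _))
    ((hJfin G).trans_lt (measure_lt_top _ _)).ne
    (((aemeasurable_const.add hm.1.1).inv).mono_ac hνμ) hJle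
  have : ∀ᵐ x ∂ν, G x ≤ g' x := by
    filter_upwards [hae] with x hx
    have h3 : 1 + G x = 1 + m x := inv_injective hx
    have h4 : G x = m x := (ENNReal.add_right_inj ENNReal.one_ne_top).1 h3
    rw [h4]; exact min_le_right _ _
  exact (absolutelyContinuous_toFinite (μ.restrict A)).ae_le this

lemma LIntegrableLocOn.of_lt_top {μ : Measure X} {g : X → ℝ≥0∞} {A : Set X}
    (h : ∫⁻ x in A, g x ∂μ < ∞) : LIntegrableLocOn μ g A := fun _ _ =>
  ⟨1, one_pos, (lintegral_mono_set inter_subset_left).trans_lt h⟩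

lemma IsMinimalWUG.lintegral_le {μ : Measure X} {f : X → ℝ} {g q : X → ℝ≥0∞} {A : Set X}
    (hg : IsMinimalWUG μ f g A) (hq : IsWeakUpperGradientOn μ f q A) :
    ∫⁻ x in A, g x ∂μ ≤ ∫⁻ x in A, q x ∂μ := by
  by_cases h : ∫⁻ x in A, q x ∂μ < ∞
  · exact lintegral_mono_ae (hg.2 q hq (.of_lt_top h))
  · rw [not_lt, top_le_iff] at h
    rw [h]; exact le_top

section Doub
variable {μ : Measure X} {Cd : ℝ}

lemma Doubling.pos (h : Doubling μ Cd) (x : X) {r : ℝ} (hr : 0 < r) : 0 < μ (ball x r) := by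
  have := (h.2 x (r/2) (by linarith)).1
  rwa [show 2 * (r/2) = r by ring] at this

lemma Doubling.lt_top (h : Doubling μ Cd) (x : X) (r : ℝ) : μ (ball x r) < ∞ := by
  rcases lt_or_ge 0 r with hr | hr
  · exact (h.2 x r hr).2.2
  · rw [ball_eq_empty.2 hr]; simp

lemma Doubling.pow (h : Doubling μ Cd) (x : X) {r : ℝ} (hr : 0 < r) (n : ℕ) :
    μ (ball x (2 ^ n * r)) ≤ ENNReal.ofReal (Cd ^ n) * μ (ball x r) := by
  have h0 : (0:ℝ) ≤ Cd := by linarith [h.1]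
  induction n with
  | zero => simp
  | succ n ih =>
    calc μ (ball x (2 ^ (n+1) * r)) = μ (ball x (2 * (2 ^ n * r))) := by ring_nf
      _ ≤ ENNReal.ofReal Cd * μ (ball x (2 ^ n * r)) := (h.2 x _ (by positivity)).2.1
      _ ≤ ENNReal.ofReal Cd * (ENNReal.ofReal (Cd ^ n) * μ (ball x r)) := by gcongr
      _ = _ := by
        rw [← mul_assoc, ← ENNReal.ofReal_mul h0, pow_succ']

lemma Doubling.locFin (h : Doubling μ Cd) : IsLocallyFiniteMeasure μ :=
  ⟨fun x => ⟨ball x 1, ball_mem_nhds _ one_pos, h.lt_top x 1⟩⟩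

lemma Doubling.proper [CompleteSpace X] (h : Doubling μ Cd) : ProperSpace X := by
  have h0 : (0:ℝ) < Cd := by linarith [h.1]
  refine ProperSpace.of_isCompact_closedBall_of_le 1 fun x R hR => ?_
  refine TotallyBounded.isCompact_of_isClosed ?_ isClosed_closedBall
  rw [Metric.totallyBounded_iff]
  intro ε hε
  obtain ⟨u, hut, hud, huc⟩ := Vitali.exists_disjoint_subfamily_covering_enlargement_ball
    (closedBall x R) (fun a => a) (fun _ => min 1 (ε / 4)) 1 (fun _ _ => min_le_left _ _) 4
    (by norm_num)
  set δ := min 1 (ε / 4) with hδ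
  have hδ0 : 0 < δ := by rw [hδ]; positivity
  refine ⟨u, ?_, ?_⟩
  · obtain ⟨n, hn⟩ := pow_unbounded_of_one_lt (2 * R / δ) (one_lt_two)
    have hn' : 2 * R ≤ 2 ^ n * δ := by
      rw [div_lt_iff₀ hδ0] at hn; exact hn.le
    have hlow : ∀ a ∈ u, μ (ball x R) / ENNReal.ofReal (Cd ^ n) ≤ μ (ball a δ) := by
      intro a ha
      refine ENNReal.div_le_of_le_mul' ?_
      refine le_trans (measure_mono ?_) (h.pow a hδ0 n)
      refine ball_subset_ball' ?_
      have := hut ha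
      rw [mem_closedBall'] at this
      linarith
    have hfin := Measure.finite_const_le_meas_of_disjoint_iUnion μ
      (ε := μ (ball x R) / ENNReal.ofReal (Cd ^ n))
      (ENNReal.div_pos (h.pos x (by linarith)).ne' ENNReal.ofReal_ne_top)
      (As := fun a : u => ball (a : X) δ) (fun _ => measurableSet_ball)
      (fun a b hab => hud a.2 b.2 (by simpa [Subtype.ext_iff] using hab))
      (ne_top_of_le_ne_top (h.lt_top x (R + 2)).ne (measure_mono (by
        refine iUnion_subset fun a => ball_subset_ball' ?_
        have := hut a.2
        rw [mem_closedBall] at this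
        have : δ ≤ 1 := min_le_left _ _
        linarith)))
    have : {i : u | μ (ball x R) / ENNReal.ofReal (Cd ^ n) ≤ μ (ball (i:X) δ)} = univ :=
      eq_univ_of_forall fun a => hlow a a.2
    rw [this] at hfin
    exact @Set.toFinite _ u (Set.finite_univ_iff.1 hfin)
  · intro y hy
    obtain ⟨b, hb, hsub⟩ := huc y hy
    have := hsub (mem_ball_self hδ0)
    simp only [mem_iUnion, exists_prop]
    refine ⟨b, hb, ball_subset_ball ?_ this⟩
    have : δ ≤ ε / 4 := min_le_right _ _
    linarith
end Doub

lemma avg_osc {μ : Measure X} {B B' : Set X} (hsub : B' ⊆ B) (hB' : MeasurableSet B')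
    (hBt : μ B < ∞) (hB0 : 0 < μ B') {K : ℝ} (hK0 : 0 ≤ K) (hK : μ B ≤ ENNReal.ofReal K * μ B')
    {ψ : X → ℝ} (hψ : IntegrableOn ψ B μ) (c : ℝ) :
    |(⨍ y in B', ψ y ∂μ) - c| ≤ K * ⨍ y in B, |ψ y - c| ∂μ := by
  have hB't : μ B' < ∞ := (measure_mono hsub).trans_lt hBt
  have hB'r : 0 < μ.real B' := ENNReal.toReal_pos hB0.ne' hB't.ne
  have hBr : 0 < μ.real B := ENNReal.toReal_pos (hB0.trans_le (measure_mono hsub)).ne' hBt.ne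
  have hKr : μ.real B ≤ K * μ.real B' := by
    have := ENNReal.toReal_mono (ENNReal.mul_ne_top ENNReal.ofReal_ne_top hB't.ne) hK
    rwa [ENNReal.toReal_mul, ENNReal.toReal_ofReal hK0] at this
  have hcB : IntegrableOn (fun _ => c) B μ := integrableOn_const hBt.ne
  have hcB' : IntegrableOn (fun _ => c) B' μ := integrableOn_const hB't.ne
  have hψ' := hψ.mono_set hsub
  have e : (⨍ y in B', ψ y ∂μ) - c = (μ.real B')⁻¹ * ∫ y in B', (ψ y - c) ∂μ := by
    rw [setAverage_eq, smul_eq_mul, integral_sub hψ' hcB', setIntegral_const, smul_eq_mul, mul_sub,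
      ← mul_assoc, inv_mul_cancel₀ hB'r.ne', one_mul]
  rw [e, abs_mul, abs_of_pos (inv_pos.2 hB'r), setAverage_eq, smul_eq_mul, ← mul_assoc]
  have h1 : |∫ y in B', (ψ y - c) ∂μ| ≤ ∫ y in B, |ψ y - c| ∂μ := by
    refine (abs_integral_le_integral_abs).trans ?_
    refine setIntegral_mono_set ((hψ.sub hcB).abs) (Eventually.of_forall fun y => abs_nonneg _)
      (LE.le.eventuallyLE hsub)
  have h2 : (μ.real B')⁻¹ ≤ K * (μ.real B)⁻¹ := by
    rw [inv_le_iff_one_le_mul₀ hB'r, mul_assoc, mul_comm, mul_assoc, inv_mul_eq_div, le_div_iff₀ hBr,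
      one_mul, mul_comm]
    · linarith
  have h3 : 0 ≤ ∫ y in B, |ψ y - c| ∂μ := integral_nonneg fun y => abs_nonneg _
  calc _ ≤ (μ.real B')⁻¹ * ∫ y in B, |ψ y - c| ∂μ := by gcongr
    _ ≤ _ := by gcongr

/-- the integral averages over small balls centered at `x` are controlled -/
def GoodPt (μ : Measure X) (ρ : X → ℝ≥0∞) (Λ : ℝ) (x : X) : Prop :=
  ∀ r, 0 < r → r ≤ 1 → ∫⁻ y in ball x r, ρ y ∂μ ≤ ENNReal.ofReal Λ * μ (ball x r)

section PI
variable {μ : Measure X} {Cd CP lam : ℝ}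

lemma poincare_good (hd : Doubling μ Cd) (hp : Poincare μ CP lam) {ρ : X → ℝ≥0∞} {Λ : ℝ}
    (hΛ : 0 ≤ Λ) {x : X}
    (hx : GoodPt μ ρ Λ x) {ψ : X → ℝ} (hψ : Continuous ψ) {M : ℝ} (hM : ∀ z, |ψ z| ≤ M)
    (hug : IsUpperGradient ψ ρ) {r : ℝ} (hr : 0 < r) (hr1 : lam * r ≤ 1) :
    ⨍ y in ball x r, |ψ y - ⨍ z in ball x r, ψ z ∂μ| ∂μ ≤ CP * r * Λ := by
  have hlam : 0 < lam := by linarith [hp.2.1]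
  have hCP : 0 ≤ CP := by linarith [hp.1]
  have hL : MemL1Loc μ univ ψ := by
    refine ⟨hψ.measurable.aemeasurable, fun z _ => ⟨1, one_pos, ?_⟩⟩
    rw [univ_inter]
    calc _ ≤ ∫⁻ y in ball z 1, ENNReal.ofReal M ∂μ :=
          lintegral_mono fun y => ENNReal.ofReal_le_ofReal (hM y)
      _ < ∞ := by
          rw [setLIntegral_const]
          exact ENNReal.mul_lt_top ENNReal.ofReal_lt_top (hd.lt_top z 1)
  have h1 := hp.2.2 x r hr ψ ρ hL hug
  have h2 : (∫⁻ y in ball x (lam * r), ρ y ∂μ) / μ (ball x (lam * r)) ≤ ENNReal.ofReal Λ :=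
    ENNReal.div_le_of_le_mul (hx _ (by positivity) hr1)
  have h3 : ENNReal.ofReal (⨍ y in ball x r, |ψ y - ⨍ z in ball x r, ψ z ∂μ| ∂μ) ≤
      ENNReal.ofReal (CP * r * Λ) := by
    rw [ENNReal.ofReal_mul (by positivity)]
    exact h1.trans (by gcongr)
  exact (ENNReal.ofReal_le_ofReal_iff (by positivity)).1 h3

lemma integrableOn_ball_of_bdd (hd : Doubling μ Cd) {ψ : X → ℝ} (hψ : Continuous ψ)
    {M : ℝ} (hM : ∀ z, |ψ z| ≤ M) (x : X) (r : ℝ) : IntegrableOn ψ (ball x r) μ :=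
  Measure.integrableOn_of_bounded (hd.lt_top x r).ne hψ.measurable.aestronglyMeasurable
    (Eventually.of_forall fun z => by simpa using hM z)

lemma tendsto_avg (hd : Doubling μ Cd) {ψ : X → ℝ} (hψ : Continuous ψ)
    {M : ℝ} (hM : ∀ z, |ψ z| ≤ M) (x : X) {r : ℕ → ℝ} (hr0 : ∀ n, 0 < r n)
    (hr : Tendsto r atTop (𝓝 0)) :
    Tendsto (fun n => ⨍ y in ball x (r n), ψ y ∂μ) atTop (𝓝 (ψ x)) := by
  rw [Metric.tendsto_atTop]
  intro ε hε
  obtain ⟨δ, hδ, H⟩ := Metric.continuous_iff.1 hψ x (ε/2) (by linarith)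
  obtain ⟨N, hN⟩ := Metric.tendsto_atTop.1 hr δ hδ
  refine ⟨N, fun n hn => ?_⟩
  have hrn : r n < δ := by
    have := hN n hn
    rw [Real.dist_eq, sub_zero] at this
    exact (le_abs_self _).trans_lt this
  rw [Real.dist_eq]
  have h1 := avg_osc (μ := μ) (B := ball x (r n)) (B' := ball x (r n)) subset_rfl
    measurableSet_ball (hd.lt_top x _) (hd.pos x (hr0 n)) zero_le_one (by simp)
    (integrableOn_ball_of_bdd hd hψ hM x (r n)) (ψ x)
  rw [one_mul] at h1
  refine h1.trans_lt ?_
  have hBr : 0 < μ.real (ball x (r n)) :=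
    ENNReal.toReal_pos (hd.pos x (hr0 n)).ne' (hd.lt_top x _).ne
  rw [setAverage_eq, smul_eq_mul, inv_mul_eq_div, div_lt_iff₀ hBr]
  have h2 := norm_setIntegral_le_of_norm_le_const (μ := μ) (s := ball x (r n))
    (f := fun y => |ψ y - ψ x|) (C := ε/2) (hd.lt_top x _) (fun y hy => by
      have := H y ((mem_ball.1 hy).trans hrn)
      rw [Real.dist_eq] at this
      simpa using this.le)
  have h3 := (le_abs_self _).trans h2
  refine h3.trans_lt ?_
  exact mul_lt_mul_of_pos_right (by linarith) hBr

lemma good_telescope (hd : Doubling μ Cd) (hp : Poincare μ CP lam) {ρ : X → ℝ≥0∞} {Λ : ℝ}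
    (hΛ : 0 ≤ Λ) {x : X}
    (hx : GoodPt μ ρ Λ x) {ψ : X → ℝ} (hψ : Continuous ψ) {M : ℝ} (hM : ∀ z, |ψ z| ≤ M)
    (hug : IsUpperGradient ψ ρ) {r : ℝ} (hr : 0 < r) (hr1 : lam * r ≤ 1) :
    |(⨍ y in ball x r, ψ y ∂μ) - ψ x| ≤ 2 * Cd * CP * Λ * r := by
  have hlam : 0 < lam := by linarith [hp.2.1]
  have hCP : 0 ≤ CP := by linarith [hp.1]
  have hCd : 0 ≤ Cd := by linarith [hd.1]
  set a : ℕ → ℝ := fun n => ⨍ y in ball x (r / 2 ^ n), ψ y ∂μ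
  have hrn : ∀ n : ℕ, 0 < r / 2 ^ n := fun n => by positivity
  have ht : Tendsto a atTop (𝓝 (ψ x)) := by
    refine tendsto_avg hd hψ hM x hrn ?_
    have := (tendsto_pow_atTop_nhds_zero_of_lt_one (r := (1/2:ℝ)) (by norm_num) (by norm_num)).const_mul r
    simpa [div_eq_mul_inv] using this
  have hstep : ∀ n, dist (a n) (a (n+1)) ≤ (2 * Cd * CP * Λ * r) / 2 / 2 ^ n := by
    intro n
    rw [dist_comm, Real.dist_eq]
    have e : r / 2 ^ n = 2 * (r / 2 ^ (n+1)) := by field_simp; ring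
    have h1 := avg_osc (μ := μ) (B := ball x (r / 2^n)) (B' := ball x (r / 2^(n+1)))
      (ball_subset_ball (by rw [e]; linarith [hrn (n+1)]))
      measurableSet_ball (hd.lt_top x _) (hd.pos x (hrn _)) hCd
      (by rw [e]; exact (hd.2 x _ (hrn _)).2.1)
      (integrableOn_ball_of_bdd hd hψ hM x _) (a n)
    refine h1.trans ?_
    have h2 := poincare_good hd hp hΛ hx hψ hM hug (hrn n) (by
      have : r / 2 ^ n ≤ r := div_le_self hr.le (one_le_pow₀ (by norm_num))
      nlinarith)
    calc _ ≤ Cd * (CP * (r / 2 ^ n) * Λ) := by gcongr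
      _ = _ := by ring
  have := dist_le_of_le_geometric_two_of_tendsto₀ hstep ht
  rw [Real.dist_eq] at this
  simpa [a] using this

/-- two point estimate -/
lemma two_point (hd : Doubling μ Cd) (hp : Poincare μ CP lam) {ρ : X → ℝ≥0∞} {Λ : ℝ}
    (hΛ : 0 ≤ Λ) {x y : X}
    (hx : GoodPt μ ρ Λ x) (hy : GoodPt μ ρ Λ y) {ψ : X → ℝ} (hψ : Continuous ψ)
    {M : ℝ} (hM : ∀ z, |ψ z| ≤ M)
    (hug : IsUpperGradient ψ ρ) (hxy : 2 * lam * dist x y ≤ 1) :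
    |ψ x - ψ y| ≤ 8 * Cd ^ 2 * CP * Λ * dist x y := by
  have hlam : 0 < lam := by linarith [hp.2.1]
  have hCP : 0 ≤ CP := by linarith [hp.1]
  have hCd : 0 ≤ Cd := by linarith [hd.1]
  rcases (dist_nonneg (x := x) (y := y)).eq_or_lt with h0 | h0
  · rw [dist_eq_zero.1 h0.symm]; simp
  set d := dist x y
  have h1 := good_telescope hd hp hΛ hx hψ hM hug (r := 2 * d) (by linarith) (by linarith)
  have h2 := good_telescope hd hp hΛ hy hψ hM hug (r := d) h0 (by nlinarith)
  have h3 := avg_osc (μ := μ) (B := ball x (2 * d)) (B' := ball y d)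
      (ball_subset_ball' (by rw [dist_comm]; linarith))
      measurableSet_ball (hd.lt_top x _) (hd.pos y h0) (K := Cd ^ 2) (by positivity)
      (by
        refine le_trans (measure_mono (ball_subset_ball' ?_)) (hd.pow y h0 2)
        change 2 * d + d ≤ _; linarith)
      (integrableOn_ball_of_bdd hd hψ hM x _) (⨍ z in ball x (2 * d), ψ z ∂μ)
  have h4 := poincare_good hd hp hΛ hx hψ hM hug (r := 2 * d) (by linarith) (by linarith)
  have h5 : Cd ^ 2 * (⨍ z in ball x (2 * d), |ψ z - ⨍ z in ball x (2 * d), ψ z ∂μ| ∂μ) ≤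
      Cd ^ 2 * (CP * (2 * d) * Λ) := by gcongr
  have h6 : Cd * (CP * Λ * d) ≤ Cd ^ 2 * (CP * Λ * d) := by
    have : Cd ≤ Cd ^ 2 := by nlinarith [hd.1]
    gcongr
  rw [abs_le] at *
  constructor <;> nlinarith [h1.1, h1.2, h2.1, h2.2, h3.1, h3.2]
end PI

/-- An `ε`-curve from `x` to `z` of length `l`. -/
def ECurve (ε : ℝ) (x z : X) (l : ℝ) (σ : ℝ → X) : Prop :=
  0 ≤ l ∧ σ 0 = x ∧ (∀ t, l ≤ t → σ t = z) ∧
    ∀ s t, 0 ≤ s → s ≤ t → dist (σ s) (σ t) ≤ t - s + ε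

/-- Optimal cost of `ε`-curves. -/
def psiE (ε : ℝ) (r : X → ℝ≥0∞) (x z : X) : ℝ≥0∞ :=
  ⨅ (l : ℝ) (σ : ℝ → X) (_ : ECurve ε x z l σ), ∫⁻ t in Ico 0 l, r (σ t)

lemma psiE_self {ε : ℝ} (hε : 0 ≤ ε) (r : X → ℝ≥0∞) (x : X) : psiE ε r x x = 0 := by
  refine le_antisymm ?_ bot_le
  refine iInf_le_of_le 0 (iInf_le_of_le (fun _ => x) (iInf_le_of_le ⟨le_rfl, rfl, fun _ _ => rfl,
    fun s t _ hst => ?_⟩ ?_))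
  · rw [dist_self]; linarith
  · simp

lemma psiE_concat {ε : ℝ} (r : X → ℝ≥0∞) (x z z' : X) {m : ℝ} (hm : 0 ≤ m) (τ : ℝ → X)
    (h0 : τ 0 = z) (h1 : ∀ t, m ≤ t → τ t = z') (h2 : ∀ t, 0 ≤ t → dist z (τ t) ≤ t)
    (h3 : ∀ s t, 0 ≤ s → s ≤ t → dist (τ s) (τ t) ≤ t - s + ε) :
    psiE ε r x z' ≤ psiE ε r x z + ∫⁻ t in Ico 0 m, r (τ t) := by
  conv_rhs => unfold psiE
  simp only [ENNReal.iInf_add]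
  refine le_iInf fun l => le_iInf fun σ => le_iInf fun hσ => ?_
  obtain ⟨hl, hs0, hs1, hs2⟩ := hσ
  refine iInf_le_of_le (l + m) (iInf_le_of_le (fun t => if t < l then σ t else τ (t - l))
    (iInf_le_of_le ⟨by linarith, ?_, ?_, ?_⟩ ?_))
  · by_cases h : 0 < l
    · simp [h, hs0]
    · have : l = 0 := le_antisymm (not_lt.1 h) hl
      subst this
      simp [h0, ← hs0, hs1 0 le_rfl]
  · intro t ht
    have : ¬ t < l := by linarith
    simp only [if_neg this]
    exact h1 _ (by linarith)
  · intro s t hs hst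
    by_cases htl : t < l
    · simp only [if_pos htl, if_pos (hst.trans_lt htl)]
      exact hs2 s t hs hst
    · by_cases hsl : s < l
      · simp only [if_neg htl, if_pos hsl]
        have a1 := hs2 s l hs hsl.le
        rw [hs1 l le_rfl] at a1
        have a2 := h2 (t - l) (by linarith)
        have := dist_triangle (σ s) z (τ (t - l))
        linarith
      · simp only [if_neg htl, if_neg hsl]
        have := h3 (s - l) (t - l) (by linarith) (by linarith)
        linarith
  · have hdis : Disjoint (Ico 0 l) (Ico l (l + m)) := by
      rw [Set.disjoint_left]; intro t ht ht'
      exact absurd ht.2 (not_lt.2 ht'.1)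
    rw [← Ico_union_Ico_eq_Ico hl (by linarith : l ≤ l + m),
      lintegral_union measurableSet_Ico hdis]
    refine add_le_add (le_of_eq ?_) (le_of_eq ?_)
    · refine setLIntegral_congr_fun measurableSet_Ico fun t ht => ?_
      simp only [if_pos ht.2]
    · rw [← lintegral_indicator measurableSet_Ico, ← lintegral_indicator measurableSet_Ico,
        ← lintegral_add_left_eq_self _ l]
      congr 1
      ext t
      simp only [indicator, mem_Ico]
      by_cases h : 0 ≤ t ∧ t < m
      · rw [if_pos h, if_pos ⟨by linarith [h.1], by linarith [h.2]⟩, if_neg (by linarith [h.1])]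
        congr 2; ring
      · rw [if_neg h, if_neg]
        rintro ⟨b1, b2⟩
        exact h ⟨by linarith, by linarith⟩

lemma psiE_jump {ε : ℝ} (r : X → ℝ≥0∞) (x z z' : X) (hd : dist z z' ≤ ε) :
    psiE ε r x z' ≤ psiE ε r x z + r z * ENNReal.ofReal (dist z z') := by
  have hε : 0 ≤ ε := dist_nonneg.trans hd
  have := psiE_concat (ε := ε) r x z z' (m := dist z z') dist_nonneg
    (fun t => if t < dist z z' then z else z') ?_ ?_ ?_ ?_
  · refine this.trans ?_
    gcongr
    calc _ = ∫⁻ t in Ico 0 (dist z z'), r z :=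
          setLIntegral_congr_fun measurableSet_Ico fun t ht => by simp only [if_pos ht.2]
      _ ≤ _ := by simp
  · by_cases h : 0 < dist z z'
    · simp [h]
    · rw [if_neg h]
      have : dist z z' = 0 := le_antisymm (not_lt.1 h) dist_nonneg
      exact (dist_eq_zero.1 this).symm
  · intro t ht
    rw [if_neg (by linarith)]
  · intro t ht
    split_ifs with h
    · simpa using ht
    · linarith
  · intro s t hs hst
    split_ifs <;> first | linarith | (rw [dist_self]; linarith) | (rw [dist_comm z' z]; linarith)

lemma psiE_curve {ε : ℝ} (hε : 0 ≤ ε) (r : X → ℝ≥0∞) (x : X) (γ : Curve X) :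
    psiE ε r x (γ.toFun γ.len) ≤ psiE ε r x (γ.toFun 0) + γ.integral r := by
  have hl := γ.len_nonneg
  have hlip : ∀ s t, 0 ≤ s → s ≤ t →
      dist (γ.toFun (min s γ.len)) (γ.toFun (min t γ.len)) ≤ t - s := by
    intro s t hs hst
    have := γ.lip.dist_le_mul (min s γ.len) ⟨le_min hs hl, min_le_right _ _⟩ (min t γ.len)
      ⟨le_min (hs.trans hst) hl, min_le_right _ _⟩
    rw [NNReal.coe_one, one_mul] at this
    refine this.trans ?_
    rw [Real.dist_eq]
    refine (abs_min_sub_min_le_max _ _ _ _).trans ?_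
    rw [sub_self, abs_zero, abs_sub_comm, abs_of_nonneg (by linarith)]
    exact max_le le_rfl (by linarith)
  have := psiE_concat (ε := ε) r x (γ.toFun 0) (γ.toFun γ.len) (m := γ.len) hl
    (fun t => γ.toFun (min t γ.len)) (by simp [hl]) (fun t ht => by simp [ht]) ?_ ?_
  · refine this.trans ?_
    gcongr
    unfold Curve.integral
    calc _ = ∫⁻ t in Ico 0 γ.len, r (γ.toFun t) :=
          setLIntegral_congr_fun measurableSet_Ico fun t ht => by simp only [min_eq_left ht.2.le]
      _ ≤ _ := lintegral_mono_set Ico_subset_Icc_self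
  · intro t ht
    have := hlip 0 t le_rfl ht
    simpa [hl] using this
  · intro s t hs hst
    have := hlip s t hs hst
    linarith

/-- Reversed curve. -/
def Curve.rev (γ : Curve X) : Curve X where
  len := γ.len
  len_nonneg := γ.len_nonneg
  toFun := fun t => γ.toFun (γ.len - t)
  lip := by
    intro p hp q hq
    have := γ.lip (x := γ.len - p) ⟨by linarith [hp.2], by linarith [hp.1]⟩ (y := γ.len - q)
      ⟨by linarith [hq.2], by linarith [hq.1]⟩
    simpa using this

lemma Curve.rev_integral (γ : Curve X) (r : X → ℝ≥0∞) : γ.rev.integral r = γ.integral r := by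
  unfold Curve.integral Curve.rev
  rw [← lintegral_indicator measurableSet_Icc, ← lintegral_indicator measurableSet_Icc,
    ← lintegral_sub_left_eq_self ((Icc 0 γ.len).indicator fun t => r (γ.toFun t)) γ.len]
  congr 1
  ext t
  simp only [indicator, mem_Icc]
  by_cases h : 0 ≤ t ∧ t ≤ γ.len
  · rw [if_pos h, if_pos ⟨by linarith [h.2], by linarith [h.1]⟩]
  · rw [if_neg h, if_neg]
    rintro ⟨b1, b2⟩
    exact h ⟨by linarith, by linarith⟩

lemma trunc_sub_le {N a a' c : ℝ≥0∞} (hN : N ≠ ∞) (h : a' ≤ a + c) (h' : a ≤ a' + c) :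
    ENNReal.ofReal |(min N a).toReal - (min N a').toReal| ≤ c := by
  have key : ∀ p q : ℝ≥0∞, q ≤ p + c → ENNReal.ofReal ((min N q).toReal - (min N p).toReal) ≤ c := by
    intro p q hpq
    have f1 : min N q ≠ ∞ := ne_top_of_le_ne_top hN (min_le_left _ _)
    have f2 : min N p ≠ ∞ := ne_top_of_le_ne_top hN (min_le_left _ _)
    rw [ENNReal.ofReal_sub _ ENNReal.toReal_nonneg, ENNReal.ofReal_toReal f1,
      ENNReal.ofReal_toReal f2, tsub_le_iff_left]
    rcases le_total N p with hle | hle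
    · rw [min_eq_left hle]; exact (min_le_left _ _).trans le_self_add
    · rw [min_eq_right hle]; exact (min_le_right _ _).trans hpq
  rcases le_total (min N a).toReal (min N a').toReal with h1 | h1
  · rw [abs_of_nonpos (by linarith), neg_sub]; exact key _ _ h
  · rw [abs_of_nonneg (by linarith)]; exact key _ _ h'

/-- truncated -/
def psi (N : ℝ≥0∞) (ε : ℝ) (r : X → ℝ≥0∞) (x z : X) : ℝ := (min N (psiE ε r x z)).toReal

lemma psi_ug {N : ℝ≥0∞} (hN : N ≠ ∞) {ε : ℝ} (hε : 0 ≤ ε) {r : X → ℝ≥0∞} (hr : Measurable r)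
    (x : X) : IsUpperGradient (psi N ε r x) r := by
  refine ⟨hr, fun γ => ?_⟩
  refine trunc_sub_le hN (psiE_curve hε r x γ) ?_
  have := psiE_curve hε r x γ.rev
  rw [Curve.rev_integral] at this
  simpa [Curve.rev] using this

lemma psi_bdd {N : ℝ≥0∞} (hN : N ≠ ∞) (ε : ℝ) (r : X → ℝ≥0∞) (x z : X) :
    |psi N ε r x z| ≤ N.toReal := by
  unfold psi
  rw [abs_of_nonneg ENNReal.toReal_nonneg]
  exact ENNReal.toReal_mono hN (min_le_left _ _)

lemma psi_cont {N : ℝ≥0∞} (hN : N ≠ ∞) {ε : ℝ} (hε : 0 < ε) {r : X → ℝ≥0∞} {m : ℝ} (hm : 0 < m)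
    (hr : ∀ z, r z ≤ ENNReal.ofReal m) (x : X) : Continuous (psi N ε r x) := by
  rw [Metric.continuous_iff]
  intro b δ hδ
  refine ⟨min ε (δ / m), by positivity, fun a ha => ?_⟩
  have ha1 : dist a b ≤ ε := (ha.trans_le (min_le_left _ _)).le
  have ha2 : dist a b < δ / m := ha.trans_le (min_le_right _ _)
  rw [lt_div_iff₀ hm] at ha2
  have h1 : ∀ p q : X, dist p q ≤ ε →
      psiE ε r x q ≤ psiE ε r x p + ENNReal.ofReal (m * dist p q) := by
    intro p q hpq
    refine (psiE_jump r x p q hpq).trans ?_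
    gcongr
    rw [ENNReal.ofReal_mul hm.le]
    gcongr; exact hr _
  have := trunc_sub_le hN (h1 a b ha1) (by have := h1 b a (by rwa [dist_comm]); rwa [dist_comm b a] at this)
  have h2 := (ENNReal.ofReal_le_ofReal_iff (by positivity)).1 this
  rw [Real.dist_eq]
  refine h2.trans_lt ?_
  linarith

/-- Lipschitz approximants of a lower semicontinuous function. -/
def lipApp (ρ : X → ℝ≥0∞) (n : ℕ) (z : X) : ℝ≥0∞ :=
  ⨅ w, (min (ρ w) (n + 1) + (n + 1) * edist z w)

lemma lipApp_le (ρ : X → ℝ≥0∞) (n : ℕ) (z : X) : lipApp ρ n z ≤ min (ρ z) (n + 1) :=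
  iInf_le_of_le z (by simp)

lemma lipApp_lip (ρ : X → ℝ≥0∞) (n : ℕ) (z z' : X) :
    lipApp ρ n z ≤ lipApp ρ n z' + (n + 1) * edist z z' := by
  unfold lipApp
  rw [ENNReal.iInf_add]
  refine iInf_mono fun w => ?_
  rw [add_assoc, ← mul_add]
  gcongr
  rw [add_comm]
  exact edist_triangle _ _ _

lemma lipApp_mono (ρ : X → ℝ≥0∞) : Monotone (lipApp ρ) := by
  intro m n hmn z
  refine iInf_mono fun w => ?_
  have : (m : ℝ≥0∞) ≤ n := by exact_mod_cast hmn
  gcongr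

lemma one_le_lipApp {ρ : X → ℝ≥0∞} (hρ : ∀ z, 1 ≤ ρ z) (n : ℕ) (z : X) : 1 ≤ lipApp ρ n z :=
  le_iInf fun w => (le_min (hρ w) le_add_self).trans le_self_add

lemma lipApp_cont (ρ : X → ℝ≥0∞) (n : ℕ) : Continuous (lipApp ρ n) := by
  refine continuous_of_le_add_edist (n + 1) (by finiteness) fun x y => ?_
  exact lipApp_lip ρ n x y

lemma lipApp_iSup {ρ : X → ℝ≥0∞} (hρ : LowerSemicontinuous ρ) (z : X) :
    ⨆ n, lipApp ρ n z = ρ z := by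
  refine le_antisymm (iSup_le fun n => (lipApp_le ρ n z).trans (min_le_left _ _)) ?_
  refine le_of_forall_lt fun a ha => ?_
  obtain ⟨b, hab, hb⟩ := exists_between ha
  have hbt : b ≠ ∞ := hb.ne_top
  have := hρ z b hb
  obtain ⟨δ, hδ, hball⟩ := Metric.nhds_basis_eball.eventually_iff.1 this
  obtain ⟨n, hn⟩ := ENNReal.exists_nat_gt (r := b + b / δ) (by
    refine ENNReal.add_ne_top.2 ⟨hbt, ENNReal.div_ne_top hbt hδ.ne'⟩)
  refine hab.trans_le (le_iSup_of_le n ?_)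
  refine le_iInf fun w => ?_
  by_cases hw : edist w z < δ
  · have h1 := hball hw
    refine le_trans ?_ le_self_add
    refine le_min h1.le ?_
    exact (le_self_add.trans hn.le).trans le_self_add
  · rw [not_lt] at hw
    refine le_trans ?_ le_add_self
    rw [edist_comm]
    calc b ≤ b / δ * edist w z := by
          rcases eq_or_ne δ ∞ with hδt | hδt
          · rw [hδt, top_le_iff] at hw
            exact absurd hw (edist_ne_top _ _)
          · calc b = b / δ * δ := (ENNReal.div_mul_cancel hδ.ne' hδt).symm
              _ ≤ _ := by gcongr
      _ ≤ (n + 1) * edist w z := by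
          gcongr
          exact (le_add_self.trans hn.le).trans le_self_add

/-- limit of `ε`-curves -/
lemma limit_curve [ProperSpace X] {ρ : X → ℝ≥0∞} (hρ : LowerSemicontinuous ρ)
    (hρ1 : ∀ z, 1 ≤ ρ z) {x y : X} {c : ℝ} (hc : 0 ≤ c) (l : ℕ → ℝ) (σ : ℕ → ℝ → X)
    (hσ : ∀ n : ℕ, ECurve (1 / ((n:ℝ) + 1)) x y (l n) (σ n))
    (hcost : ∀ n : ℕ, ∫⁻ t in Ico 0 (l n), lipApp ρ n (σ n t) ≤
      ENNReal.ofReal (c + 1 / ((n:ℝ) + 1))) :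
    ∃ γ : Curve X, γ.toFun 0 = x ∧ γ.toFun γ.len = y ∧ γ.integral ρ ≤ ENNReal.ofReal c := by
  have hn1 : ∀ n : ℕ, 1 / ((n:ℝ) + 1) ≤ 1 := fun n => by
    rw [div_le_one (by positivity)]; linarith [(Nat.cast_nonneg n : (0:ℝ) ≤ n)]
  have hn0 : ∀ n : ℕ, 0 ≤ 1 / ((n:ℝ) + 1) := fun n => by positivity
  have hlM : ∀ n, l n ≤ c + 1 := by
    intro n
    have h1 : ENNReal.ofReal (l n) ≤ ENNReal.ofReal (c + 1 / ((n:ℝ) + 1)) := by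
      refine le_trans ?_ (hcost n)
      calc ENNReal.ofReal (l n) = ∫⁻ t in Ico 0 (l n), 1 := by simp
        _ ≤ _ := lintegral_mono fun t => one_le_lipApp hρ1 n _
    have := (ENNReal.ofReal_le_ofReal_iff (by have := hn0 n; linarith)).1 h1
    linarith [hn1 n]
  let 𝒰 : Ultrafilter ℕ := hyperfilter ℕ
  have h𝒰 : (𝒰 : Filter ℕ) ≤ atTop := by
    rw [← Nat.cofinite_eq_atTop]; exact hyperfilter_le_cofinite
  have hlim0 : Tendsto (fun n : ℕ => 1 / ((n:ℝ) + 1)) 𝒰 (𝓝 0) :=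
    tendsto_one_div_add_atTop_nhds_zero_nat.mono_left h𝒰
  have hp : ∀ t : ℝ, ∃ p : X, 0 ≤ t → Tendsto (fun n => σ n t) 𝒰 (𝓝 p) := by
    intro t
    by_cases ht : 0 ≤ t
    · have hcpt := isCompact_closedBall x (t + 1)
      obtain ⟨p, -, hp⟩ := hcpt.ultrafilter_le_nhds (𝒰.map fun n => σ n t) (by
        rw [le_principal_iff]
        refine Eventually.of_forall (f := (𝒰 : Filter ℕ)) fun n => ?_
        have := (hσ n).2.2.2 0 t le_rfl ht
        rw [(hσ n).2.1] at this
        rw [mem_closedBall']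
        linarith [hn1 n])
      exact ⟨p, fun _ => hp⟩
    · exact ⟨x, fun h => absurd h ht⟩
  choose p hp using hp
  obtain ⟨ℓ, hℓ, hℓt⟩ := (isCompact_Icc (a := (0:ℝ)) (b := c + 1)).ultrafilter_le_nhds (𝒰.map l) (by
    rw [le_principal_iff]
    exact Eventually.of_forall (f := (𝒰 : Filter ℕ)) fun n => ⟨(hσ n).1, hlM n⟩)
  replace hℓt : Tendsto l 𝒰 (𝓝 ℓ) := hℓt
  have hdist : ∀ s t, 0 ≤ s → s ≤ t → dist (p s) (p t) ≤ t - s := by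
    intro s t hs hst
    have h1 : Tendsto (fun n => dist (σ n s) (σ n t)) 𝒰 (𝓝 (dist (p s) (p t))) :=
      (hp s hs).dist (hp t (hs.trans hst))
    have h2 : Tendsto (fun n : ℕ => t - s + 1 / ((n:ℝ) + 1)) 𝒰 (𝓝 (t - s + 0)) :=
      hlim0.const_add _
    rw [add_zero] at h2
    exact le_of_tendsto_of_tendsto' h1 h2 fun n => (hσ n).2.2.2 s t hs hst
  have hp0 : p 0 = x := by
    refine tendsto_nhds_unique (hp 0 le_rfl) ?_
    simp only [(hσ _).2.1]
    exact tendsto_const_nhds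
  have hpt : ∀ t, ℓ < t → p t = y := by
    intro t ht
    refine tendsto_nhds_unique (hp t (hℓ.1.trans ht.le)) ?_
    refine tendsto_const_nhds.congr' ?_
    filter_upwards [hℓt.eventually (gt_mem_nhds ht)] with n hn
    exact ((hσ n).2.2.1 t hn.le).symm
  have hpℓ : p ℓ = y := by
    rw [← dist_le_zero]
    refine le_of_forall_pos_le_add fun δ hδ => ?_
    have := hdist ℓ (ℓ + δ) hℓ.1 (by linarith)
    rw [hpt (ℓ + δ) (by linarith)] at this
    linarith
  let γ : Curve X := ⟨ℓ, hℓ.1, p, by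
    refine LipschitzOnWith.of_dist_le_mul fun s hs t ht => ?_
    rw [NNReal.coe_one, one_mul, Real.dist_eq]
    rcases le_total s t with h | h
    · rw [abs_sub_comm, abs_of_nonneg (by linarith)]; exact hdist s t hs.1 h
    · rw [dist_comm, abs_of_nonneg (by linarith)]; exact hdist t s ht.1 h⟩
  refine ⟨γ, hp0, hpℓ, ?_⟩
  have key : ∀ m, γ.integral (lipApp ρ m) ≤ ENNReal.ofReal c := by
    intro m
    set A : ℝ := 1 + (m + 1) * (4 * (c + 1) + 1) with hA
    have hA0 : 0 < A := by positivity
    suffices H : ∀ δ : ℝ, 0 < δ → γ.integral (lipApp ρ m) ≤ ENNReal.ofReal (c + A * δ) by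
      have ht : Tendsto (fun δ : ℝ => ENNReal.ofReal (c + A * δ)) (𝓝[>] 0)
          (𝓝 (ENNReal.ofReal c)) := by
        have : Continuous fun δ : ℝ => ENNReal.ofReal (c + A * δ) := ENNReal.continuous_ofReal.comp (by fun_prop)
        have := this.tendsto 0
        simp only [mul_zero, add_zero] at this
        exact this.mono_left nhdsWithin_le_nhds
      exact ge_of_tendsto ht (by filter_upwards [self_mem_nhdsWithin] with δ hδ using H δ hδ)
    intro δ hδ
    -- closeness on a net
    obtain ⟨J, hJ⟩ := exists_nat_gt (ℓ / δ)
    have hev1 : ∀ᶠ n in (𝒰 : Filter ℕ), ∀ j ∈ Finset.range (J + 1),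
        dist (σ n (j * δ)) (p (j * δ)) < δ := by
      rw [eventually_all_finset]
      intro j _
      exact (Metric.tendsto_nhds.1 (hp (j * δ) (by positivity))) δ hδ
    have hev2 : ∀ᶠ n : ℕ in (𝒰 : Filter ℕ), 1 / ((n:ℝ) + 1) < δ := hlim0.eventually (gt_mem_nhds hδ)
    have hev3 : ∀ᶠ n in (𝒰 : Filter ℕ), ℓ - δ < l n := hℓt.eventually (lt_mem_nhds (by linarith))
    have hev4 : ∀ᶠ n in (𝒰 : Filter ℕ), m ≤ n := h𝒰 (eventually_ge_atTop m)
    obtain ⟨n, h1, h2, h3, h4⟩ := (hev1.and (hev2.and (hev3.and hev4))).exists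
    have hclose : ∀ t, 0 ≤ t → t ≤ ℓ → dist (p t) (σ n t) ≤ 4 * δ := by
      intro t ht0 htℓ
      set j := ⌊t / δ⌋₊
      have hj1 : (j : ℝ) * δ ≤ t := by
        have := Nat.floor_le (show 0 ≤ t / δ by positivity)
        rwa [le_div_iff₀ hδ] at this
      have hj2 : t ≤ j * δ + δ := by
        have := (Nat.lt_floor_add_one (t / δ)).le
        rw [div_le_iff₀ hδ] at this
        linarith
      have hjJ : j ∈ Finset.range (J + 1) := by
        rw [Finset.mem_range]
        have : (j : ℝ) ≤ J := by
          have h5 := Nat.floor_le (show 0 ≤ t / δ by positivity)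
          have h6 : t / δ ≤ ℓ / δ := by gcongr
          exact (h5.trans h6).trans hJ.le
        have : j ≤ J := by exact_mod_cast this
        omega
      have a1 := h1 j hjJ
      have a2 := hdist (j * δ) t (by positivity) hj1
      have a3 := (hσ n).2.2.2 (j * δ) t (by positivity) hj1
      have a4 := dist_triangle4 (p t) (p (j * δ)) (σ n (j * δ)) (σ n t)
      rw [dist_comm (p t) (p (j * δ))] at a4
      rw [dist_comm (σ n (j * δ)) (p _)] at a1
      linarith
    have hpw : ∀ t, 0 ≤ t → t ≤ ℓ →
        lipApp ρ m (p t) ≤ lipApp ρ n (σ n t) + ENNReal.ofReal ((m + 1) * (4 * δ)) := by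
      intro t ht0 htℓ
      refine (lipApp_lip ρ m (p t) (σ n t)).trans ?_
      gcongr
      · exact lipApp_mono ρ h4 _
      · rw [ENNReal.ofReal_mul (by positivity), edist_dist,
          ENNReal.ofReal_add (by positivity) zero_le_one, ENNReal.ofReal_natCast, ENNReal.ofReal_one]
        gcongr
        exact hclose t ht0 htℓ
    have hsub : Icc 0 ℓ ⊆ (Ico 0 (l n) ∩ Icc 0 ℓ) ∪ Icc (ℓ - δ) ℓ := by
      intro t ht
      rcases le_or_gt (ℓ - δ) t with h | h
      · exact Or.inr ⟨h, ht.2⟩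
      · exact Or.inl ⟨⟨ht.1, h.trans h3⟩, ht⟩
    calc γ.integral (lipApp ρ m) = ∫⁻ t in Icc 0 ℓ, lipApp ρ m (p t) := rfl
      _ ≤ ∫⁻ t in (Ico 0 (l n) ∩ Icc 0 ℓ) ∪ Icc (ℓ - δ) ℓ, lipApp ρ m (p t) :=
          lintegral_mono_set hsub
      _ ≤ (∫⁻ t in (Ico 0 (l n) ∩ Icc 0 ℓ), lipApp ρ m (p t)) +
          ∫⁻ t in Icc (ℓ - δ) ℓ, lipApp ρ m (p t) := lintegral_union_le _ _ _
      _ ≤ (∫⁻ t in (Ico 0 (l n) ∩ Icc 0 ℓ),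
            (lipApp ρ n (σ n t) + ENNReal.ofReal ((m + 1) * (4 * δ)))) +
          ∫⁻ t in Icc (ℓ - δ) ℓ, (m + 1 : ℝ≥0∞) := by
          refine add_le_add ?_ ?_
          · exact setLIntegral_mono' (measurableSet_Ico.inter measurableSet_Icc)
              fun t ht => hpw t ht.2.1 ht.2.2
          · exact lintegral_mono fun t => (lipApp_le ρ m _).trans (min_le_right _ _)
      _ ≤ (∫⁻ t in Ico 0 (l n),
            (lipApp ρ n (σ n t) + ENNReal.ofReal ((m + 1) * (4 * δ)))) +
          ENNReal.ofReal ((m + 1) * δ) := by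
          refine add_le_add (lintegral_mono_set inter_subset_left) (le_of_eq ?_)
          rw [setLIntegral_const, Real.volume_Icc, ENNReal.ofReal_mul (by positivity),
            ENNReal.ofReal_add (by positivity) zero_le_one, ENNReal.ofReal_natCast,
            ENNReal.ofReal_one]
          congr 2; ring
      _ = (∫⁻ t in Ico 0 (l n), lipApp ρ n (σ n t)) +
          ENNReal.ofReal ((m + 1) * (4 * δ)) * ENNReal.ofReal (l n) +
          ENNReal.ofReal ((m + 1) * δ) := by
          rw [lintegral_add_right _ measurable_const, setLIntegral_const, Real.volume_Ico, sub_zero]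
      _ ≤ ENNReal.ofReal (c + δ) +
          ENNReal.ofReal ((m + 1) * (4 * δ)) * ENNReal.ofReal (c + 1) +
          ENNReal.ofReal ((m + 1) * δ) := by
          gcongr
          · exact (hcost n).trans (ENNReal.ofReal_le_ofReal (by linarith))
          · exact hlM n
      _ = ENNReal.ofReal (c + A * δ) := by
          rw [← ENNReal.ofReal_mul (by positivity), ← ENNReal.ofReal_add (by positivity) (by positivity),
            ← ENNReal.ofReal_add (by positivity) (by positivity)]
          congr 1
          rw [hA]; ring
  have e : γ.integral ρ = ⨆ m, γ.integral (lipApp ρ m) := by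
    unfold Curve.integral
    rw [← lintegral_iSup' (fun m => γ.aemeasurable_comp (lipApp_cont ρ m).measurable)
      (Eventually.of_forall fun t => fun a b hab => lipApp_mono ρ hab _)]
    simp only [lipApp_iSup hρ]
  rw [e]
  exact iSup_le key

section PI
variable {μ : Measure X} {Cd CP lam : ℝ}

lemma GoodPt.mono {ρ ρ' : X → ℝ≥0∞} {Λ : ℝ} {x : X} (h : GoodPt μ ρ Λ x) (hρ : ∀ z, ρ' z ≤ ρ z) :
    GoodPt μ ρ' Λ x := fun r h0 h1 => (lintegral_mono fun z => hρ z).trans (h r h0 h1)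

lemma exists_good_curve [ProperSpace X] (hd : Doubling μ Cd) (hp : Poincare μ CP lam)
    {ρ : X → ℝ≥0∞} (hρ : LowerSemicontinuous ρ) (hρ1 : ∀ z, 1 ≤ ρ z) {Λ : ℝ}
    (hΛ : 0 ≤ Λ) {x y : X} (hx : GoodPt μ ρ Λ x) (hy : GoodPt μ ρ Λ y)
    (hxy : 2 * lam * dist x y ≤ 1) :
    ∃ γ : Curve X, γ.toFun 0 = x ∧ γ.toFun γ.len = y ∧
      γ.integral ρ ≤ ENNReal.ofReal (8 * Cd ^ 2 * CP * Λ * dist x y) := by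
  have hCP : 0 ≤ CP := by linarith [hp.1]
  set c := 8 * Cd ^ 2 * CP * Λ * dist x y with hc
  have hc0 : 0 ≤ c := by positivity
  have H : ∀ n : ℕ, ∃ l σ, ECurve (1 / ((n:ℝ) + 1)) x y l σ ∧
      ∫⁻ t in Ico 0 l, lipApp ρ n (σ t) ≤ ENNReal.ofReal (c + 1 / ((n:ℝ) + 1)) := by
    intro n
    set ε := 1 / ((n:ℝ) + 1)
    have hε : 0 < ε := by positivity
    set N := ENNReal.ofReal (c + ε)
    have hN : N ≠ ∞ := ENNReal.ofReal_ne_top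
    have hle : ∀ z, lipApp ρ n z ≤ ρ z := fun z => (lipApp_le ρ n z).trans (min_le_left _ _)
    have h1 := two_point hd hp hΛ (hx.mono hle) (hy.mono hle)
      (ψ := psi N ε (lipApp ρ n) x)
      (psi_cont hN hε (m := n + 1) (by positivity) (fun z => by
        refine ((lipApp_le ρ n z).trans (min_le_right _ _)).trans (le_of_eq ?_)
        rw [ENNReal.ofReal_add (by positivity) zero_le_one, ENNReal.ofReal_natCast,
            ENNReal.ofReal_one]) x)
      (psi_bdd hN ε _ x) (psi_ug hN hε.le (lipApp_cont ρ n).measurable x) hxy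
    rw [← hc] at h1
    have h2 : psi N ε (lipApp ρ n) x x = 0 := by
      unfold psi; rw [psiE_self hε.le]; simp
    rw [h2, zero_sub, abs_neg] at h1
    have h3 := (le_abs_self _).trans h1
    unfold psi at h3
    have h4 : min N (psiE ε (lipApp ρ n) x y) < N := by
      rw [← ENNReal.ofReal_toReal (ne_top_of_le_ne_top hN (min_le_left N (psiE ε (lipApp ρ n) x y)))]
      rw [ENNReal.ofReal_lt_ofReal_iff (by positivity)]
      linarith
    rw [min_lt_iff] at h4
    have h5 := h4.resolve_left (lt_irrefl _)
    unfold psiE at h5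
    simp only [iInf_lt_iff] at h5
    obtain ⟨l, σ, h6, h7⟩ := h5
    exact ⟨l, σ, h6, h7.le⟩
  choose l σ h1 h2 using H
  exact limit_curve hρ hρ1 hc0 l σ h1 h2

lemma lip_on_good [ProperSpace X] (hd : Doubling μ Cd) (hp : Poincare μ CP lam)
    {ρ : X → ℝ≥0∞} (hρ : LowerSemicontinuous ρ) {Λ : ℝ}
    (hΛ : 0 ≤ Λ) {x y : X} (hx : GoodPt μ ρ Λ x) (hy : GoodPt μ ρ Λ y)
    (hxy : 2 * lam * dist x y ≤ 1) {f : X → ℝ} (hf : ∀ γ, UGIneq f ρ γ) :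
    |f x - f y| ≤ 8 * Cd ^ 2 * CP * (Λ + 1) * dist x y := by
  have hCP : 0 ≤ CP := by linarith [hp.1]
  have hgood : ∀ z, GoodPt μ ρ Λ z → GoodPt μ (fun w => ρ w + 1) (Λ + 1) z := by
    intro z hz r h0 h1
    rw [lintegral_add_right _ measurable_const, setLIntegral_const, ENNReal.ofReal_add hΛ zero_le_one,
      add_mul, ENNReal.ofReal_one]
    exact add_le_add (hz r h0 h1) le_rfl
  obtain ⟨γ, h1, h2, h3⟩ := exists_good_curve hd hp (ρ := fun w => ρ w + 1)
    (hρ.add lowerSemicontinuous_const) (fun z => le_add_self) (by linarith : 0 ≤ Λ + 1)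
    (hgood x hx) (hgood y hy) hxy
  have h4 := hf γ
  unfold UGIneq at h4
  rw [h1, h2] at h4
  have h5 := (h4.trans (γ.integral_mono (g' := fun w => ρ w + 1) fun z => le_self_add)).trans h3
  exact (ENNReal.ofReal_le_ofReal_iff (by positivity)).1 h5
end PI

section LD
variable {μ : Measure X} {Cd CP lam : ℝ}

lemma ofReal_abs_add_le (a b : ℝ) :
    ENNReal.ofReal |a + b| ≤ ENNReal.ofReal |a| + ENNReal.ofReal |b| := by
  rw [← ENNReal.ofReal_add (abs_nonneg _) (abs_nonneg _)]
  exact ENNReal.ofReal_le_ofReal (abs_add_le a b)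

def badIdx (μ : Measure X) (ρ : X → ℝ≥0∞) (Λ : ℝ) : Set (X × ℝ) :=
  {p | 0 < p.2 ∧ p.2 ≤ 1 ∧ ENNReal.ofReal Λ * μ (ball p.1 p.2) < ∫⁻ y in ball p.1 p.2, ρ y ∂μ}

def badSet (μ : Measure X) (ρ : X → ℝ≥0∞) (Λ : ℝ) : Set X :=
  ⋃ p ∈ badIdx μ ρ Λ, ball p.1 p.2

lemma badSet_open (ρ : X → ℝ≥0∞) (Λ : ℝ) : IsOpen (badSet μ ρ Λ) :=
  isOpen_biUnion fun _ _ => isOpen_ball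

lemma good_of_notMem {ρ : X → ℝ≥0∞} {Λ : ℝ} {x : X} (hx : x ∉ badSet μ ρ Λ) : GoodPt μ ρ Λ x := by
  intro r h0 h1
  by_contra hc
  rw [not_le] at hc
  exact hx (mem_biUnion (x := (x, r)) ⟨h0, h1, hc⟩ (mem_ball_self h0))

lemma badSet_le [SecondCountableTopology X] (hd : Doubling μ Cd) (ρ : X → ℝ≥0∞) (Λ : ℝ) :
    ENNReal.ofReal Λ * μ (badSet μ ρ Λ) ≤
      ENNReal.ofReal (Cd ^ 2) * ∫⁻ x in badSet μ ρ Λ, ρ x ∂μ := by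
  obtain ⟨u, hut, hdis, hcov⟩ := Vitali.exists_disjoint_subfamily_covering_enlargement_ball
    (badIdx μ ρ Λ) (fun p => p.1) (fun p => p.2) 1 (fun p hp => hp.2.1) 4 (by norm_num)
  have hcount : u.Countable := hdis.countable_of_isOpen (fun _ _ => isOpen_ball)
    (fun p hp => ⟨p.1, mem_ball_self (hut hp).1⟩)
  have h1 : badSet μ ρ Λ ⊆ ⋃ p ∈ u, ball p.1 (4 * p.2) := by
    refine iUnion₂_subset fun p hp => ?_
    obtain ⟨b, hb, hs⟩ := hcov p hp
    exact hs.trans (subset_biUnion_of_mem (u := fun p : X × ℝ => ball p.1 (4 * p.2)) hb)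
  have := hcount.to_subtype
  calc ENNReal.ofReal Λ * μ (badSet μ ρ Λ)
      ≤ ENNReal.ofReal Λ * ∑' p : u, μ (ball p.1.1 (4 * p.1.2)) := by
        gcongr
        exact (measure_mono h1).trans (measure_biUnion_le μ hcount _)
    _ = ∑' p : u, ENNReal.ofReal Λ * μ (ball p.1.1 (4 * p.1.2)) := ENNReal.tsum_mul_left.symm
    _ ≤ ∑' p : u, ENNReal.ofReal (Cd ^ 2) * ∫⁻ x in ball p.1.1 p.1.2, ρ x ∂μ := by
        refine ENNReal.tsum_le_tsum fun p => ?_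
        have h := hut p.2
        have := hd.pow p.1.1 h.1 2
        norm_num at this
        calc _ ≤ ENNReal.ofReal Λ * (ENNReal.ofReal (Cd ^ 2) * μ (ball p.1.1 p.1.2)) := by gcongr
          _ = ENNReal.ofReal (Cd ^ 2) * (ENNReal.ofReal Λ * μ (ball p.1.1 p.1.2)) := by ring
          _ ≤ _ := by gcongr; exact h.2.2.le
    _ = ENNReal.ofReal (Cd ^ 2) * ∑' p : u, ∫⁻ x in ball p.1.1 p.1.2, ρ x ∂μ := ENNReal.tsum_mul_left
    _ = ENNReal.ofReal (Cd ^ 2) * ∫⁻ x in ⋃ p ∈ u, ball p.1 p.2, ρ x ∂μ := by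
        rw [lintegral_biUnion hcount (fun _ _ => measurableSet_ball) hdis]
    _ ≤ _ := by
        gcongr
        exact biUnion_subset_biUnion_left hut

lemma badSet_small [SecondCountableTopology X] (hd : Doubling μ Cd) {ρ : X → ℝ≥0∞}
    (hfin : ∫⁻ x, ρ x ∂μ < ∞) {ε C Λ₀ : ℝ} (hε : 0 < ε) (hC : 0 ≤ C) :
    ∃ Λ, Λ₀ ≤ Λ ∧ 1 ≤ Λ ∧ μ (badSet μ ρ Λ) ≤ ENNReal.ofReal ε ∧
      ∫⁻ x in badSet μ ρ Λ, ρ x ∂μ + ENNReal.ofReal (C * (Λ + 1)) * μ (badSet μ ρ Λ)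
        ≤ ENNReal.ofReal ε := by
  have hCd : (1:ℝ) ≤ Cd ^ 2 := one_le_pow₀ hd.1
  set D := 1 + 2 * C * Cd ^ 2 + Cd ^ 2 with hD
  have hD0 : 0 < D := by positivity
  obtain ⟨δ, hδ, hδ'⟩ := exists_pos_setLIntegral_lt_of_measure_lt hfin.ne
    (ε := ENNReal.ofReal (ε / D)) (by simpa using by positivity)
  -- μ(E_Λ) < δ for Λ large
  have hlim : Tendsto (fun Λ : ℝ => ENNReal.ofReal (Cd ^ 2) * (∫⁻ x, ρ x ∂μ) / ENNReal.ofReal Λ) atTop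
      (𝓝 0) := by
    have h1 : Tendsto (fun Λ : ℝ => ENNReal.ofReal Λ) atTop (𝓝 ∞) := ENNReal.tendsto_ofReal_nhds_top.2 tendsto_id
    simpa using ENNReal.Tendsto.const_div (a := ENNReal.ofReal (Cd ^ 2) * (∫⁻ x, ρ x ∂μ)) h1 (Or.inr (ENNReal.mul_ne_top ENNReal.ofReal_ne_top hfin.ne))
  obtain ⟨Λ, h1, h2, h3⟩ := ((eventually_ge_atTop Λ₀).and ((eventually_ge_atTop (1:ℝ)).and
    (hlim.eventually (gt_mem_nhds hδ)))).exists
  set E := badSet μ ρ Λ with hE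
  have hb := badSet_le hd ρ Λ
  rw [← hE] at hb
  have hΛpos : 0 < Λ := by linarith
  have hμE : μ E < δ := by
    refine lt_of_le_of_lt ?_ h3
    rw [ENNReal.le_div_iff_mul_le (Or.inl (by simpa using hΛpos)) (Or.inl ENNReal.ofReal_ne_top), mul_comm]
    refine hb.trans ?_
    gcongr
    exact Measure.restrict_le_self
  have hI := (hδ' E hμE).le
  have hμI : ENNReal.ofReal Λ * μ E ≤ ENNReal.ofReal (Cd ^ 2) * ENNReal.ofReal (ε / D) :=
    hb.trans (by gcongr)
  refine ⟨Λ, h1, h2, ?_, ?_⟩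
  · calc μ E ≤ ENNReal.ofReal Λ * μ E := by
          refine le_mul_of_one_le_left bot_le ?_
          simpa using h2
      _ ≤ _ := hμI
      _ = ENNReal.ofReal (Cd ^ 2 * (ε / D)) := (ENNReal.ofReal_mul (by positivity)).symm
      _ ≤ _ := by
          apply ENNReal.ofReal_le_ofReal
          rw [← mul_div_assoc, div_le_iff₀ hD0, hD]
          nlinarith [mul_nonneg hC (by positivity : (0:ℝ) ≤ Cd^2)]
  · calc _ ≤ ENNReal.ofReal (ε / D) + ENNReal.ofReal (2 * C) * (ENNReal.ofReal Λ * μ E) := by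
          rw [← mul_assoc, ← ENNReal.ofReal_mul (by positivity)]
          refine add_le_add hI (mul_le_mul_left (ENNReal.ofReal_le_ofReal ?_) _)
          nlinarith
      _ ≤ ENNReal.ofReal (ε / D) + ENNReal.ofReal (2 * C) * (ENNReal.ofReal (Cd ^ 2) * ENNReal.ofReal (ε / D)) := by
          gcongr
      _ = ENNReal.ofReal (ε / D + 2 * C * (Cd ^ 2 * (ε / D))) := by
          rw [ENNReal.ofReal_add (by positivity) (by positivity), ENNReal.ofReal_mul (p := 2 * C) (by positivity),
            ENNReal.ofReal_mul (p := Cd ^ 2) (by positivity)]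
      _ ≤ _ := by
          apply ENNReal.ofReal_le_ofReal
          have : ε / D + 2 * C * (Cd ^ 2 * (ε / D)) = (1 + 2 * C * Cd ^ 2) * ε / D := by ring
          rw [this, div_le_iff₀ hD0, hD]
          nlinarith

def clamp (t : ℝ) : ℝ := max (-1) (min 1 t)

lemma clamp_abs (t : ℝ) : |clamp t| ≤ 1 := by
  unfold clamp; rw [abs_le]; exact ⟨le_max_left _ _, max_le (by norm_num) (min_le_left _ _)⟩

lemma clamp_eq {t : ℝ} (h : |t| ≤ 1) : clamp t = t := by
  rw [abs_le] at h; unfold clamp; rw [min_eq_right h.2, max_eq_right h.1]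

lemma clamp_lip (a b : ℝ) : |clamp a - clamp b| ≤ |a - b| := by
  unfold clamp
  refine (abs_max_sub_max_le_max _ _ _ _).trans ?_
  simp only [sub_self, abs_zero]
  refine max_le (abs_nonneg _) ((abs_min_sub_min_le_max _ _ _ _).trans ?_)
  simp

lemma lemmaD_aux [ProperSpace X] (hd : Doubling μ Cd) (hp : Poincare μ CP lam)
    {f : X → ℝ} (hf : ∀ x, |f x| ≤ 1) {ρ : X → ℝ≥0∞} (hρ : LowerSemicontinuous ρ)
    (hug : ∀ γ, UGIneq f ρ γ) (hfin : ∫⁻ x, ρ x ∂μ < ∞) {ε : ℝ} (hε : 0 < ε) :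
    ∃ (F : X → ℝ) (K : ℝ≥0) (p : X → ℝ≥0∞) (E : Set X), LipschitzWith K F ∧ (∀ x, |F x| ≤ 1) ∧
      Measurable p ∧ (∀ γ, UGIneq (fun x => F x - f x) p γ) ∧ ∫⁻ x, p x ∂μ ≤ ENNReal.ofReal ε ∧
      IsOpen E ∧ μ E ≤ ENNReal.ofReal ε ∧ ∀ x ∉ E, F x = f x := by
  have hCP : 0 < CP := by linarith [hp.1]
  have hCd : 0 < Cd := by linarith [hd.1]
  have hlam : 0 < lam := by linarith [hp.2.1]
  obtain ⟨Λ, hΛ0, hΛ1, hμE, hint⟩ := badSet_small hd hfin (C := 8 * Cd ^ 2 * CP) (Λ₀ := 4 * lam) hε (by positivity)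
  set E := badSet μ ρ Λ with hE
  set K : ℝ := 8 * Cd ^ 2 * CP * (Λ + 1) with hK
  have hK0 : 0 ≤ K := by positivity
  have hK4 : 4 * lam ≤ K := by
    have h1 : (1:ℝ) ≤ Cd ^ 2 := one_le_pow₀ hd.1
    have h2 : (1:ℝ) ≤ Cd ^ 2 * CP := by nlinarith [hp.1]
    rw [hK]; nlinarith
  have hlip : LipschitzOnWith K.toNNReal f Eᶜ := by
    refine LipschitzOnWith.of_dist_le_mul fun x hx y hy => ?_
    rw [Real.coe_toNNReal _ hK0, Real.dist_eq]
    rcases le_or_gt (2 * lam * dist x y) 1 with h | h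
    · exact lip_on_good hd hp hρ (by linarith) (good_of_notMem hx) (good_of_notMem hy) h hug
    · have h1 := hf x
      have h2 := hf y
      have h3 := abs_sub (f x) (f y)
      have h4 : 4 * lam * dist x y ≤ K * dist x y := by gcongr
      linarith
  obtain ⟨F₀, hF₀, hFE⟩ := hlip.extend_real
  have hF : LipschitzWith K.toNNReal (fun x => clamp (F₀ x)) := by
    refine LipschitzWith.of_dist_le_mul fun x y => ?_
    exact (clamp_lip _ _).trans (hF₀.dist_le_mul x y)
  have hEm : MeasurableSet E := (badSet_open ρ Λ).measurableSet
  have hFf : ∀ x ∉ E, clamp (F₀ x) = f x := fun x hx => by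
    rw [← hFE hx, clamp_eq (hf x)]
  refine ⟨fun x => clamp (F₀ x), K.toNNReal, E.indicator fun x => ρ x + ENNReal.ofReal K, E, hF, fun x => clamp_abs _,
    (hρ.measurable.add_const _).indicator hEm, fun γ => ?_, ?_, badSet_open ρ Λ, hμE, hFf⟩
  · have := ug_zero_set (h := fun t => clamp (F₀ (γ.toFun t)) - f (γ.toFun t))
      (a := fun t => ρ (γ.toFun t) + ENNReal.ofReal K) γ.len_nonneg (γ.toFun ⁻¹' Eᶜ) ?_ ?_ ?_
    · unfold UGIneq Curve.integral
      refine this.trans (le_of_eq ?_)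
      refine lintegral_congr fun t => ?_
      by_cases ht : γ.toFun t ∈ E
      · rw [indicator_of_mem ht, indicator_of_mem (by simpa using ht)]
      · rw [indicator_of_notMem ht, indicator_of_notMem (by simpa using ht)]
    · have h := γ.continuousOn.preimage_isClosed_of_isClosed isClosed_Icc (badSet_open (μ := μ) ρ Λ).isClosed_compl
      rwa [inter_comm]
    · intro t ht _
      simp only [hFf _ ht, sub_self]
    · intro s t hs hst ht _
      have h1 := hug (γ.sub s t hs hst ht)
      unfold UGIneq at h1
      rw [γ.integral_sub] at h1
      simp only [Curve.sub, add_zero, add_sub_cancel] at h1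
      have h2 : |clamp (F₀ (γ.toFun s)) - clamp (F₀ (γ.toFun t))| ≤ K * (t - s) := by
        have a1 := hF.dist_le_mul (γ.toFun s) (γ.toFun t)
        have a2 := γ.lip.dist_le_mul s ⟨hs, hst.trans ht⟩ t ⟨hs.trans hst, ht⟩
        rw [Real.coe_toNNReal _ hK0, Real.dist_eq] at a1
        rw [NNReal.coe_one, one_mul, Real.dist_eq, abs_sub_comm, abs_of_nonneg (by linarith : 0 ≤ t - s)] at a2
        exact a1.trans (by gcongr)
      rw [lintegral_add_right _ measurable_const, setLIntegral_const, Real.volume_Icc, ← ENNReal.ofReal_mul hK0]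
      have e : clamp (F₀ (γ.toFun s)) - f (γ.toFun s) - (clamp (F₀ (γ.toFun t)) - f (γ.toFun t))
        = -(f (γ.toFun s) - f (γ.toFun t)) + (clamp (F₀ (γ.toFun s)) - clamp (F₀ (γ.toFun t))) := by ring
      rw [e]
      refine (ofReal_abs_add_le _ _).trans (add_le_add (by rwa [abs_neg]) (ENNReal.ofReal_le_ofReal h2))
  · rw [lintegral_indicator hEm, lintegral_add_right _ measurable_const, setLIntegral_const]
    exact hint

lemma exists_lsc_ug [ProperSpace X] (hd : Doubling μ Cd) {f : X → ℝ} {q : X → ℝ≥0∞}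
    (hq : IsWeakUpperGradientOn μ f q univ) (hfin : ∫⁻ x, q x ∂μ < ∞) :
    ∃ ρ : X → ℝ≥0∞, LowerSemicontinuous ρ ∧ (∀ γ, UGIneq f ρ γ) ∧ ∫⁻ x, ρ x ∂μ < ∞ := by
  have := hd.locFin
  obtain ⟨q', h1, h2, h3⟩ := exists_borel_majorant hq.1
  obtain ⟨ρ₀, r1, r2, r3⟩ := hq.2
  rw [lintegral_congr_ae h3] at hfin
  obtain ⟨ρ, p1, p2, p3⟩ := exists_le_lowerSemicontinuous_lintegral_ge μ (fun x => q' x + ρ₀ x) (h1.add r1) (ε := 1) one_ne_zero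
  refine ⟨ρ, p2, fun γ => ?_, ?_⟩
  · by_cases hγ : UGIneq f q γ
    · exact hγ.trans (γ.integral_mono fun x => (h2 x).trans (le_self_add.trans (p1 x)))
    · have := r3 γ ⟨fun _ _ => mem_univ _, hγ⟩
      have h4 : γ.integral ρ = ∞ := by
        rw [← top_le_iff, ← this]
        exact γ.integral_mono fun x => le_add_self.trans (p1 x)
      unfold UGIneq
      rw [h4]; exact le_top
  · refine p3.trans_lt ?_
    rw [lintegral_add_left h1]
    exact ENNReal.add_lt_top.2 ⟨ENNReal.add_lt_top.2 ⟨hfin, r2⟩, ENNReal.one_lt_top⟩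

lemma lemmaD_meas [ProperSpace X] (hd : Doubling μ Cd) (hp : Poincare μ CP lam)
    {f : X → ℝ} (hf : ∀ x, |f x| ≤ 1) {q : X → ℝ≥0∞}
    (hq : IsWeakUpperGradientOn μ f q univ) (hfin : ∫⁻ x, q x ∂μ < ∞) : AEMeasurable f μ := by
  obtain ⟨ρ, h1, h2, h3⟩ := exists_lsc_ug hd hq hfin
  have := fun n : ℕ => lemmaD_aux hd hp hf h1 h2 h3 (ε := (1/2) ^ n) (by positivity)
  choose F K p E a1 a2 a3 a4 a5 a6 a7 a8 using this
  have hsum : ∑' n, μ (E n) ≠ ∞ := by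
    refine ne_top_of_le_ne_top ?_ (ENNReal.tsum_le_tsum a7)
    rw [← ENNReal.ofReal_tsum_of_nonneg (fun n => by positivity) summable_geometric_two]
    exact ENNReal.ofReal_ne_top
  have hbc := ae_eventually_notMem hsum
  refine aemeasurable_of_tendsto_metrizable_ae atTop (f := F) (fun n => (a1 n).continuous.measurable.aemeasurable) ?_
  filter_upwards [hbc] with x hx
  refine tendsto_const_nhds.congr' ?_
  filter_upwards [hx] with n hn
  exact (a8 n x hn).symm

lemma lemmaD [ProperSpace X] (hd : Doubling μ Cd) (hp : Poincare μ CP lam)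
    {f : X → ℝ} (hf : ∀ x, |f x| ≤ 1) {q : X → ℝ≥0∞}
    (hq : IsWeakUpperGradientOn μ f q univ) (hfin : ∫⁻ x, q x ∂μ < ∞) {ε : ℝ} (hε : 0 < ε) :
    ∃ (F : X → ℝ) (K : ℝ≥0) (p : X → ℝ≥0∞), LipschitzWith K F ∧ (∀ x, |F x| ≤ 1) ∧
      Measurable p ∧ (∀ γ, UGIneq (fun x => F x - f x) p γ) ∧ ∫⁻ x, p x ∂μ ≤ ENNReal.ofReal ε ∧
      ∫⁻ x, ENNReal.ofReal |F x - f x| ∂μ ≤ ENNReal.ofReal ε := by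
  obtain ⟨ρ, h1, h2, h3⟩ := exists_lsc_ug hd hq hfin
  obtain ⟨F, K, p, E, a1, a2, a3, a4, a5, a6, a7, a8⟩ := lemmaD_aux hd hp hf h1 h2 h3 (ε := ε / 2) (by positivity)
  refine ⟨F, K, p, a1, a2, a3, a4, a5.trans (ENNReal.ofReal_le_ofReal (by linarith)), ?_⟩
  calc _ ≤ ∫⁻ x, E.indicator (fun _ => ENNReal.ofReal 2) x ∂μ := by
        refine lintegral_mono fun x => ?_
        by_cases hx : x ∈ E
        · rw [indicator_of_mem hx]
          apply ENNReal.ofReal_le_ofReal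
          have := abs_sub (F x) (f x)
          linarith [a2 x, hf x]
        · simp [a8 x hx]
    _ = ENNReal.ofReal 2 * μ E := by rw [lintegral_indicator a6.measurableSet, setLIntegral_const]
    _ ≤ ENNReal.ofReal 2 * ENNReal.ofReal (ε / 2) := by gcongr
    _ = _ := by rw [← ENNReal.ofReal_mul (by norm_num)]; congr 1; ring
end LD

section LDP
variable {μ : Measure X} {Cd CP lam : ℝ}

lemma lip_sug {α : X → ℝ} {K : ℝ} (hK0 : 0 ≤ K) (hα : ∀ x y, |α x - α y| ≤ K * dist x y) (γ : Curve X) :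
    SUG α (fun _ => ENNReal.ofReal K) γ := by
  intro s t hs hst ht
  rw [setLIntegral_const, Real.volume_Icc, ← ENNReal.ofReal_mul hK0]
  have a2 := γ.lip.dist_le_mul s ⟨hs, hst.trans ht⟩ t ⟨hs.trans hst, ht⟩
  rw [NNReal.coe_one, one_mul, Real.dist_eq, abs_sub_comm, abs_of_nonneg (by linarith : 0 ≤ t - s)] at a2
  exact ENNReal.ofReal_le_ofReal ((hα _ _).trans (by gcongr))

lemma const_curve_fin (γ : Curve X) (K : ℝ) :
    ∫⁻ _ in Icc (0:ℝ) γ.len, ENNReal.ofReal K < ∞ := by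
  rw [setLIntegral_const, Real.volume_Icc]
  exact ENNReal.mul_lt_top ENNReal.ofReal_lt_top ENNReal.ofReal_lt_top

lemma cutoff_wug {f α : X → ℝ} (hf : ∀ x, |f x| ≤ 1) {q : X → ℝ≥0∞} {W O C : Set X}
    (hW : MeasurableSet W)
    (hq : IsWeakUpperGradientOn μ f q W) (hfin : ∫⁻ x in W, q x ∂μ < ∞) (hO : IsOpen O)
    (hC : IsClosed C) (hOC : O ⊆ C) (hCW : C ⊆ W) {K : ℝ} (hK0 : 0 ≤ K)
    (hα : ∀ x y, |α x - α y| ≤ K * dist x y) (hα01 : ∀ x, 0 ≤ α x ∧ α x ≤ 1)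
    (hαO : ∀ x ∉ O, α x = 0) :
    IsWeakUpperGradientOn μ (fun x => α x * f x) (O.indicator fun x => q x + ENNReal.ofReal K) univ := by
  refine wug_of_ug ((hq.1.add_const _).indicator hO.measurableSet) ?_
  filter_upwards [aeC_sub (wug_iff.1 hq).2, aeC_sub (aeC_finite_on hq.1 hW.nullMeasurableSet hfin),
    aeC_sub (aeC_aemeasurable hq.1)] with γ h1 h2 h3 _
  have := ug_zero_set (h := fun t => α (γ.toFun t) * f (γ.toFun t))
      (a := fun t => q (γ.toFun t) + ENNReal.ofReal K) γ.len_nonneg (γ.toFun ⁻¹' Oᶜ) ?_ ?_ ?_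
  · unfold UGIneq Curve.integral
    refine this.trans (le_of_eq ?_)
    refine lintegral_congr fun t => ?_
    by_cases ht : γ.toFun t ∈ O
    · rw [indicator_of_mem ht, indicator_of_mem (by simpa using ht)]
    · rw [indicator_of_notMem ht, indicator_of_notMem (by simpa using ht)]
  · have h := γ.continuousOn.preimage_isClosed_of_isClosed isClosed_Icc hO.isClosed_compl
    rwa [inter_comm]
  · intro t ht _
    simp only [hαO _ ht, zero_mul]
  · intro s t hs hst ht hZ
    rcases hst.eq_or_lt with rfl | hlt
    · simp
    have hsub : Icc s t ⊆ Icc 0 γ.len := Icc_subset_Icc hs ht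
    have hIcc : ∀ τ ∈ Icc s t, γ.toFun τ ∈ C := by
      have hcl : IsClosed (Icc s t ∩ γ.toFun ⁻¹' C) :=
        (γ.continuousOn.mono hsub).preimage_isClosed_of_isClosed isClosed_Icc hC
      have : Ioo s t ⊆ Icc s t ∩ γ.toFun ⁻¹' C := fun τ hτ =>
        ⟨Ioo_subset_Icc_self hτ, hOC (by have := hZ τ hτ; simpa using this)⟩
      have h := closure_minimal this hcl
      rw [closure_Ioo hlt.ne] at h
      exact fun τ hτ => (h hτ).2
    set β := γ.sub s t hs hst ht with hβ
    have hβW : β.In W := by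
      intro τ hτ
      refine hCW (hIcc _ ⟨by linarith [hτ.1], ?_⟩)
      have := hτ.2
      simp only [hβ, Curve.sub] at this; linarith
    have k1 := h1 s t hs hst ht hβW
    have k2 := h2 s t hs hst ht
    have k3 := h3 s t hs hst ht
    have k2' : β.integral q < ∞ := by
      refine lt_of_le_of_lt (le_of_eq ?_) k2
      refine setLIntegral_congr_fun measurableSet_Icc fun τ hτ => ?_
      exact (indicator_of_mem (hβW τ hτ) q).symm
    have B := SubUG.blend (v := fun _ => 0) (a := fun _ => 0) β.len_nonneg (fun s t _ _ _ => by simp) k1 (lip_sug hK0 hα β)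
      aemeasurable_const (by simp) k3 k2' aemeasurable_const (const_curve_fin β K) (fun t _ => hα01 _)
    have B' := SubUG.mono B (b := fun τ => q (β.toFun τ) + ENNReal.ofReal K) (Eventually.of_forall fun τ => by
      simp only [mul_zero, zero_add, zero_sub, abs_neg]
      rw [add_comm]
      gcongr
      · refine mul_le_of_le_one_left bot_le ?_
        rw [ENNReal.ofReal_le_one]; exact (hα01 _).2
      · refine mul_le_of_le_one_left bot_le ?_
        rw [ENNReal.ofReal_le_one]; exact hf _)
    have B2 : SUG (fun x => α x * f x) (fun x => q x + ENNReal.ofReal K) β :=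
      SubUG.congr B' (fun τ _ => by simp [hβ])
    have B3 := B2.ug
    unfold UGIneq at B3
    rw [hβ, γ.integral_sub] at B3
    simpa [Curve.sub] using B3

lemma exists_phi {W : Set X} (hW : IsOpen W) : ∃ φ : X → ℝ, (∀ x y, |φ x - φ y| ≤ dist x y) ∧
    (∀ x, 0 ≤ φ x ∧ φ x ≤ 1) ∧ (∀ x, 0 < φ x ↔ x ∈ W) ∧ ∀ c > 0, Bornology.IsBounded {x | c ≤ φ x} := by
  rcases isEmpty_or_nonempty X with hX | ⟨⟨x₀⟩⟩
  · exact ⟨fun _ => 0, fun x => (hX.false x).elim, fun x => (hX.false x).elim, fun x => (hX.false x).elim,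
      fun c _ => by rw [Set.eq_empty_of_isEmpty {x : X | c ≤ 0}]; exact Bornology.isBounded_empty⟩
  obtain ⟨φ₁, a1, a2, a3⟩ : ∃ φ₁ : X → ℝ, (∀ x y, |φ₁ x - φ₁ y| ≤ dist x y) ∧ (∀ x, 0 ≤ φ₁ x) ∧
      (∀ x, 0 < φ₁ x ↔ x ∈ W) := by
    rcases eq_empty_or_nonempty Wᶜ with h | h
    · refine ⟨fun _ => 1, fun x y => by simp, fun x => by simp, fun x => ?_⟩
      rw [compl_empty_iff] at h; simp [h]
    · refine ⟨fun x => infDist x Wᶜ, fun x y => ?_, fun x => infDist_nonneg, fun x => ?_⟩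
      · have := (lipschitz_infDist_pt Wᶜ).dist_le_mul x y
        simpa [Real.dist_eq] using this
      · rw [← hW.isClosed_compl.notMem_iff_infDist_pos h]; simp
  set φ₂ : X → ℝ := fun x => 1 / (1 + dist x x₀) with h2
  have b1 : ∀ x y, |φ₂ x - φ₂ y| ≤ dist x y := by
    intro x y
    have e : φ₂ x - φ₂ y = (dist y x₀ - dist x x₀) / ((1 + dist x x₀) * (1 + dist y x₀)) := by
      simp only [h2]
      have p1 : 0 < 1 + dist x x₀ := by positivity
      have p2 : 0 < 1 + dist y x₀ := by positivity
      field_simp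
      ring
    rw [e, abs_div]
    have p3 : (1:ℝ) ≤ (1 + dist x x₀) * (1 + dist y x₀) := by
      nlinarith [@dist_nonneg _ _ x x₀, @dist_nonneg _ _ y x₀, mul_nonneg (@dist_nonneg _ _ x x₀) (@dist_nonneg _ _ y x₀)]
    rw [abs_of_pos (by linarith : 0 < (1 + dist x x₀) * (1 + dist y x₀))]
    refine (div_le_self (abs_nonneg _) p3).trans ?_
    rw [abs_sub_comm]
    exact abs_dist_sub_le _ _ _
  have b2 : ∀ x, 0 < φ₂ x := fun x => by simp only [h2]; positivity
  have b3 : ∀ x, φ₂ x ≤ 1 := fun x => by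
    simp only [h2]; rw [div_le_one (by positivity)]; linarith [@dist_nonneg _ _ x x₀]
  refine ⟨fun x => min (φ₁ x) (φ₂ x), fun x y => ?_, fun x => ⟨le_min (a2 x) (b2 x).le, (min_le_right _ _).trans (b3 x)⟩,
    fun x => ?_, fun c hc => ?_⟩
  · exact (abs_min_sub_min_le_max _ _ _ _).trans (max_le (a1 x y) (b1 x y))
  · rw [lt_min_iff, a3]; exact ⟨fun h => h.1, fun h => ⟨h, b2 x⟩⟩
  · refine (isBounded_closedBall (x := x₀) (r := 1 / c)).subset fun x hx => ?_
    have : c ≤ φ₂ x := le_trans hx (min_le_right _ _)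
    simp only [h2] at this
    rw [le_div_iff₀ (by positivity)] at this
    rw [mem_closedBall, le_div_iff₀ hc]
    nlinarith

def cut (φ : X → ℝ) (j : ℕ) (x : X) : ℝ := max 0 (min 1 (2 ^ j * φ x - 1))

lemma cut01 (φ : X → ℝ) (j : ℕ) (x : X) : 0 ≤ cut φ j x ∧ cut φ j x ≤ 1 :=
  ⟨le_max_left _ _, max_le (by norm_num) (min_le_left _ _)⟩

lemma cut_lip {φ : X → ℝ} (hφ : ∀ x y, |φ x - φ y| ≤ dist x y) (j : ℕ) (x y : X) :
    |cut φ j x - cut φ j y| ≤ 2 ^ j * dist x y := by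
  have h : |(2 ^ j * φ x - 1) - (2 ^ j * φ y - 1)| ≤ 2 ^ j * dist x y := by
    have : (2 ^ j * φ x - 1) - (2 ^ j * φ y - 1) = 2 ^ j * (φ x - φ y) := by ring
    rw [this, abs_mul, abs_of_pos (by positivity : (0:ℝ) < 2 ^ j)]
    gcongr; exact hφ x y
  refine (abs_max_sub_max_le_max _ _ _ _).trans ?_
  simp only [sub_self, abs_zero]
  refine max_le (by positivity) ((abs_min_sub_min_le_max _ _ _ _).trans ?_)
  simp only [sub_self, abs_zero]
  exact max_le (by positivity) h

lemma cut_zero {φ : X → ℝ} (j : ℕ) {x : X} (h : 2 ^ j * φ x ≤ 1) : cut φ j x = 0 := by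
  unfold cut; exact max_eq_left ((min_le_right _ _).trans (by linarith))

lemma cut_one {φ : X → ℝ} (j : ℕ) {x : X} (h : 2 ≤ 2 ^ j * φ x) : cut φ j x = 1 := by
  unfold cut; rw [min_eq_left (by linarith)]; norm_num

lemma cut_mono {φ : X → ℝ} (h0 : ∀ x, 0 ≤ φ x) (j : ℕ) (x : X) : cut φ j x ≤ cut φ (j+1) x := by
  unfold cut
  have : (2:ℝ) ^ j * φ x ≤ 2 ^ (j+1) * φ x := by
    have := h0 x
    gcongr <;> norm_num
  gcongr

end LDP

section LDP
variable {μ : Measure X} {Cd CP lam : ℝ}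

lemma lemmaD' [ProperSpace X] (hd : Doubling μ Cd) (hp : Poincare μ CP lam)
    {f : X → ℝ} (hf : ∀ x, |f x| ≤ 1) {q : X → ℝ≥0∞} {W : Set X} (hW : IsOpen W)
    (hq : IsWeakUpperGradientOn μ f q W) (hfin : ∫⁻ x in W, q x ∂μ < ∞) {ε : ℝ} (hε : 0 < ε) :
    AEMeasurable f (μ.restrict W) ∧ ∃ (F : X → ℝ) (q' : X → ℝ≥0∞), LocLipOn F W ∧
      IsWeakUpperGradientOn μ F q' W ∧ ∫⁻ x in W, q' x ∂μ ≤ ∫⁻ x in W, q x ∂μ + ENNReal.ofReal ε ∧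
      ∫⁻ x in W, ENNReal.ofReal |F x - f x| ∂μ ≤ ENNReal.ofReal ε := by
  have := hd.locFin
  obtain ⟨φ, φ1, φ2, φ3, φ4⟩ := exists_phi hW
  have hφc : Continuous φ := (LipschitzWith.of_dist_le_mul (K := 1) (fun x y => by
    simpa [Real.dist_eq] using φ1 x y)).continuous
  set fj : ℕ → X → ℝ := fun j x => cut φ (j+2) x * f x with hfj
  have hfj1 : ∀ j x, |fj j x| ≤ 1 := fun j x => by
    simp only [hfj]
    rw [abs_mul, abs_of_nonneg (cut01 φ _ x).1]
    exact mul_le_one₀ (cut01 φ _ x).2 (abs_nonneg _) (hf x)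
  have hwug : ∀ j : ℕ, IsWeakUpperGradientOn μ (fj j)
      ({x | 1 < 2 ^ (j+2) * φ x}.indicator fun x => q x + ENNReal.ofReal (2 ^ (j+2))) univ := by
    intro j
    refine cutoff_wug hf hW.measurableSet hq hfin (C := {x | 1 ≤ 2 ^ (j+2) * φ x})
      (isOpen_lt continuous_const (by fun_prop)) (isClosed_le continuous_const (by fun_prop))
      (fun x hx => le_of_lt hx) (fun x hx => ?_) (by positivity) (cut_lip φ1 _) (cut01 φ _) (fun x hx => ?_)
    · rw [← φ3]
      by_contra hc
      have : φ x = 0 := le_antisymm (not_lt.1 hc) (φ2 x).1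
      simp only [mem_ofPred_eq, this, mul_zero] at hx
      linarith
    · exact cut_zero _ (not_lt.1 hx)
  have hwfin : ∀ j : ℕ, ∫⁻ x, ({x | 1 < 2 ^ (j+2) * φ x}.indicator fun x => q x + ENNReal.ofReal (2 ^ (j+2))) x ∂μ < ∞ := by
    intro j
    have hO : MeasurableSet {x | 1 < 2 ^ (j+2) * φ x} := (isOpen_lt continuous_const (by fun_prop)).measurableSet
    rw [lintegral_indicator hO, lintegral_add_right _ measurable_const, setLIntegral_const]
    refine ENNReal.add_lt_top.2 ⟨(lintegral_mono_set fun x hx => ?_).trans_lt hfin, ENNReal.mul_lt_top ENNReal.ofReal_lt_top ?_⟩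
    · rw [← φ3]
      by_contra hc
      have : φ x = 0 := le_antisymm (not_lt.1 hc) (φ2 x).1
      simp only [mem_ofPred_eq, this, mul_zero] at hx
      linarith
    · refine ((φ4 (1 / 2 ^ (j+2)) (by positivity)).subset fun x hx => ?_).measure_lt_top
      simp only [mem_ofPred_eq] at hx ⊢
      rw [div_le_iff₀ (by positivity)]; linarith
  have hfm : ∀ j, AEMeasurable (fj j) μ := fun j => lemmaD_meas hd hp (hfj1 j) (hwug j) (hwfin j)
  have hJ : ∀ c > (0:ℝ), ∃ J : ℕ, 2 ≤ 2 ^ J * c := by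
    intro c hc
    obtain ⟨J, hJ⟩ := pow_unbounded_of_one_lt (2 / c) (by norm_num : (1:ℝ) < 2)
    exact ⟨J, by rw [div_lt_iff₀ hc] at hJ; exact hJ.le⟩
  have hJm : ∀ {J j : ℕ} {c : ℝ}, 0 ≤ c → J ≤ j → 2 ≤ 2 ^ J * c → 2 ≤ 2 ^ j * c := by
    intro J j c hc hj h
    refine h.trans ?_
    gcongr; norm_num
  refine ⟨?_, ?_⟩
  · refine aemeasurable_of_tendsto_metrizable_ae atTop (f := fj) (fun j => (hfm j).restrict) ?_
    rw [ae_restrict_iff' hW.measurableSet]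
    refine Eventually.of_forall fun x hx => ?_
    obtain ⟨J, hJx⟩ := hJ _ ((φ3 x).2 hx)
    refine tendsto_const_nhds.congr' ?_
    filter_upwards [eventually_ge_atTop J] with j hj
    simp only [hfj]
    rw [cut_one _ (hJm (φ2 x).1 (by omega) hJx), one_mul]
  have hεj : ∀ j : ℕ, 0 < ε / 2 ^ (j+1) / (1 + 2 ^ (j+2)) := fun j => by positivity
  have hD0 := fun j : ℕ => lemmaD hd hp (hfj1 j) (hwug j) (hwfin j) (hεj j)
  choose F K p a1 a2 a3 a4 a5 a6 using hD0
  set ψ : ℕ → X → ℝ := fun j x => cut φ (j+1) x - cut φ j x with hψ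
  have hψ01 : ∀ j x, 0 ≤ ψ j x ∧ ψ j x ≤ 1 := fun j x => by
    have h1 := cut_mono (fun x => (φ2 x).1) j x
    have h2 := cut01 φ j x
    have h3 := cut01 φ (j+1) x
    simp only [hψ]; constructor <;> linarith
  have hψl : ∀ j x y, |ψ j x - ψ j y| ≤ 2 ^ (j+2) * dist x y := fun j x y => by
    have h1 := cut_lip φ1 j x y
    have h2 := cut_lip φ1 (j+1) x y
    have e : ψ j x - ψ j y = (cut φ (j+1) x - cut φ (j+1) y) - (cut φ j x - cut φ j y) := by
      simp only [hψ]; ring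
    rw [e]
    refine (abs_sub _ _).trans ?_
    have h3 : (0:ℝ) ≤ 2 ^ j * dist x y := by positivity
    rw [pow_succ] at h2
    rw [pow_add]; norm_num; nlinarith
  have hψ0 : ∀ {J j : ℕ} {x : X}, J ≤ j → 2 ≤ 2 ^ J * φ x → ψ j x = 0 := by
    intro J j x hj h
    simp only [hψ]
    rw [cut_one _ (hJm (φ2 x).1 hj h), cut_one _ (hJm (φ2 x).1 (by omega) h), sub_self]
  set D : ℕ → X → ℝ := fun j x => ψ j x * (F j x - fj j x) with hD
  set P : ℕ → X → ℝ≥0∞ := fun j x => p j x + ENNReal.ofReal (2 ^ (j+2)) * ENNReal.ofReal |F j x - fj j x| with hP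
  have hFfm : ∀ j, AEMeasurable (fun x => ENNReal.ofReal |F j x - fj j x|) μ := fun j =>
    (((a1 j).continuous.measurable.aemeasurable.sub (hfm j)).norm).ennreal_ofReal
  have hPm : ∀ j, AEMeasurable (P j) μ := fun j => ((a3 j).aemeasurable.add ((hFfm j).const_mul _))
  have hPi : ∀ j, ∫⁻ x, P j x ∂μ ≤ ENNReal.ofReal (ε / 2 ^ (j+1)) := by
    intro j
    simp only [hP]
    rw [lintegral_add_left (a3 j), lintegral_const_mul'' _ (hFfm j)]
    calc _ ≤ ENNReal.ofReal (ε / 2 ^ (j+1) / (1 + 2 ^ (j+2))) + ENNReal.ofReal (2 ^ (j+2)) * ENNReal.ofReal (ε / 2 ^ (j+1) / (1 + 2 ^ (j+2))) := by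
          gcongr; exact a5 j; exact a6 j
      _ = _ := by
          rw [← ENNReal.ofReal_mul (by positivity), ← ENNReal.ofReal_add (hεj j).le (by positivity)]
          congr 1
          field_simp
  have hDug : ∀ᶠ γ in aeC μ, ∀ j, UGIneq (D j) (P j) γ := by
    refine aeC_all fun j => ?_
    filter_upwards [aeC_finite_borel (a3 j) ((a5 j).trans_lt ENNReal.ofReal_lt_top)] with γ hγ
    have k1 : SUG (fun x => F j x - fj j x) (p j) γ := SUG.of_ug fun s t hs hst ht => a4 j _
    have B := SubUG.blend (v := fun _ => 0) (a := fun _ => 0) γ.len_nonneg (fun s t _ _ _ => by simp) k1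
      (lip_sug (by positivity) (hψl j) γ)
      aemeasurable_const (by simp) (γ.aemeasurable_comp (a3 j)) hγ aemeasurable_const (const_curve_fin γ _) (fun t _ => hψ01 j _)
    have B' := SubUG.mono B (b := fun τ => P j (γ.toFun τ)) (Eventually.of_forall fun τ => by
      simp only [mul_zero, zero_add, zero_sub, abs_neg, hP]
      rw [add_comm, mul_comm (ENNReal.ofReal |_|)]
      gcongr
      refine mul_le_of_le_one_left bot_le ?_
      rw [ENNReal.ofReal_le_one]; exact (hψ01 j _).2)
    have B2 : SUG (D j) (P j) γ := SubUG.congr B' (fun τ _ => by simp [hD])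
    exact B2.ug
  set G : X → ℝ := fun x => ∑' j, ψ j x * F j x with hG
  have hGs : ∀ {J : ℕ} {x : X}, 2 ≤ 2 ^ J * φ x → G x = ∑ j ∈ Finset.range J, ψ j x * F j x := by
    intro J x h
    simp only [hG]
    refine tsum_eq_sum fun j hj => ?_
    rw [hψ0 (by simpa using hj) h, zero_mul]
  have hψf : ∀ j x, ψ j x * fj j x = ψ j x * f x := by
    intro j x
    by_cases h : 2 ^ (j+1) * φ x ≤ 1
    · have h' : 2 ^ j * φ x ≤ 1 := by
        refine le_trans ?_ h
        have := (φ2 x).1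
        gcongr <;> norm_num
      simp only [hψ]; rw [cut_zero _ h, cut_zero _ h']; simp
    · simp only [hfj]
      rw [cut_one (j+2) (by rw [pow_succ] at h ⊢; rw [pow_succ]; nlinarith), one_mul]
  have hGf : ∀ {J : ℕ} {x : X}, 2 ≤ 2 ^ J * φ x → G x - f x = ∑ j ∈ Finset.range J, D j x := by
    intro J x h
    have e : ∑ j ∈ Finset.range J, ψ j x * f x = f x := by
      rw [← Finset.sum_mul, Finset.sum_range_sub (fun j => cut φ j x), cut_one _ h,
        cut_zero 0 (by simpa using (φ2 x).2)]
      ring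
    rw [hGs h]
    conv_lhs => rw [← e]
    rw [← Finset.sum_sub_distrib]
    refine Finset.sum_congr rfl fun j _ => ?_
    simp only [hD]; rw [mul_sub, hψf]
  have hSm : AEMeasurable (fun x => ∑' j, P j x) μ := AEMeasurable.tsum hPm
  have hgeo : ∑' j : ℕ, ENNReal.ofReal (ε / 2 ^ (j+1)) = ENNReal.ofReal ε := by
    have hs : HasSum (fun j : ℕ => ε / 2 ^ (j+1)) ε := by
      have := (hasSum_geometric_two' ε)
      have e : (fun j : ℕ => ε / 2 ^ (j+1)) = fun n : ℕ => ε / 2 / 2 ^ n := by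
        funext j; rw [pow_succ]; field_simp
      rw [e]; exact this
    rw [← ENNReal.ofReal_tsum_of_nonneg (fun n => by positivity) hs.summable, hs.tsum_eq]
  refine ⟨G, fun x => q x + ∑' j, P j x, ?_, ?_, ?_, ?_⟩
  · intro x hx
    have hx' := (φ3 x).2 hx
    obtain ⟨J, hJx⟩ := hJ (φ x / 2) (by positivity)
    refine ⟨φ x / 2, by positivity, ∑ j ∈ Finset.range J, (2 ^ (j+2) + K j), ?_⟩
    refine LipschitzOnWith.of_dist_le_mul fun y hy z hz => ?_
    have hb : ∀ y ∈ W ∩ ball x (φ x / 2), 2 ≤ 2 ^ J * φ y := by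
      intro y hy
      refine hJx.trans ?_
      gcongr
      have := φ1 y x
      have h2 := hy.2
      rw [mem_ball] at h2
      rw [abs_le] at this
      linarith
    rw [Real.dist_eq, hGs (hb y hy), hGs (hb z hz), ← Finset.sum_sub_distrib]
    refine (Finset.abs_sum_le_sum_abs _ _).trans ?_
    push_cast
    rw [Finset.sum_mul]
    refine Finset.sum_le_sum fun j _ => ?_
    have e : ψ j y * F j y - ψ j z * F j z = (ψ j y - ψ j z) * F j y + ψ j z * (F j y - F j z) := by ring
    rw [e, add_mul]
    refine (abs_add_le _ _).trans (add_le_add ?_ ?_)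
    · rw [abs_mul]
      exact (mul_le_of_le_one_right (abs_nonneg _) (a2 j y)).trans (hψl j y z)
    · rw [abs_mul, abs_of_nonneg (hψ01 j z).1]
      refine (mul_le_of_le_one_left (abs_nonneg _) (hψ01 j z).2).trans ?_
      have := (a1 j).dist_le_mul y z
      rwa [Real.dist_eq] at this
  · refine wug_of_ug (hq.1.add hSm) ?_
    filter_upwards [(wug_iff.1 hq).2, hDug, aeC_aemeasurable hq.1, aeC_all fun j => aeC_aemeasurable (hPm j)] with γ h1 h2 h3 h4 hγ
    have hcomp : IsCompact (γ.toFun '' Icc 0 γ.len) := isCompact_Icc.image_of_continuousOn γ.continuousOn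
    obtain ⟨y, ⟨t₀, ht₀, rfl⟩, hy⟩ := hcomp.exists_isMinOn ⟨_, mem_image_of_mem _ (left_mem_Icc.2 γ.len_nonneg)⟩ hφc.continuousOn
    obtain ⟨J, hJx⟩ := hJ _ ((φ3 _).2 (hγ t₀ ht₀))
    have hb : ∀ t ∈ Icc 0 γ.len, 2 ≤ 2 ^ J * φ (γ.toFun t) := by
      intro t ht
      refine hJx.trans ?_
      gcongr
      exact hy (mem_image_of_mem _ ht)
    have l0 := left_mem_Icc.2 γ.len_nonneg
    have l1 := right_mem_Icc.2 γ.len_nonneg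
    unfold UGIneq Curve.integral
    rw [lintegral_add_left' h3]
    have e : G (γ.toFun 0) - G (γ.toFun γ.len) = (f (γ.toFun 0) - f (γ.toFun γ.len)) +
        ∑ j ∈ Finset.range J, (D j (γ.toFun 0) - D j (γ.toFun γ.len)) := by
      rw [Finset.sum_sub_distrib, ← hGf (hb _ l0), ← hGf (hb _ l1)]; ring
    rw [e]
    refine (ofReal_abs_add_le _ _).trans (add_le_add (h1 hγ).ug ?_)
    rw [lintegral_tsum h4]
    calc _ ≤ ENNReal.ofReal (∑ j ∈ Finset.range J, |D j (γ.toFun 0) - D j (γ.toFun γ.len)|) :=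
          ENNReal.ofReal_le_ofReal (Finset.abs_sum_le_sum_abs _ _)
      _ = ∑ j ∈ Finset.range J, ENNReal.ofReal |D j (γ.toFun 0) - D j (γ.toFun γ.len)| :=
          ENNReal.ofReal_sum_of_nonneg fun _ _ => abs_nonneg _
      _ ≤ ∑ j ∈ Finset.range J, γ.integral (P j) := Finset.sum_le_sum fun j _ => h2 j
      _ ≤ _ := ENNReal.sum_le_tsum _
  · rw [lintegral_add_left' hq.1.restrict, lintegral_tsum fun j => (hPm j).restrict]
    gcongr
    rw [← hgeo]
    exact ENNReal.tsum_le_tsum fun j => (setLIntegral_le_lintegral _ _).trans (hPi j)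
  · calc _ ≤ ∫⁻ x in W, ∑' j, ENNReal.ofReal |F j x - fj j x| ∂μ := by
          refine setLIntegral_mono' hW.measurableSet fun x hx => ?_
          obtain ⟨J, hJx⟩ := hJ _ ((φ3 x).2 hx)
          rw [hGf hJx]
          calc _ ≤ ENNReal.ofReal (∑ j ∈ Finset.range J, |D j x|) :=
                ENNReal.ofReal_le_ofReal (Finset.abs_sum_le_sum_abs _ _)
            _ = ∑ j ∈ Finset.range J, ENNReal.ofReal |D j x| :=
                ENNReal.ofReal_sum_of_nonneg fun _ _ => abs_nonneg _
            _ ≤ ∑ j ∈ Finset.range J, ENNReal.ofReal |F j x - fj j x| := by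
                refine Finset.sum_le_sum fun j _ => ENNReal.ofReal_le_ofReal ?_
                simp only [hD]
                rw [abs_mul, abs_of_nonneg (hψ01 j x).1]
                exact mul_le_of_le_one_left (abs_nonneg _) (hψ01 j x).2
            _ ≤ _ := ENNReal.sum_le_tsum _
      _ = ∑' j, ∫⁻ x in W, ENNReal.ofReal |F j x - fj j x| ∂μ := lintegral_tsum fun j => (hFfm j).restrict
      _ ≤ ∑' j : ℕ, ENNReal.ofReal (ε / 2 ^ (j+1)) := by
          refine ENNReal.tsum_le_tsum fun j => (setLIntegral_le_lintegral _ _).trans ((a6 j).trans (ENNReal.ofReal_le_ofReal ?_))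
          refine div_le_self (by positivity) ?_
          have : (0:ℝ) ≤ 2 ^ (j+2) := by positivity
          linarith
      _ = _ := hgeo
end LDP

section QO
variable {μ : Measure X} {Cd CP lam : ℝ}

structure CapSeq (μ : Measure X) (U : Set X) (G : ℕ → Set X) (η : ℕ → X → ℝ)
    (q : ℕ → X → ℝ≥0∞) : Prop where
  oG : ∀ m, IsOpen (G m)
  oU : ∀ m, IsOpen (U ∪ G m)
  h01 : ∀ m x, 0 ≤ η m x ∧ η m x ≤ 1
  one : ∀ m, ∀ x ∈ G m, η m x = 1
  wug : ∀ m, IsWeakUpperGradientOn μ (η m) (q m) univ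
  meas : ∀ m, AEMeasurable (η m) μ
  iη : ∀ m, ∫⁻ x, ENNReal.ofReal (η m x) ∂μ ≤ ENNReal.ofReal ((1/2) ^ m)
  iq : ∀ m, ∫⁻ x, q m x ∂μ ≤ ENNReal.ofReal ((1/2) ^ m)

lemma cap_fun [ProperSpace X] (hd : Doubling μ Cd) (hp : Poincare μ CP lam) {U : Set X}
    (hU : QuasiOpen μ U) {ε : ℝ} (hε : 0 < ε) :
    ∃ (G : Set X) (η : X → ℝ) (q : X → ℝ≥0∞), IsOpen G ∧ IsOpen (U ∪ G) ∧
      (∀ x, 0 ≤ η x ∧ η x ≤ 1) ∧ (∀ x ∈ G, η x = 1) ∧ IsWeakUpperGradientOn μ η q univ ∧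
      AEMeasurable η μ ∧ ∫⁻ x, ENNReal.ofReal (η x) ∂μ ≤ ENNReal.ofReal ε ∧
      ∫⁻ x, q x ∂μ ≤ ENNReal.ofReal ε := by
  obtain ⟨G, h1, h2, h3⟩ := hU ε hε
  unfold capa1 at h2
  simp only [iInf_lt_iff] at h2
  obtain ⟨u, -, hu1, hu2⟩ := h2
  unfold NNorm at hu2
  simp only [Measure.restrict_univ] at hu2
  have hA : ∫⁻ x, ENNReal.ofReal |u x| ∂μ < ENNReal.ofReal ε := lt_of_le_of_lt le_self_add hu2
  have hB := lt_tsub_iff_left.2 hu2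
  simp only [iInf_lt_iff] at hB
  obtain ⟨q, hq, hB⟩ := hB
  have hB' : ∫⁻ x, q x ∂μ ≤ ENNReal.ofReal ε := hB.le.trans tsub_le_self
  have hl : ∀ a b : ℝ, |max 0 (min 1 a) - max 0 (min 1 b)| ≤ |a - b| := by
    intro a b
    refine (abs_max_sub_max_le_max _ _ _ _).trans ?_
    simp only [sub_self, abs_zero]
    refine max_le (abs_nonneg _) ((abs_min_sub_min_le_max _ _ _ _).trans ?_)
    simp
  have hw := hq.comp_lip (fun a => max 0 (min 1 a)) hl
  have h01 : ∀ x, 0 ≤ max 0 (min 1 (u x)) ∧ max 0 (min 1 (u x)) ≤ 1 := fun x =>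
    ⟨le_max_left _ _, max_le (by norm_num) (min_le_left _ _)⟩
  refine ⟨G, fun x => max 0 (min 1 (u x)), q, h1, h3, h01, fun x hx => ?_, hw, ?_, ?_, hB'⟩
  · have := hu1 x hx
    simp [this]
  · refine lemmaD_meas hd hp (fun x => ?_) hw (hB'.trans_lt ENNReal.ofReal_lt_top)
    rw [abs_of_nonneg (h01 x).1]; exact (h01 x).2
  · refine le_trans (lintegral_mono fun x => ENNReal.ofReal_le_ofReal ?_) hA.le
    exact max_le (abs_nonneg _) ((min_le_right _ _).trans (le_abs_self _))

lemma exists_capSeq [ProperSpace X] (hd : Doubling μ Cd) (hp : Poincare μ CP lam) {U : Set X}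
    (hU : QuasiOpen μ U) : ∃ G η q, CapSeq μ U G η q := by
  have := fun m : ℕ => cap_fun hd hp hU (ε := (1/2)^m) (by positivity)
  choose G η q h1 h2 h3 h4 h5 h6 h7 h8 using this
  exact ⟨G, η, q, h1, h2, h3, h4, h5, h6, h7, h8⟩

lemma tend_half : Tendsto (fun m : ℕ => ENNReal.ofReal ((1/2) ^ m)) atTop (𝓝 0) := by
  have := ENNReal.tendsto_ofReal (tendsto_pow_atTop_nhds_zero_of_lt_one (r := (1/2:ℝ)) (by norm_num) (by norm_num))
  simpa using this

variable {U : Set X} {G : ℕ → Set X} {η : ℕ → X → ℝ} {q : ℕ → X → ℝ≥0∞}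

lemma CapSeq.nullMeas (h : CapSeq μ U G η q) : NullMeasurableSet U μ := by
  have hG : ∀ m, μ (G m) ≤ ENNReal.ofReal ((1/2) ^ m) := fun m => by
    refine le_trans ?_ (h.iη m)
    rw [← lintegral_indicator_one (h.oG m).measurableSet]
    refine lintegral_mono fun x => ?_
    by_cases hx : x ∈ G m
    · simp [hx, h.one m x hx]
    · simp [hx]
  have h0 : μ (⋂ m, G m) = 0 := by
    refine le_antisymm ?_ bot_le
    exact ge_of_tendsto' tend_half fun m => (measure_mono (iInter_subset _ m)).trans (hG m)
  have hM : MeasurableSet (⋂ m, U ∪ G m) := MeasurableSet.iInter fun m => (h.oU m).measurableSet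
  refine NullMeasurableSet.congr hM.nullMeasurableSet ?_
  refine (ae_eq_set.2 ⟨?_, ?_⟩)
  · refine measure_mono_null ?_ h0
    rintro x ⟨hx, hxU⟩
    rw [mem_iInter] at hx ⊢
    exact fun m => (hx m).resolve_left hxU
  · refine measure_mono_null (t := ∅) ?_ (by simp)
    rintro x ⟨hx, hxU⟩
    exact hxU (mem_iInter.2 fun m => Or.inl hx)

lemma CapSeq.miss (h : CapSeq μ U G η q) :
    ∀ᶠ γ in aeC μ, 0 < γ.len → ∃ m, ∀ t ∈ Icc 0 γ.len, γ.toFun t ∉ G m := by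
  have hm : ∀ m, AEMeasurable (fun x => ENNReal.ofReal (η m x) + q m x) μ := fun m =>
    (h.meas m).ennreal_ofReal.add (h.wug m).1
  have hfin : ∫⁻ x, ∑' m, (ENNReal.ofReal (η m x) + q m x) ∂μ < ∞ := by
    rw [lintegral_tsum hm]
    have : ∀ m, ∫⁻ x, (ENNReal.ofReal (η m x) + q m x) ∂μ ≤ 2 * ENNReal.ofReal ((1/2) ^ m) := fun m => by
      rw [lintegral_add_right' _ (h.wug m).1, two_mul]
      exact add_le_add (h.iη m) (h.iq m)
    refine (ENNReal.tsum_le_tsum this).trans_lt ?_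
    rw [ENNReal.tsum_mul_left, ← ENNReal.ofReal_tsum_of_nonneg (fun n => by positivity) summable_geometric_two]
    exact ENNReal.mul_lt_top (by simp) ENNReal.ofReal_lt_top
  filter_upwards [aeC_finite (AEMeasurable.tsum hm) hfin,
    aeC_all fun m => aeC_aemeasurable (hm m), aeC_all fun m => aeC_aemeasurable (h.wug m).1,
    aeC_all fun m => (wug_iff.1 (h.wug m)).2] with γ k1 k2 k2' k3 hL
  by_contra hc
  push Not at hc
  unfold Curve.integral at k1
  rw [lintegral_tsum k2] at k1
  have k4 := ENNReal.tendsto_atTop_zero_of_tsum_ne_top k1.ne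
  have k5 : ∀ m, ENNReal.ofReal γ.len ≤ (1 + ENNReal.ofReal γ.len) *
      ∫⁻ t in Icc (0:ℝ) γ.len, (ENNReal.ofReal (η m (γ.toFun t)) + q m (γ.toFun t)) := by
    intro m
    obtain ⟨t0, ht0, hG⟩ := hc m
    have s1 : ∀ t ∈ Icc (0:ℝ) γ.len, 1 ≤ ENNReal.ofReal (η m (γ.toFun t)) + γ.integral (q m) := by
      intro t ht
      have hs := k3 m (fun _ _ => mem_univ _)
      have e : ENNReal.ofReal |η m (γ.toFun t0) - η m (γ.toFun t)| ≤ γ.integral (q m) := by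
        rcases le_total t0 t with hle | hle
        · exact (hs t0 t ht0.1 hle ht.2).trans (lintegral_mono_set (Icc_subset_Icc ht0.1 ht.2))
        · rw [abs_sub_comm]
          exact (hs t t0 ht.1 hle ht0.2).trans (lintegral_mono_set (Icc_subset_Icc ht.1 ht0.2))
      refine le_trans ?_ (add_le_add le_rfl e)
      rw [← ENNReal.ofReal_add (h.h01 m _).1 (abs_nonneg _), ← ENNReal.ofReal_one]
      refine ENNReal.ofReal_le_ofReal ?_
      rw [h.one m _ hG]
      linarith [le_abs_self (1 - η m (γ.toFun t))]
    have s2 : ENNReal.ofReal γ.len ≤ ∫⁻ t in Icc (0:ℝ) γ.len, (ENNReal.ofReal (η m (γ.toFun t)) + γ.integral (q m)) := by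
      calc ENNReal.ofReal γ.len = ∫⁻ t in Icc (0:ℝ) γ.len, 1 := by simp
        _ ≤ _ := setLIntegral_mono' measurableSet_Icc s1
    refine s2.trans ?_
    rw [lintegral_add_right _ measurable_const, setLIntegral_const, Real.volume_Icc, sub_zero,
      lintegral_add_right' _ (k2' m)]
    change _ + γ.integral (q m) * _ ≤ _ * (_ + γ.integral (q m))
    set A := ∫⁻ t in Icc (0:ℝ) γ.len, ENNReal.ofReal (η m (γ.toFun t))
    rw [add_mul, one_mul, mul_add, mul_comm (γ.integral (q m))]
    exact add_le_add le_self_add le_add_self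
  have k6 := ENNReal.Tendsto.const_mul k4 (a := 1 + ENNReal.ofReal γ.len)
    (Or.inr (ENNReal.add_ne_top.2 ⟨by simp, by simp⟩))
  rw [mul_zero] at k6
  have := ge_of_tendsto' k6 k5
  simp at this
  linarith

lemma wug_mono_on {f : X → ℝ} {g g' : X → ℝ≥0∞} {A : Set X} (h : IsWeakUpperGradientOn μ f g A)
    (hg' : AEMeasurable g' μ) (hle : ∀ x ∈ A, g x ≤ g' x) : IsWeakUpperGradientOn μ f g' A := by
  refine ⟨hg', h.2.mono ?_⟩
  rintro γ ⟨h1, h2⟩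
  refine ⟨h1, fun h3 => h2 (le_trans h3 ?_)⟩
  exact setLIntegral_mono' measurableSet_Icc fun t ht => hle _ (h1 t ht)

lemma wug_congr {f f' : X → ℝ} {g : X → ℝ≥0∞} {A : Set X} (h : IsWeakUpperGradientOn μ f g A)
    (hle : ∀ x ∈ A, f x = f' x) : IsWeakUpperGradientOn μ f' g A := by
  refine ⟨h.1, h.2.mono ?_⟩
  rintro γ ⟨h1, h2⟩
  refine ⟨h1, fun h3 => h2 ?_⟩
  unfold UGIneq at h3 ⊢
  rwa [hle _ (h1 0 ⟨le_rfl, γ.len_nonneg⟩), hle _ (h1 γ.len ⟨γ.len_nonneg, le_rfl⟩)] at h3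

lemma wug_blend {v w η : X → ℝ} {a b c : X → ℝ≥0∞} {A : Set X} (hA : NullMeasurableSet A μ)
    (hv : IsWeakUpperGradientOn μ v a A) (hw : IsWeakUpperGradientOn μ w b A)
    (hη : IsWeakUpperGradientOn μ η c A) (ha : ∫⁻ x in A, a x ∂μ < ∞) (hb : ∫⁻ x in A, b x ∂μ < ∞)
    (hc : ∫⁻ x in A, c x ∂μ < ∞) (h01 : ∀ x, 0 ≤ η x ∧ η x ≤ 1) (hηm : AEMeasurable η μ)
    (h2 : ∀ x, |v x - w x| ≤ 2) :
    IsWeakUpperGradientOn μ (fun x => (1 - η x) * v x + η x * w x)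
      (fun x => ENNReal.ofReal (1 - η x) * a x + 2 * c x + ENNReal.ofReal (η x) * b x) A := by
  refine wug_of_ug ?_ ?_
  · exact (((aemeasurable_const.sub hηm).ennreal_ofReal.mul hv.1).add (hη.1.const_mul 2)).add
      (hηm.ennreal_ofReal.mul hw.1)
  filter_upwards [(wug_iff.1 hv).2, (wug_iff.1 hw).2, (wug_iff.1 hη).2, aeC_finite_on hv.1 hA ha,
    aeC_finite_on hw.1 hA hb, aeC_finite_on hη.1 hA hc, aeC_aemeasurable hv.1, aeC_aemeasurable hw.1,
    aeC_aemeasurable hη.1] with γ k1 k2 k3 k4 k5 k6 k7 k8 k9 hγ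
  have e : ∀ g : X → ℝ≥0∞, γ.integral (A.indicator g) = γ.integral g := fun g =>
    setLIntegral_congr_fun measurableSet_Icc fun τ hτ => indicator_of_mem (hγ τ hτ) g
  rw [e] at k4 k5 k6
  have B := SubUG.blend γ.len_nonneg (k1 hγ) (k2 hγ) (k3 hγ) k7 k4 k8 k5 k9 k6 (fun t _ => h01 _)
  have B' : SUG (fun x => (1 - η x) * v x + η x * w x)
      (fun x => ENNReal.ofReal (1 - η x) * a x + 2 * c x + ENNReal.ofReal (η x) * b x) γ := by
    refine SubUG.mono B (Eventually.of_forall fun τ => ?_)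
    refine add_le_add (add_le_add le_rfl ?_) le_rfl
    refine mul_le_mul' ?_ le_rfl
    exact (ENNReal.ofReal_le_ofReal (h2 _)).trans (by simp)
  exact B'.ug

lemma wug_glue {f : X → ℝ} {Q : X → ℝ≥0∞} {G₀ W : Set X} (hcs : CapSeq μ U G η q)
    (hU : IsWeakUpperGradientOn μ f Q U) (hG : IsWeakUpperGradientOn μ f Q G₀) (hG₀ : IsOpen G₀)
    (hW : W ⊆ U ∪ G₀) : IsWeakUpperGradientOn μ f Q W := by
  refine wug_of_ug hU.1 ?_
  filter_upwards [hcs.miss, aeC_sub (wug_iff.1 hU).2, aeC_sub (wug_iff.1 hG).2] with γ k1 k2 k3 hγ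
  rcases γ.len_nonneg.eq_or_lt with hL | hL
  · unfold UGIneq; simp [← hL]
  obtain ⟨m, hm⟩ := k1 hL
  have hco : Continuous (fun t : Icc (0:ℝ) γ.len => γ.toFun t) := γ.continuousOn.domRestrict
  let c : Bool → Set (Icc (0:ℝ) γ.len) := fun b =>
    if b then (fun t : Icc (0:ℝ) γ.len => γ.toFun t) ⁻¹' (U ∪ G m) else (fun t : Icc (0:ℝ) γ.len => γ.toFun t) ⁻¹' G₀
  obtain ⟨τ, h0, hmono, ⟨M, hM⟩, hsub⟩ := exists_monotone_Icc_subset_open_cover_Icc γ.len_nonneg (c := c)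
    (by
      intro b
      cases b
      · exact hG₀.preimage hco
      · exact (hcs.oU m).preimage hco)
    (by
      intro t _
      rw [mem_iUnion]
      rcases hW (hγ t t.2) with h | h
      · exact ⟨true, Or.inl h⟩
      · exact ⟨false, h⟩)
  have step : ∀ n, ENNReal.ofReal |f (γ.toFun (τ n)) - f (γ.toFun (τ (n+1)))| ≤
      ∫⁻ t in Icc (τ n : ℝ) (τ (n+1)), Q (γ.toFun t) := by
    intro n
    have hle : (τ n : ℝ) ≤ τ (n+1) := hmono (Nat.le_succ n)
    obtain ⟨b, hb⟩ := hsub n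
    have fin : SUG f Q (γ.sub (τ n) (τ (n+1)) (τ n).2.1 hle (τ (n+1)).2.2) := by
      have hmem : ∀ s ∈ Icc (0:ℝ) (γ.sub (τ n) (τ (n+1)) (τ n).2.1 hle (τ (n+1)).2.2).len,
          ∃ hs : (τ n : ℝ) + s ∈ Icc (0:ℝ) γ.len, (⟨(τ n : ℝ) + s, hs⟩ : Icc (0:ℝ) γ.len) ∈ c b := by
        intro s hs
        have h2 : s ≤ τ (n+1) - τ n := hs.2
        have hs' : (τ n : ℝ) + s ∈ Icc (0:ℝ) γ.len :=
          ⟨by linarith [(τ n).2.1, hs.1], by linarith [(τ (n+1)).2.2]⟩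
        refine ⟨hs', hb ⟨?_, ?_⟩⟩
        · change (τ n : ℝ) ≤ τ n + s
          linarith [hs.1]
        · change (τ n : ℝ) + s ≤ τ (n+1)
          linarith
      cases b
      · refine k3 _ _ _ _ _ fun s hs => ?_
        obtain ⟨_, h⟩ := hmem s hs
        exact h
      · refine k2 _ _ _ _ _ fun s hs => ?_
        obtain ⟨h', h⟩ := hmem s hs
        exact Or.resolve_right h (hm _ h')
    have := fin.ug
    unfold UGIneq at this
    rw [γ.integral_sub] at this
    simpa [Curve.sub] using this
  have ind : ∀ n, ENNReal.ofReal |f (γ.toFun (τ 0)) - f (γ.toFun (τ n))| ≤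
      ∫⁻ t in Icc (τ 0 : ℝ) (τ n), Q (γ.toFun t) := by
    intro n
    induction n with
    | zero => simp
    | succ n ih =>
      exact ugl_trans (h := fun t => f (γ.toFun t)) (a := fun t => Q (γ.toFun t))
        (hmono (Nat.zero_le n)) (hmono (Nat.le_succ n)) ih (step n)
  have := ind M
  rw [hM M le_rfl, h0] at this
  exact this

end QO

section TV
variable {μ : Measure X} {Cd CP lam : ℝ}

lemma L1LocConv.of_le {A : Set X} {f v : ℕ → X → ℝ} {u : X → ℝ} (h : L1LocConv μ A v u)
    {e : ℕ → X → ℝ≥0∞} (hem : ∀ i, AEMeasurable (e i) (μ.restrict A))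
    (he : Tendsto (fun i => ∫⁻ x in A, e i x ∂μ) atTop (𝓝 0))
    (hle : ∀ i y, ENNReal.ofReal |f i y - u y| ≤ ENNReal.ofReal |v i y - u y| + e i y) :
    L1LocConv μ A f u := by
  intro x hx
  obtain ⟨r, hr, H⟩ := h x hx
  refine ⟨r, hr, ?_⟩
  have H' := H.add he
  rw [add_zero] at H'
  refine tendsto_of_tendsto_of_tendsto_of_le_of_le tendsto_const_nhds H' (fun _ => bot_le) fun i => ?_
  calc ∫⁻ y in A ∩ ball x r, ENNReal.ofReal |f i y - u y| ∂μ
      ≤ ∫⁻ y in A ∩ ball x r, (ENNReal.ofReal |v i y - u y| + e i y) ∂μ := lintegral_mono fun y => hle i y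
    _ = ∫⁻ y in A ∩ ball x r, ENNReal.ofReal |v i y - u y| ∂μ + ∫⁻ y in A ∩ ball x r, e i y ∂μ :=
        lintegral_add_right' _ ((hem i).mono_measure (Measure.restrict_mono inter_subset_left le_rfl))
    _ ≤ _ := add_le_add le_rfl (lintegral_mono_set inter_subset_left)

lemma L1LocConv.subseq {A : Set X} {v : ℕ → X → ℝ} {u : X → ℝ} (h : L1LocConv μ A v u)
    {φ : ℕ → ℕ} (hφ : Tendsto φ atTop atTop) : L1LocConv μ A (fun i => v (φ i)) u := by
  intro x hx
  obtain ⟨r, hr, H⟩ := h x hx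
  exact ⟨r, hr, H.comp hφ⟩

lemma LocLipOn.continuousOn {f : X → ℝ} {W : Set X} (h : LocLipOn f W) : ContinuousOn f W := by
  intro x hx
  obtain ⟨r, hr, K, hK⟩ := h x hx
  refine (hK.continuousOn x ⟨hx, mem_ball_self hr⟩).mono_of_mem_nhdsWithin ?_
  exact inter_mem self_mem_nhdsWithin (mem_nhdsWithin_of_mem_nhds (ball_mem_nhds x hr))

lemma tvOpen_le' [ProperSpace X] (hd : Doubling μ Cd) (hp : Poincare μ CP lam) {W : Set X}
    (hW : IsOpen W) {f : ℕ → X → ℝ} (hf : ∀ i x, |f i x| ≤ 1) {Q : ℕ → X → ℝ≥0∞}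
    (hQ : ∀ i, IsWeakUpperGradientOn μ (f i) (Q i) W) {c : ℝ≥0∞} (hc : c < ∞)
    (hle : ∀ i, ∫⁻ x in W, Q i x ∂μ ≤ c) {u : X → ℝ} (hconv : L1LocConv μ W f u) :
    tvOpen μ W u ≤ c := by
  have := hd.locFin
  refine ENNReal.le_of_forall_pos_le_add fun ε hε _ => ?_
  have := fun i : ℕ => lemmaD' hd hp (hf i) hW (hQ i) ((hle i).trans_lt hc)
    (ε := (ε:ℝ) / (i + 1)) (by positivity)
  choose hfm F q' h1 h2 h3 h4 using this
  have := fun i => exists_minimalWUG μ hW.nullMeasurableSet (F i)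
  choose g hg using this
  have hcv : L1LocConv μ W F u := by
    refine L1LocConv.of_le (e := fun i x => ENNReal.ofReal |F i x - f i x|) hconv (fun i => ?_) ?_ ?_
    · have m1 := (h1 i).continuousOn.aemeasurable (μ := μ) hW.measurableSet
      have m2 : AEMeasurable (fun x => ‖F i x - f i x‖) (μ.restrict W) := (m1.sub (hfm i)).norm
      exact m2.ennreal_ofReal
    · refine tendsto_of_tendsto_of_tendsto_of_le_of_le tendsto_const_nhds ?_ (fun _ => bot_le) h4
      have := ENNReal.tendsto_ofReal (tendsto_const_div_atTop_nhds_zero_nat (ε:ℝ))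
      rw [ENNReal.ofReal_zero] at this
      have := (tendsto_add_atTop_iff_nat 1).2 this
      simpa using this
    · intro i y
      have := ofReal_abs_add_le (f i y - u y) (F i y - f i y)
      refine le_trans (le_of_eq ?_) this
      congr 2; ring
  unfold tvOpen
  refine (iInf₂_le F g).trans ((iInf₂_le h1 hg).trans ((iInf_le _ hcv).trans ?_))
  refine liminf_le_of_frequently_le' (Frequently.of_forall fun i => ?_)
  refine ((hg i).lintegral_le (h2 i)).trans ((h3 i).trans (add_le_add (hle i) ?_))
  rw [← ENNReal.ofReal_coe_nnreal]
  refine ENNReal.ofReal_le_ofReal (div_le_self ε.2 ?_)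
  have : (0:ℝ) ≤ i := by positivity
  linarith

variable {U : Set X} {G : ℕ → Set X} {η : ℕ → X → ℝ} {q : ℕ → X → ℝ≥0∞}

lemma eta_small [ProperSpace X] (hd : Doubling μ Cd) (hp : Poincare μ CP lam)
    (hcs : CapSeq μ U G η q) {Ω : Set X} (hΩ : IsOpen Ω) {u : X → ℝ} (hT : tvOpen μ Ω u < ∞)
    {δ : ℝ} (hδ : 0 < δ) {w : ℕ → X → ℝ} {gw : ℕ → X → ℝ≥0∞} (hw1 : ∀ k x, |w k x| ≤ 1)
    (hw : ∀ k, IsWeakUpperGradientOn μ (w k) (gw k) Ω) (hconv : L1LocConv μ Ω w u)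
    (hle : ∀ k, ∫⁻ x in Ω, gw k x ∂μ ≤ tvOpen μ Ω u + ENNReal.ofReal δ) (N : ℕ) :
    ∃ n ≥ N, ∃ᶠ k in atTop, ∫⁻ x in Ω, ENNReal.ofReal (η n x) * gw k x ∂μ ≤ ENNReal.ofReal (2 * δ) := by
  by_contra hcon
  push Not at hcon
  have hN1 : ∀ᶠ n : ℕ in atTop, 2 * ENNReal.ofReal ((1/2) ^ n) ≤ ENNReal.ofReal (δ / 2) := by
    have := ENNReal.Tendsto.const_mul tend_half (a := 2) (Or.inr (by simp))
    rw [mul_zero] at this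
    exact this.eventually_le_const (by simpa using hδ)
  obtain ⟨N', hN'⟩ := eventually_atTop.1 (hN1.and (eventually_ge_atTop N))
  have : ∀ j : ℕ, ∃ k ≥ j, ENNReal.ofReal (2 * δ) < ∫⁻ x in Ω, ENNReal.ofReal (η (N' + j) x) * gw k x ∂μ := by
    intro j
    have h1 := hcon (N' + j) (hN' _ (Nat.le_add_right _ _)).2
    obtain ⟨k, h2, h3⟩ := (h1.and (eventually_ge_atTop j)).exists
    exact ⟨k, h3, h2⟩
  choose k hk1 hk2 using this
  have hktend : Tendsto k atTop atTop := tendsto_atTop_mono hk1 tendsto_id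
  have hnt : Tendsto (fun j => N' + j) atTop atTop := tendsto_atTop_mono (fun j => Nat.le_add_left _ _) tendsto_id
  set T := tvOpen μ Ω u with hTdef
  have hfin : T + ENNReal.ofReal δ < ∞ := ENNReal.add_lt_top.2 ⟨hT, ENNReal.ofReal_lt_top⟩
  set c := (T + ENNReal.ofReal δ - ENNReal.ofReal (2 * δ)) + ENNReal.ofReal (δ / 2) with hc
  have hqΩ : ∀ m, ∫⁻ x in Ω, q m x ∂μ ≤ ENNReal.ofReal ((1/2) ^ m) := fun m =>
    (setLIntegral_le_lintegral _ _).trans (hcs.iq m)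
  have key : T ≤ c := by
    refine tvOpen_le' hd hp hΩ (f := fun j x => (1 - η (N' + j) x) * w (k j) x + η (N' + j) x * 0)
      (Q := fun j x => ENNReal.ofReal (1 - η (N' + j) x) * gw (k j) x + 2 * q (N' + j) x
        + ENNReal.ofReal (η (N' + j) x) * 0) (fun j x => ?_) (fun j => ?_) ?_ (fun j => ?_) ?_
    · rw [mul_zero, add_zero, abs_mul]
      have := hcs.h01 (N' + j) x
      rw [abs_of_nonneg (by linarith)]
      nlinarith [hw1 (k j) x, abs_nonneg (w (k j) x)]
    · refine wug_blend hΩ.nullMeasurableSet (hw _) (b := fun _ => 0) (w := fun _ => 0) ?_ ((hcs.wug _).mono_set (subset_univ _))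
        ((hle _).trans_lt hfin) (by simp) ((hqΩ _).trans_lt ENNReal.ofReal_lt_top) (hcs.h01 _) (hcs.meas _) ?_
      · exact wug_of_ug aemeasurable_const (Eventually.of_forall fun γ _ => by simp [UGIneq])
      · intro x; have := hw1 (k j) x; simp only [sub_zero]; linarith
    · exact ENNReal.add_lt_top.2 ⟨tsub_le_self.trans_lt hfin, ENNReal.ofReal_lt_top⟩
    · simp only [mul_zero, add_zero]
      rw [lintegral_add_right' _ ((hcs.wug _).1.const_mul 2).restrict, lintegral_const_mul'' _ (hcs.wug _).1.restrict]
      refine add_le_add ?_ ?_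
      · refine ENNReal.le_sub_of_add_le_right ENNReal.ofReal_ne_top ?_
        refine le_trans (add_le_add le_rfl (hk2 j).le) (le_trans (le_of_eq ?_) (hle (k j)))
        have hmm : AEMeasurable (fun x => ENNReal.ofReal (η (N' + j) x) * gw (k j) x) (μ.restrict Ω) :=
          ((hcs.meas _).ennreal_ofReal.mul (hw (k j)).1).restrict
        rw [← lintegral_add_right' _ hmm]
        refine lintegral_congr fun x => ?_
        have := hcs.h01 (N' + j) x
        rw [← add_mul, ← ENNReal.ofReal_add (by linarith) this.1, sub_add_cancel, ENNReal.ofReal_one, one_mul]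
      · refine le_trans ?_ (hN' (N' + j) (Nat.le_add_right _ _)).1
        gcongr
        exact hqΩ _
    · refine L1LocConv.of_le (e := fun j x => ENNReal.ofReal (η (N' + j) x)) (hconv.subseq hktend)
        (fun j => (hcs.meas _).ennreal_ofReal.restrict) ?_ ?_
      · refine tendsto_of_tendsto_of_tendsto_of_le_of_le tendsto_const_nhds (tend_half.comp hnt) (fun _ => bot_le)
          fun j => ?_
        exact (setLIntegral_le_lintegral _ _).trans (hcs.iη _)
      · intro j y
        have h01 := hcs.h01 (N' + j) y
        rw [← ENNReal.ofReal_add (abs_nonneg _) h01.1]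
        refine ENNReal.ofReal_le_ofReal ?_
        have e : (1 - η (N' + j) y) * w (k j) y + η (N' + j) y * 0 - u y = (w (k j) y - u y) + (-(η (N' + j) y * w (k j) y)) := by ring
        rw [e]
        refine (abs_add_le _ _).trans ?_
        rw [abs_neg, abs_mul, abs_of_nonneg h01.1]
        nlinarith [hw1 (k j) y, abs_nonneg (w (k j) y)]
  have hlow : ENNReal.ofReal (2 * δ) < T + ENNReal.ofReal δ := by
    refine (hk2 0).trans_le (le_trans (lintegral_mono fun x => ?_) (hle (k 0)))
    refine mul_le_of_le_one_left bot_le ?_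
    rw [ENNReal.ofReal_le_one]; exact (hcs.h01 _ _).2
  have hTr : T = ENNReal.ofReal T.toReal := (ENNReal.ofReal_toReal hT.ne).symm
  have ht0 : 0 ≤ T.toReal := ENNReal.toReal_nonneg
  set t := T.toReal
  rw [hc, hTr, ← ENNReal.ofReal_add ht0 hδ.le, ← ENNReal.ofReal_sub _ (by positivity)] at key
  rw [hTr, ← ENNReal.ofReal_add ht0 hδ.le, ENNReal.ofReal_lt_ofReal_iff (by positivity)] at hlow
  rw [← ENNReal.ofReal_add (by linarith) (by positivity), ENNReal.ofReal_le_ofReal_iff (by linarith)] at key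
  linarith
end TV

section MAIN
variable {μ : Measure X} {Cd CP lam : ℝ}
variable {U : Set X} {G : ℕ → Set X} {η : ℕ → X → ℝ} {q : ℕ → X → ℝ≥0∞}

lemma clamp_sub_le {a b : ℝ} (hb : |b| ≤ 1) : |clamp a - b| ≤ |a - b| := by
  have := clamp_lip a b
  rwa [clamp_eq hb] at this

lemma clamp_cont : Continuous clamp := by
  unfold clamp; fun_prop

lemma L1LocConv.clamp' {A : Set X} (hA : IsOpen A) {v : ℕ → X → ℝ} {u : X → ℝ}
    (hu : ∀ x ∈ A, |u x| ≤ 1) (h : L1LocConv μ A v u) :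
    L1LocConv μ A (fun i x => clamp (v i x)) u := by
  intro x hx
  obtain ⟨r, hr, H⟩ := h x hx
  refine ⟨r, hr, tendsto_of_tendsto_of_tendsto_of_le_of_le tendsto_const_nhds H (fun _ => bot_le) fun i => ?_⟩
  exact setLIntegral_mono' (hA.measurableSet.inter measurableSet_ball) fun y hy =>
    ENNReal.ofReal_le_ofReal (clamp_sub_le (hu y hy.1))

lemma good_w {Ω : Set X} (hΩ : IsOpen Ω) {u : X → ℝ} (hu : ∀ x ∈ Ω, |u x| ≤ 1)
    (hT : tvOpen μ Ω u < ∞) {δ : ℝ} (hδ : 0 < δ) :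
    ∃ (w : ℕ → X → ℝ) (gw : ℕ → X → ℝ≥0∞), (∀ k x, |w k x| ≤ 1) ∧
      (∀ k, IsWeakUpperGradientOn μ (w k) (gw k) Ω) ∧ L1LocConv μ Ω w u ∧
      (∀ k, ∫⁻ x in Ω, gw k x ∂μ ≤ tvOpen μ Ω u + ENNReal.ofReal δ) ∧
      (∀ k, AEMeasurable (w k) (μ.restrict Ω)) := by
  have h : tvOpen μ Ω u < tvOpen μ Ω u + ENNReal.ofReal δ :=
    ENNReal.lt_add_right hT.ne (by simpa using hδ)
  conv_lhs at h => unfold tvOpen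
  simp only [iInf_lt_iff] at h
  obtain ⟨w, gw, h1, h2, h3, h4⟩ := h
  obtain ⟨ψ, hψ, hψ'⟩ := extraction_of_frequently_atTop (frequently_lt_of_liminf_lt (by isBoundedDefault) h4)
  refine ⟨fun k x => clamp (w (ψ k) x), fun k => gw (ψ k), fun k x => clamp_abs _,
    fun k => (h2 _).1.comp_lip clamp clamp_lip, ?_, fun k => (hψ' k).le, fun k => ?_⟩
  · exact (L1LocConv.clamp' hΩ hu h3).subseq hψ.tendsto_atTop
  · exact clamp_cont.measurable.comp_aemeasurable ((h1 (ψ k)).continuousOn.aemeasurable hΩ.measurableSet)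

lemma main_le [ProperSpace X] (hd : Doubling μ Cd) (hp : Poincare μ CP lam)
    (hcs : CapSeq μ U G η q) {Ω : Set X} (hΩ : IsOpen Ω) (hUΩ : U ⊆ Ω) {u : X → ℝ}
    (hmeas : AEMeasurable u (μ.restrict Ω)) (hu : ∀ x ∈ Ω, |u x| ≤ 1) (hT : tvOpen μ Ω u < ∞)
    {v : ℕ → X → ℝ} {g : ℕ → X → ℝ≥0∞} (hv : ∀ i, IsWeakUpperGradientOn μ (v i) (g i) U)
    (hconv : L1LocConv μ U v u) :
    tv μ U u ≤ liminf (fun i => ∫⁻ x in U, g i x ∂μ) atTop := by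
  have hUm := hcs.nullMeas
  refine le_of_forall_gt_imp_ge_of_dense fun c hc => ?_
  rcases eq_or_ne c ∞ with rfl | hctop
  · exact le_top
  refine ENNReal.le_of_forall_pos_le_add fun ε hε _ => ?_
  obtain ⟨φ, hφ, hφ'⟩ := extraction_of_frequently_atTop (frequently_lt_of_liminf_lt (by isBoundedDefault) hc)
  have hε' : (0:ℝ) < ε := hε
  set δ : ℝ := ε / 4 with hδdef
  have hδ : 0 < δ := by positivity
  obtain ⟨w, gw, w1, w2, w3, w4, w5⟩ := good_w hΩ hu hT hδ
  have hN1 : ∀ᶠ n : ℕ in atTop, 2 * ENNReal.ofReal ((1/2) ^ n) ≤ ENNReal.ofReal (ε / 2) := by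
    have := ENNReal.Tendsto.const_mul tend_half (a := 2) (Or.inr (by simp))
    rw [mul_zero] at this
    exact this.eventually_le_const (by simpa using hε)
  obtain ⟨N, hN⟩ := eventually_atTop.1 hN1
  obtain ⟨n, hn, hfr⟩ := eta_small hd hp hcs hΩ hT hδ w1 w2 w3 w4 N
  obtain ⟨κ, hκ, hκ'⟩ := extraction_of_frequently_atTop hfr
  have hqn := hN n hn
  have h01 := hcs.h01 n
  have hηm := hcs.meas n
  set W := (U ∪ G n) ∩ Ω with hWdef
  have hW : IsOpen W := (hcs.oU n).inter hΩ
  have hUW : U ⊆ W := fun x hx => ⟨Or.inl hx, hUΩ hx⟩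
  have hfinΩ : tvOpen μ Ω u + ENNReal.ofReal δ < ∞ := ENNReal.add_lt_top.2 ⟨hT, ENNReal.ofReal_lt_top⟩
  set f : ℕ → X → ℝ := fun i x => (1 - η n x) * clamp (v (φ i) x) + η n x * w (κ i) x with hf
  set R : ℕ → X → ℝ≥0∞ := fun i x => ENNReal.ofReal (1 - η n x) * g (φ i) x + 2 * q n x with hR
  set S : ℕ → X → ℝ≥0∞ := fun i x => ENNReal.ofReal (η n x) * gw (κ i) x with hS
  have hRm : ∀ i, AEMeasurable (R i) μ := fun i =>
    ((aemeasurable_const.sub hηm).ennreal_ofReal.mul (hv _).1).add ((hcs.wug n).1.const_mul 2)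
  have hSm : ∀ i, AEMeasurable (S i) μ := fun i => hηm.ennreal_ofReal.mul (w2 _).1
  set Q : ℕ → X → ℝ≥0∞ := fun i x => U.indicator (R i) x + S i x with hQ
  have hQm : ∀ i, AEMeasurable (Q i) μ := fun i => ((hRm i).indicator₀ hUm).add (hSm i)
  have hfw : ∀ i, ∀ x ∈ G n, f i x = w (κ i) x := fun i x hx => by
    simp [hf, hcs.one n x hx]
  have hQU : ∀ i, IsWeakUpperGradientOn μ (f i) (Q i) U := by
    intro i
    have hB := wug_blend hUm ((hv (φ i)).comp_lip clamp clamp_lip) ((w2 (κ i)).mono_set hUΩ)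
      ((hcs.wug n).mono_set (subset_univ _)) ((hφ' i).trans_le le_top)
      ((lintegral_mono_set hUΩ).trans_lt ((w4 _).trans_lt hfinΩ))
      (((setLIntegral_le_lintegral _ _).trans (hcs.iq n)).trans_lt ENNReal.ofReal_lt_top) h01 hηm
      (fun x => by
        have a1 := abs_le.1 (clamp_abs (v (φ i) x))
        have a2 := abs_le.1 (w1 (κ i) x)
        rw [abs_le]; constructor <;> linarith)
    refine wug_mono_on hB (hQm i) fun x hx => ?_
    simp only [hQ, hR, hS, indicator_of_mem hx]
    exact le_rfl
  have hQG : ∀ i, IsWeakUpperGradientOn μ (f i) (Q i) (G n ∩ Ω) := by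
    intro i
    refine wug_congr (f := w (κ i)) ?_ fun x hx => (hfw i x hx.1).symm
    refine wug_mono_on ((w2 (κ i)).mono_set inter_subset_right) (hQm i) fun x hx => ?_
    simp only [hQ, hS, hcs.one n x hx.1, ENNReal.ofReal_one, one_mul]
    exact le_add_self
  have hQW : ∀ i, IsWeakUpperGradientOn μ (f i) (Q i) W := fun i =>
    wug_glue hcs (hQU i) (hQG i) ((hcs.oG n).inter hΩ) (by
      rintro x ⟨h | h, h'⟩
      · exact Or.inl h
      · exact Or.inr ⟨h, h'⟩)
  have hf1 : ∀ i x, |f i x| ≤ 1 := by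
    intro i x
    have a1 := abs_le.1 (clamp_abs (v (φ i) x))
    have a2 := abs_le.1 (w1 (κ i) x)
    have a3 := h01 x
    simp only [hf]
    rw [abs_le]; constructor <;> nlinarith
  have hint : ∀ i, ∫⁻ x in W, Q i x ∂μ ≤ c + ε := by
    intro i
    simp only [hQ]
    rw [lintegral_add_right' _ (hSm i).restrict]
    have e1 : ∫⁻ x in W, U.indicator (R i) x ∂μ ≤ c + ENNReal.ofReal (ε / 2) := by
      refine (setLIntegral_le_lintegral _ _).trans ?_
      rw [lintegral_indicator₀ hUm]
      simp only [hR]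
      rw [lintegral_add_right' _ ((hcs.wug n).1.const_mul 2).restrict, lintegral_const_mul'' _ (hcs.wug n).1.restrict]
      refine add_le_add (le_trans (lintegral_mono fun x => ?_) (hφ' i).le) (le_trans ?_ hqn)
      · refine mul_le_of_le_one_left bot_le ?_
        rw [ENNReal.ofReal_le_one]; linarith [(h01 x).1]
      · gcongr
        exact (setLIntegral_le_lintegral _ _).trans (hcs.iq n)
    have e2 : ∫⁻ x in W, S i x ∂μ ≤ ENNReal.ofReal (ε / 2) := by
      refine (lintegral_mono_set inter_subset_right).trans ((hκ' i).trans (ENNReal.ofReal_le_ofReal ?_))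
      rw [hδdef]; linarith
    refine (add_le_add e1 e2).trans (le_of_eq ?_)
    rw [add_assoc, ← ENNReal.ofReal_add (by positivity) (by positivity), add_halves, ENNReal.ofReal_coe_nnreal]
  have hcv : L1LocConv μ W f u := by
    have w3' := w3.subseq hκ.tendsto_atTop
    have hc' := hconv.subseq hφ.tendsto_atTop
    intro x hx
    obtain ⟨r2, hr2, H2⟩ := w3' x hx.2
    have hum : ∀ i A, A ⊆ Ω → AEMeasurable (fun y => ENNReal.ofReal |w (κ i) y - u y|) (μ.restrict A) := by
      intro i A hA
      have : AEMeasurable (fun y => ‖w (κ i) y - u y‖) (μ.restrict Ω) := ((w5 _).sub hmeas).norm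
      exact this.ennreal_ofReal.mono_measure (Measure.restrict_mono hA le_rfl)
    rcases hx.1 with hxU | hxG
    · obtain ⟨r1, hr1, H1⟩ := hc' x hxU
      refine ⟨min r1 r2, lt_min hr1 hr2, ?_⟩
      have H := H1.add H2
      rw [add_zero] at H
      refine tendsto_of_tendsto_of_tendsto_of_le_of_le tendsto_const_nhds H (fun _ => bot_le) fun i => ?_
      calc ∫⁻ y in W ∩ ball x (min r1 r2), ENNReal.ofReal |f i y - u y| ∂μ
          ≤ ∫⁻ y in W ∩ ball x (min r1 r2), (U.indicator (fun y => ENNReal.ofReal |v (φ i) y - u y|) y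
              + ENNReal.ofReal |w (κ i) y - u y|) ∂μ := by
            refine setLIntegral_mono' (hW.measurableSet.inter measurableSet_ball) fun y hy => ?_
            by_cases hyU : y ∈ U
            · rw [indicator_of_mem hyU, ← ENNReal.ofReal_add (abs_nonneg _) (abs_nonneg _)]
              refine ENNReal.ofReal_le_ofReal ?_
              have e : f i y - u y = (1 - η n y) * (clamp (v (φ i) y) - u y) + η n y * (w (κ i) y - u y) := by
                simp only [hf]; ring
              rw [e]
              refine (abs_add_le _ _).trans ?_
              rw [abs_mul, abs_mul, abs_of_nonneg (h01 y).1, abs_of_nonneg (by linarith [(h01 y).2] : 0 ≤ 1 - η n y)]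
              have a1 := clamp_sub_le (a := v (φ i) y) (hu y hy.1.2)
              refine add_le_add (le_trans ?_ a1) ?_
              · exact mul_le_of_le_one_left (abs_nonneg _) (by linarith [(h01 y).1])
              · exact mul_le_of_le_one_left (abs_nonneg _) (h01 y).2
            · rw [hfw i y (hy.1.1.resolve_left hyU)]
              exact le_add_self
        _ = ∫⁻ y in W ∩ ball x (min r1 r2), U.indicator (fun y => ENNReal.ofReal |v (φ i) y - u y|) y ∂μ
              + ∫⁻ y in W ∩ ball x (min r1 r2), ENNReal.ofReal |w (κ i) y - u y| ∂μ :=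
            lintegral_add_right' _ (hum i _ (inter_subset_left.trans inter_subset_right))
        _ ≤ _ := by
            refine add_le_add ?_ (lintegral_mono_set ?_)
            · refine (lintegral_mono_set (t := ball x r1)
                (inter_subset_right.trans (ball_subset_ball (min_le_left _ _)))).trans ?_
              have hU' : NullMeasurableSet U (μ.restrict (ball x r1)) := hUm.mono Measure.restrict_le_self
              rw [lintegral_indicator₀ hU', Measure.restrict_restrict₀ hU']
            · exact inter_subset_inter inter_subset_right (ball_subset_ball (min_le_right _ _))
    · obtain ⟨r1, hr1, H1⟩ := Metric.isOpen_iff.1 (hcs.oG n) x hxG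
      refine ⟨min r1 r2, lt_min hr1 hr2, ?_⟩
      refine tendsto_of_tendsto_of_tendsto_of_le_of_le tendsto_const_nhds H2 (fun _ => bot_le) fun i => ?_
      refine le_trans (le_of_eq ?_) (lintegral_mono_set (s := W ∩ ball x (min r1 r2)) (inter_subset_inter inter_subset_right
        (ball_subset_ball (min_le_right r1 r2))))
      refine setLIntegral_congr_fun (hW.measurableSet.inter measurableSet_ball) fun y hy => ?_
      have : y ∈ G n := H1 (ball_subset_ball (min_le_left _ _) hy.2)
      simp only [hfw i y this]
  have hfinal := tvOpen_le' hd hp hW hf1 hQW (ENNReal.add_lt_top.2 ⟨hctop.lt_top, ENNReal.coe_lt_top⟩) hint hcv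
  unfold tv
  exact iInf_le_of_le W (iInf_le_of_le hW (iInf_le_of_le hUW hfinal))

lemma locLip_memN11 (hd : Doubling μ Cd) {f : X → ℝ} {W : Set X} (hW : IsOpen W)
    (hf : LocLipOn f W) (hUW : U ⊆ W) : MemN11Loc μ U f := by
  intro x hx
  obtain ⟨r, hr, K, hK⟩ := hf x (hUW hx)
  refine ⟨r, hr, ?_⟩
  have hsub : U ∩ ball x r ⊆ W ∩ ball x r := inter_subset_inter_left _ hUW
  have hμ : μ (W ∩ ball x r) < ∞ := (measure_mono inter_subset_right).trans_lt (hd.lt_top x r)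
  unfold NNorm
  refine ENNReal.add_lt_top.2 ⟨?_, ?_⟩
  · refine (lintegral_mono_set hsub).trans_lt ?_
    refine (setLIntegral_mono' (hW.measurableSet.inter measurableSet_ball)
      (g := fun _ => ENNReal.ofReal (|f x| + K * r)) fun y hy => ENNReal.ofReal_le_ofReal ?_).trans_lt ?_
    · have h1 := hK.dist_le_mul y hy x ⟨hUW hx, mem_ball_self hr⟩
      rw [Real.dist_eq] at h1
      have h2 : dist y x ≤ r := (mem_ball.1 hy.2).le
      have h3 : (K:ℝ) * dist y x ≤ K * r := by gcongr
      have h4 := abs_add_le (f y - f x) (f x)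
      rw [sub_add_cancel] at h4
      linarith
    · rw [setLIntegral_const]
      exact ENNReal.mul_lt_top ENNReal.ofReal_lt_top hμ
  · refine (iInf₂_le (fun _ => (K : ℝ≥0∞)) ?_).trans_lt ?_
    · refine wug_of_ug aemeasurable_const (Eventually.of_forall fun γ hγ => ?_)
      unfold UGIneq Curve.integral
      rw [setLIntegral_const, Real.volume_Icc, sub_zero]
      have h0 : (0:ℝ) ∈ Icc 0 γ.len := ⟨le_rfl, γ.len_nonneg⟩
      have hl : γ.len ∈ Icc 0 γ.len := ⟨γ.len_nonneg, le_rfl⟩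
      have h1 := hK.dist_le_mul _ (hsub (hγ 0 h0)) _ (hsub (hγ _ hl))
      have h2 := γ.lip.dist_le_mul _ h0 _ hl
      rw [Real.dist_eq] at h1
      rw [NNReal.coe_one, one_mul, Real.dist_eq, zero_sub, abs_neg, abs_of_nonneg γ.len_nonneg] at h2
      rw [← ENNReal.ofReal_coe_nnreal, ← ENNReal.ofReal_mul (NNReal.coe_nonneg K)]
      refine ENNReal.ofReal_le_ofReal (h1.trans ?_)
      gcongr
    · rw [setLIntegral_const]
      exact ENNReal.mul_lt_top ENNReal.coe_lt_top ((measure_mono hsub).trans_lt hμ)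

end MAIN

/-- Characterization of the total variation in `1`-quasiopen sets for
bounded functions: if `U` is `1`-quasiopen, `Ω ⊇ U` is open, and `u` is `μ`-measurable
on `Ω` with `-1 ≤ u ≤ 1` and `‖Du‖(Ω) < ∞`, then `‖Du‖(U)` equals the infimum of
`liminf_i ∫_U g_{u_i} dμ` over sequences `u_i ∈ N^{1,1}_loc(U)` with `u_i → u` in
`L¹_loc(U)`, where `g_{u_i}` is the minimal `1`-weak upper gradient of `u_i` in `U`. -/
theorem total_variation_char_in_quasiopen_of_bounded
    (μ : Measure X) (hcomp : CompleteSpace X)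
    (hdoub : ∃ Cd : ℝ, Doubling μ Cd) (hpoin : ∃ CP lam : ℝ, Poincare μ CP lam)
    (U Ω : Set X) (hU : QuasiOpen μ U) (hΩ : IsOpen Ω) (hUΩ : U ⊆ Ω)
    (u : X → ℝ) (hmeas : AEMeasurable u (μ.restrict Ω))
    (hbdd : ∀ x ∈ Ω, -1 ≤ u x ∧ u x ≤ 1)
    (hfin : tvOpen μ Ω u < ∞) :
    tv μ U u =
      ⨅ (v : ℕ → X → ℝ) (g : ℕ → X → ℝ≥0∞) (_ : ∀ i, MemN11Loc μ U (v i))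
        (_ : ∀ i, IsMinimalWUG μ (v i) (g i) U) (_ : L1LocConv μ U v u),
        Filter.liminf (fun i => ∫⁻ x in U, g i x ∂μ) Filter.atTop := by
  obtain ⟨Cd, hd⟩ := hdoub
  obtain ⟨CP, lam, hp⟩ := hpoin
  have hprop := hd.proper
  have hlf := hd.locFin
  obtain ⟨G, η, q, hcs⟩ := exists_capSeq hd hp hU
  refine le_antisymm ?_ ?_
  · refine le_iInf₂ fun v g => le_iInf₂ fun _ hg => le_iInf fun hconv => ?_
    exact main_le hd hp hcs hΩ hUΩ hmeas (fun x hx => abs_le.2 (hbdd x hx)) hfin (fun i => (hg i).1) hconv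
  · unfold tv tvOpen
    refine le_iInf fun Ω' => le_iInf₂ fun hΩ' hUΩ' => ?_
    refine le_iInf₂ fun v g => le_iInf₂ fun hv hg => le_iInf fun hconv => ?_
    have := fun i => exists_minimalWUG μ hcs.nullMeas (v i)
    choose g' hg' using this
    have hcv : L1LocConv μ U v u := by
      intro x hx
      obtain ⟨r, hr, H⟩ := hconv x (hUΩ' hx)
      refine ⟨r, hr, tendsto_of_tendsto_of_tendsto_of_le_of_le tendsto_const_nhds H (fun _ => bot_le) fun i => ?_⟩
      exact lintegral_mono_set (inter_subset_inter_left _ hUΩ')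
    refine (iInf₂_le v g').trans ((iInf₂_le (fun i => locLip_memN11 hd hΩ' (hv i) hUΩ') hg').trans
      ((iInf_le _ hcv).trans ?_))
    refine liminf_le_liminf (Eventually.of_forall fun i => ?_)
    exact ((hg' i).lintegral_le ((hg i).1.mono_set hUΩ')).trans (lintegral_mono_set hUΩ')


end PaperBV
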